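/- Let G be a compact, connected, simply connected subgroup of GL(N,ℝ). Then there exists a constant c > 0, independent of the Weyl alcove and of the function, such that for every Weyl alcove P (i.e. every connected component of 𝔱_reg) and every continuous conjugation-invariant function f : G → ℂ one has ∫_G f dμ_G = c · ∫_P f(exp b) · det(1_𝔨 − exp(ad b)|_𝔨) db. -/

import Mathlib

section Part1
open MeasureTheory Filter Topology
set_option linter.style.haveILetI false
set_option linter.unusedSectionVars false

namespace WIF

section Basic
variable {A : Type*} [NormedRing A] [NormedAlgebra ℝ A] [CompleteSpace A]

theorem exp_cont : Continuous (NormedSpace.exp : A → A) := by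
  letI := NormedAlgebra.restrictScalars ℚ ℝ A
  exact NormedSpace.exp_continuous

theorem exp_addc {x y : A} (h : Commute x y) :
    NormedSpace.exp (x + y) = NormedSpace.exp x * NormedSpace.exp y := by
  letI := NormedAlgebra.restrictScalars ℚ ℝ A
  exact NormedSpace.exp_add_of_commute h

theorem exp_mul_neg (x : A) : NormedSpace.exp x * NormedSpace.exp (-x) = 1 := by
  rw [← exp_addc ((Commute.refl x).neg_right)]; simp

theorem exp_neg_mul (x : A) : NormedSpace.exp (-x) * NormedSpace.exp x = 1 := by
  rw [← exp_addc ((Commute.refl x).neg_left)]; simp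

/-- The exponential as a unit. -/
noncomputable def expU (x : A) : Aˣ :=
  ⟨NormedSpace.exp x, NormedSpace.exp (-x), exp_mul_neg x, exp_neg_mul x⟩

@[simp] theorem expU_val (x : A) : (expU x : A) = NormedSpace.exp x := rfl
@[simp] theorem expU_inv_val (x : A) : ((expU x)⁻¹ : Aˣ) = expU (-x) := by
  ext; rfl

theorem expU_zero : expU (0 : A) = 1 := by ext; simp

theorem expU_add {x y : A} (h : Commute x y) : expU (x + y) = expU x * expU y := by
  ext; simpa using exp_addc h

theorem expU_continuous : Continuous (expU : A → Aˣ) := by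
  rw [Units.continuous_iff]
  refine ⟨exp_cont, ?_⟩
  simp only [expU_inv_val]
  exact exp_cont.comp continuous_neg

theorem expU_nsmul (n : ℕ) (x : A) : expU (n • x) = expU x ^ n := by
  induction n with
  | zero => simp [expU_zero]
  | succ k ih =>
    rw [succ_nsmul, pow_succ, ← ih, expU_add]
    exact (Commute.refl x).smul_left k

theorem expU_zsmul (n : ℤ) (x : A) : expU (n • x) = expU x ^ n := by
  cases n with
  | ofNat k => simpa using expU_nsmul k x
  | negSucc k =>
    rw [negSucc_zsmul, zpow_negSucc, ← expU_nsmul, expU_inv_val]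

theorem expU_conj (y : Aˣ) (x : A) : expU (y * x * ↑y⁻¹ : A) = y * expU x * y⁻¹ := by
  letI := NormedAlgebra.restrictScalars ℚ ℝ A
  ext; simpa using NormedSpace.exp_units_conj y x

theorem exp_hasDerivAt (X : A) (s : ℝ) :
    HasDerivAt (fun s : ℝ => NormedSpace.exp (s • X)) (NormedSpace.exp (s • X) * X) s :=
  hasDerivAt_exp_smul_const X s

theorem exp_hasDerivAt' (X : A) (s : ℝ) :
    HasDerivAt (fun s : ℝ => NormedSpace.exp (s • X)) (X * NormedSpace.exp (s • X)) s :=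
  hasDerivAt_exp_smul_const' X s

theorem exp_contDiff {n : WithTop ℕ∞} : ContDiff ℝ n (NormedSpace.exp : A → A) := by
  rw [contDiff_iff_contDiffAt]
  intro x
  exact (NormedSpace.exp_analytic (𝕂 := ℝ) x).contDiffAt

theorem comm_exp {x y : A} (h : Commute x y) : Commute x (NormedSpace.exp y) := h.exp_right

theorem val_emb : Topology.IsOpenEmbedding (Units.val : Aˣ → A) := Units.isOpenEmbedding_val
end Basic

section CST
variable {A : Type*} [NormedRing A] [NormedAlgebra ℝ A] [CompleteSpace A] [FiniteDimensional ℝ A]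

theorem cst_aux (H : Subgroup Aˣ) (hH : IsClosed (H : Set Aˣ)) (h m : Submodule ℝ A)
    (hh : ∀ X, (∀ s : ℝ, expU (s • X) ∈ H) → X ∈ h) (hd : Disjoint h m) :
    ∀ᶠ Y in 𝓝 (0 : A), Y ∈ m → expU Y ∈ H → Y = 0 := by
  haveI : ProperSpace A := FiniteDimensional.proper ℝ A
  by_contra hcon
  rw [not_eventually] at hcon
  obtain ⟨Y, hY, hYp⟩ := exists_seq_forall_of_frequently hcon
  push Not at hYp
  have hn : ∀ n, 0 < ‖Y n‖ := fun n => norm_pos_iff.2 (hYp n).2.2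
  let Z : ℕ → A := fun n => (‖Y n‖)⁻¹ • Y n
  have hZ : ∀ n, Z n ∈ Metric.sphere (0 : A) 1 := by
    intro n
    simp [Z, norm_smul, (hn n).ne']
  obtain ⟨Z0, hZ0, φ, hφ, hlim⟩ := (isCompact_sphere (0 : A) 1).tendsto_subseq hZ
  have hZm : Z0 ∈ m := by
    have hc : IsClosed (m : Set A) := m.closed_of_finiteDimensional
    exact hc.mem_of_tendsto hlim (Eventually.of_forall fun n => m.smul_mem _ (hYp (φ n)).1)
  have hZh : Z0 ∈ h := by
    apply hh
    intro s
    have hy0 : Tendsto (fun n => ‖Y (φ n)‖) atTop (𝓝 0) := by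
      have := (hY.comp hφ.tendsto_atTop).norm
      simpa using this
    let k : ℕ → ℤ := fun n => ⌊s / ‖Y (φ n)‖⌋
    have hk : Tendsto (fun n => (k n : ℝ) * ‖Y (φ n)‖) atTop (𝓝 s) := by
      rw [← sub_zero s]
      have h1 : Tendsto (fun n => s - (s - (k n : ℝ) * ‖Y (φ n)‖)) atTop (𝓝 (s - 0)) := by
        refine tendsto_const_nhds.sub ?_
        refine squeeze_zero (fun n => ?_) (fun n => ?_) hy0
        · have := Int.floor_le (s / ‖Y (φ n)‖)
          have h2 := (le_div_iff₀ (hn (φ n))).1 this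
          simpa [k] using h2
        · have := (Int.lt_floor_add_one (s / ‖Y (φ n)‖)).le
          have h2 := (div_le_iff₀ (hn (φ n))).1 this
          simp only [k]; linarith
      simpa using h1
    have h3 : Tendsto (fun n => expU (((k n : ℝ) * ‖Y (φ n)‖) • Z (φ n))) atTop (𝓝 (expU (s • Z0))) :=
      (expU_continuous.tendsto _).comp (hk.smul hlim)
    refine hH.mem_of_tendsto h3 (Eventually.of_forall fun n => ?_)
    have : ((k n : ℝ) * ‖Y (φ n)‖) • Z (φ n) = k n • Y (φ n) := by
      simp only [Z]
      rw [smul_smul, mul_assoc, mul_inv_cancel₀ (hn _).ne', mul_one]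
      exact Int.cast_smul_eq_zsmul ℝ _ _
    rw [this, expU_zsmul]
    exact H.zpow_mem (hYp (φ n)).2.1 _
  have : Z0 = 0 := by
    have := (Submodule.disjoint_def.1 hd) Z0 hZh hZm
    exact this
  rw [this] at hZ0
  simp at hZ0

theorem cst (H : Subgroup Aˣ) (hH : IsClosed (H : Set Aˣ)) (h : Submodule ℝ A)
    (hh : ∀ X, X ∈ h ↔ ∀ s : ℝ, expU (s • X) ∈ H) {U : Set A} (hU : U ∈ 𝓝 (0 : A)) :
    ∀ᶠ u in 𝓝 (1 : Aˣ), u ∈ H → ∃ X ∈ h, X ∈ U ∧ expU X = u := by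
  obtain ⟨m, hm⟩ := h.exists_isCompl
  let p : A →L[ℝ] A := LinearMap.toContinuousLinearMap (h.subtype ∘ₗ h.projectionOnto m hm)
  let q : A →L[ℝ] A := LinearMap.toContinuousLinearMap (m.subtype ∘ₗ m.projectionOnto h hm.symm)
  have hp : ∀ Z, p Z ∈ h := fun Z => by simp [p]
  have hq : ∀ Z, q Z ∈ m := fun Z => by simp [q]
  have hpq : p + q = ContinuousLinearMap.id ℝ A := by
    ext Z
    simpa [p, q] using Submodule.projection_add_projection_eq_self hm Z
  let f : A → A := fun Z => NormedSpace.exp (p Z) * NormedSpace.exp (q Z)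
  have hf : HasStrictFDerivAt f ((ContinuousLinearEquiv.refl ℝ A : A ≃L[ℝ] A) : A →L[ℝ] A) 0 := by
    have e0 : HasStrictFDerivAt (NormedSpace.exp : A → A) (1 : A →L[ℝ] A) (p 0) := by
      rw [map_zero]; exact hasStrictFDerivAt_exp_zero
    have e1 : HasStrictFDerivAt (NormedSpace.exp : A → A) (1 : A →L[ℝ] A) (q 0) := by
      rw [map_zero]; exact hasStrictFDerivAt_exp_zero
    have h1 := (e0.comp (0:A) p.hasStrictFDerivAt).mul' (e1.comp (0:A) q.hasStrictFDerivAt)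
    refine h1.congr_fderiv ?_
    ext Z
    have := congrArg (fun l : A →L[ℝ] A => l Z) hpq
    simp at this
    simp [add_comm, this]
  have hmap := hf.map_nhds_eq_of_equiv
  have hf0 : f 0 = 1 := by simp [f]
  rw [hf0] at hmap
  have hW : ∀ᶠ Z in 𝓝 (0 : A), p Z ∈ U ∧ (q Z ∈ m → expU (q Z) ∈ H → q Z = 0) := by
    have c1 : Tendsto p (𝓝 0) (𝓝 0) := by simpa using p.continuous.tendsto 0
    have c2 : Tendsto q (𝓝 0) (𝓝 0) := by simpa using q.continuous.tendsto 0
    exact (c1.eventually hU).and (c2.eventually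
      (cst_aux H hH h m (fun X hX => (hh X).2 hX) hm.disjoint))
  have h2 : f '' {Z | p Z ∈ U ∧ (q Z ∈ m → expU (q Z) ∈ H → q Z = 0)} ∈ 𝓝 (1 : A) := by
    rw [← hmap]; exact image_mem_map hW
  have h3 : Tendsto (Units.val : Aˣ → A) (𝓝 1) (𝓝 1) := by
    simpa using (Units.continuous_val (M := A)).tendsto 1
  filter_upwards [h3 h2] with u hu huH
  obtain ⟨Z, ⟨hZU, hZq⟩, hZu⟩ := hu
  have hu' : u = expU (p Z) * expU (q Z) := by ext; simpa [f] using hZu.symm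
  have h4 : expU (p Z) ∈ H := by simpa using (hh (p Z)).1 (hp Z) 1
  have h5 : expU (q Z) ∈ H := by
    have : expU (q Z) = (expU (p Z))⁻¹ * u := by rw [hu']; group
    rw [this]; exact H.mul_mem (H.inv_mem h4) huH
  have h6 := hZq (hq Z) h5
  refine ⟨p Z, hp Z, hZU, ?_⟩
  rw [hu', h6, expU_zero, mul_one]

end CST
end WIF
end Part1

section Part2
open MeasureTheory Filter Topology
set_option linter.style.haveILetI false
set_option linter.unusedSectionVars false

namespace WIF

section Groups
variable {A : Type*} [NormedRing A] [NormedAlgebra ℝ A] [CompleteSpace A]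

theorem comm_of_exp {X Z : A} (h : ∀ s : ℝ, NormedSpace.exp (s • X) * Z = Z * NormedSpace.exp (s • X)) :
    X * Z = Z * X := by
  have h1 : HasDerivAt (fun s : ℝ => NormedSpace.exp (s • X) * Z) (X * Z) 0 := by
    simpa using (exp_hasDerivAt X 0).mul_const Z
  have h2 : HasDerivAt (fun s : ℝ => Z * NormedSpace.exp (s • X)) (Z * X) 0 := by
    simpa using (exp_hasDerivAt X 0).const_mul Z
  have : (fun s : ℝ => NormedSpace.exp (s • X) * Z) = (fun s : ℝ => Z * NormedSpace.exp (s • X)) :=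
    funext h
  rw [this] at h1
  exact h1.unique h2

theorem conj_hasDerivAt (X Y : A) (s : ℝ) :
    HasDerivAt (fun s : ℝ => NormedSpace.exp (s • X) * Y * NormedSpace.exp (-(s • X)))
      (NormedSpace.exp (s • X) * (X * Y - Y * X) * NormedSpace.exp (-(s • X))) s := by
  have h1 := exp_hasDerivAt X s
  have h2 : HasDerivAt (fun s : ℝ => NormedSpace.exp (-(s • X)))
      (-X * NormedSpace.exp (-(s • X))) s := by
    have := exp_hasDerivAt' (-X) s
    simpa using this
  have h3 := (h1.mul_const Y).mul h2
  refine h3.congr_deriv ?_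
  noncomm_ring

theorem exp_conj_of_comm {b X : A} (h : b * X = X * b) :
    NormedSpace.exp b * X * NormedSpace.exp (-b) = X := by
  have : NormedSpace.exp b * X = X * NormedSpace.exp b := (Commute.exp_left (show Commute b X from h)).eq
  rw [this, mul_assoc, exp_mul_neg, mul_one]

end Groups

section Groups2
variable {A : Type*} [NormedRing A] [NormedAlgebra ℝ A] [CompleteSpace A] [FiniteDimensional ℝ A]

theorem deriv_mem_submodule {p : Submodule ℝ A} {f : ℝ → A} {f' : A} (hf : ∀ s, f s ∈ p)
    (h : HasDerivAt f f' 0) : f' ∈ p := by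
  have hc : IsClosed (p : Set A) := p.closed_of_finiteDimensional
  have := h.tendsto_slope
  refine hc.mem_of_tendsto this (Eventually.of_forall fun s => ?_)
  rw [slope_def_module]
  exact p.smul_mem _ (p.sub_mem (hf _) (hf _))

theorem bracket_mem_of_conj {p : Submodule ℝ A} {X Y : A}
    (h : ∀ s : ℝ, NormedSpace.exp (s • X) * Y * NormedSpace.exp (-(s • X)) ∈ p) :
    X * Y - Y * X ∈ p := by
  have := deriv_mem_submodule h (conj_hasDerivAt X Y 0)
  simpa using this

theorem gen (H : Subgroup Aˣ) (hH : IsClosed (H : Set Aˣ)) (hc : IsConnected (H : Set Aˣ))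
    (h : Submodule ℝ A) (hh : ∀ X, X ∈ h ↔ ∀ s : ℝ, expU (s • X) ∈ H)
    (K : Subgroup Aˣ) (hK : ∀ X ∈ h, expU X ∈ K) : H ≤ K := by
  haveI : ConnectedSpace H := Subtype.connectedSpace hc
  have h1 := cst H hH h hh (U := Set.univ) univ_mem
  have hn : ((K.subgroupOf H : Subgroup H) : Set H) ∈ 𝓝 (1 : H) := by
    have : Tendsto (Subtype.val : H → Aˣ) (𝓝 1) (𝓝 1) := by
      simpa using (continuous_subtype_val (p := (· ∈ H))).tendsto 1
    filter_upwards [this.eventually h1] with u hu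
    obtain ⟨X, hX, -, hXu⟩ := hu u.2
    show (u : Aˣ) ∈ K
    rw [← hXu]; exact hK X hX
  have ho : IsOpen ((K.subgroupOf H : Subgroup H) : Set H) := Subgroup.isOpen_of_mem_nhds _ hn
  have hcl : IsClosed ((K.subgroupOf H : Subgroup H) : Set H) := Subgroup.isClosed_of_isOpen _ ho
  have hu := IsClopen.eq_univ ⟨hcl, ho⟩ ⟨1, (K.subgroupOf H).one_mem⟩
  intro x hx
  have : (⟨x, hx⟩ : H) ∈ ((K.subgroupOf H : Subgroup H) : Set H) := by rw [hu]; trivial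
  exact this

theorem locPath (H : Subgroup Aˣ) (hH : IsClosed (H : Set Aˣ))
    (h : Submodule ℝ A) (hh : ∀ X, X ∈ h ↔ ∀ s : ℝ, expU (s • X) ∈ H) :
    LocallyPathConnectedSpace H := by
  let ex : h → H := fun X => ⟨expU (X : A), by simpa using (hh X).1 X.2 1⟩
  have hexc : Continuous ex := by
    refine Continuous.subtype_mk ?_ _
    exact expU_continuous.comp continuous_subtype_val
  have key : ∀ V ∈ 𝓝 (1 : H), ∃ W ∈ 𝓝 (1 : H), IsPathConnected W ∧ W ⊆ V := by
    intro V hV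
    have h0 : ex 0 = 1 := by ext; simp [ex]
    have h1 : ex ⁻¹' V ∈ 𝓝 (0 : h) := hexc.continuousAt (by rw [h0]; exact hV)
    obtain ⟨r, hr, hrV⟩ := Metric.mem_nhds_iff.1 h1
    refine ⟨ex '' Metric.ball 0 r, ?_, ?_, ?_⟩
    · have h2 := cst H hH h hh (Metric.ball_mem_nhds (0 : A) hr)
      have : Tendsto (Subtype.val : H → Aˣ) (𝓝 1) (𝓝 1) := by
        simpa using (continuous_subtype_val (p := (· ∈ H))).tendsto 1
      filter_upwards [this.eventually h2] with u hu
      obtain ⟨X, hX, hXr, hXu⟩ := hu u.2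
      refine ⟨⟨X, hX⟩, by simpa using hXr, ?_⟩
      exact Subtype.ext hXu
    · exact ((convex_ball (0 : h) r).isPathConnected ⟨0, Metric.mem_ball_self hr⟩).image hexc
    · exact Set.image_subset_iff.2 hrV
  refine ⟨fun x => ?_⟩
  rw [hasBasis_self]
  intro t ht
  have h1 : (fun y => x * y) ⁻¹' t ∈ 𝓝 (1 : H) :=
    (continuous_const_mul x).continuousAt (by simpa using ht)
  obtain ⟨W, hW, hWp, hWt⟩ := key _ h1
  refine ⟨(fun y => x * y) '' W, ?_, hWp.image (continuous_const_mul x), Set.image_subset_iff.2 hWt⟩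
  have := (Homeomorph.mulLeft x).map_nhds_eq 1
  simp only [Homeomorph.coe_mulLeft, mul_one] at this
  rw [← this]
  exact image_mem_map hW

/-- Maximal tori of `G`. -/
def IsMT (G S : Subgroup Aˣ) : Prop :=
  S ≤ G ∧ IsCompact (S : Set Aˣ) ∧ IsConnected (S : Set Aˣ) ∧
    (∀ x ∈ S, ∀ y ∈ S, x * y = y * x) ∧
    ∀ S' : Subgroup Aˣ, S' ≤ G → IsCompact (S' : Set Aˣ) → IsConnected (S' : Set Aˣ) →
      (∀ x ∈ S', ∀ y ∈ S', x * y = y * x) → S ≤ S' → S = S'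

def cj (g : Aˣ) (S : Subgroup Aˣ) : Subgroup Aˣ := S.map (MulAut.conj g).toMonoidHom

theorem mem_cj {g x : Aˣ} {S : Subgroup Aˣ} : x ∈ cj g S ↔ g⁻¹ * x * g ∈ S := by
  constructor
  · rintro ⟨y, hy, rfl⟩
    have : g⁻¹ * (g * y * g⁻¹) * g = y := by group
    simpa [this] using hy
  · intro h
    refine ⟨_, h, ?_⟩
    simp [mul_assoc]

theorem cj_coe (g : Aˣ) (S : Subgroup Aˣ) : (cj g S : Set Aˣ) = (fun x => g * x * g⁻¹) '' S := by
  ext x; simp [cj]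

theorem cj_cj (g h : Aˣ) (S : Subgroup Aˣ) : cj g (cj h S) = cj (g * h) S := by
  ext x; simp [mem_cj, mul_assoc]

theorem cj_one (S : Subgroup Aˣ) : cj 1 S = S := by
  ext x; simp [mem_cj]

theorem cj_mono {g : Aˣ} {S S' : Subgroup Aˣ} (h : S ≤ S') : cj g S ≤ cj g S' := by
  intro x hx; rw [mem_cj] at *; exact h hx

theorem cj_facts {G S : Subgroup Aˣ} {g : Aˣ} (hg : g ∈ G) (h1 : S ≤ G)
    (h2 : IsCompact (S : Set Aˣ)) (h3 : IsConnected (S : Set Aˣ))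
    (h4 : ∀ x ∈ S, ∀ y ∈ S, x * y = y * x) :
    cj g S ≤ G ∧ IsCompact (cj g S : Set Aˣ) ∧ IsConnected (cj g S : Set Aˣ) ∧
    (∀ x ∈ cj g S, ∀ y ∈ cj g S, x * y = y * x) := by
  have hc : Continuous fun x : Aˣ => g * x * g⁻¹ := by fun_prop
  refine ⟨?_, ?_, ?_, ?_⟩
  · intro x hx
    rw [mem_cj] at hx
    have := G.mul_mem (G.mul_mem hg (h1 hx)) (G.inv_mem hg)
    simpa [mul_assoc] using this
  · rw [cj_coe]; exact h2.image hc
  · rw [cj_coe]; exact h3.image _ hc.continuousOn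
  · intro x hx y hy
    rw [mem_cj] at hx hy
    have := h4 _ hx _ hy
    have h5 : g * (g⁻¹ * x * g * (g⁻¹ * y * g)) * g⁻¹ = g * (g⁻¹ * y * g * (g⁻¹ * x * g)) * g⁻¹ := by rw [this]
    have e1 : g * (g⁻¹ * x * g * (g⁻¹ * y * g)) * g⁻¹ = x * y := by group
    have e2 : g * (g⁻¹ * y * g * (g⁻¹ * x * g)) * g⁻¹ = y * x := by group
    rw [← e1, ← e2, h5]

theorem IsMT.cj {G S : Subgroup Aˣ} (h : IsMT G S) {g : Aˣ} (hg : g ∈ G) : IsMT G (cj g S) := by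
  obtain ⟨h1, h2, h3, h4, h5⟩ := h
  obtain ⟨a1, a2, a3, a4⟩ := cj_facts hg h1 h2 h3 h4
  refine ⟨a1, a2, a3, a4, ?_⟩
  intro S' b1 b2 b3 b4 b5
  obtain ⟨c1, c2, c3, c4⟩ := cj_facts (G.inv_mem hg) b1 b2 b3 b4
  have : S = WIF.cj g⁻¹ S' := by
    apply h5 _ c1 c2 c3 c4
    have := cj_mono (g := g⁻¹) b5
    rwa [cj_cj, inv_mul_cancel, cj_one] at this
  rw [this, cj_cj, mul_inv_cancel, cj_one]

end Groups2
end WIF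
end Part2

section Part3
open MeasureTheory Filter Topology
set_option linter.style.haveILetI false
set_option linter.unusedSectionVars false

namespace WIF

/-- The standing data. -/
structure Dat {A : Type*} [NormedRing A] [NormedAlgebra ℝ A] [CompleteSpace A]
    [FiniteDimensional ℝ A] (G T : Subgroup Aˣ) (g t k : Submodule ℝ A) (ip : A → A → ℝ) : Prop where
  cG : IsCompact (G : Set Aˣ)
  conG : IsConnected (G : Set Aˣ)
  hT : IsMT G T
  hg : ∀ X, X ∈ g ↔ ∀ s : ℝ, expU (s • X) ∈ G
  ht : ∀ X, X ∈ t ↔ ∀ s : ℝ, expU (s • X) ∈ T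
  sym : ∀ X ∈ g, ∀ Y ∈ g, ip X Y = ip Y X
  add : ∀ X ∈ g, ∀ Y ∈ g, ∀ Z ∈ g, ip (X + Y) Z = ip X Z + ip Y Z
  smul : ∀ c : ℝ, ∀ X ∈ g, ∀ Y ∈ g, ip (c • X) Y = c * ip X Y
  pos : ∀ X ∈ g, X ≠ 0 → 0 < ip X X
  Ad : ∀ u ∈ G, ∀ X ∈ g, ∀ Y ∈ g,
    ip ((u : A) * X * ((u⁻¹ : Aˣ) : A)) ((u : A) * Y * ((u⁻¹ : Aˣ) : A)) = ip X Y
  hk : ∀ X, X ∈ k ↔ X ∈ g ∧ ∀ Y ∈ t, ip X Y = 0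

section
variable {A : Type*} [NormedRing A] [NormedAlgebra ℝ A] [CompleteSpace A] [FiniteDimensional ℝ A]
variable {G T : Subgroup Aˣ} {g t k : Submodule ℝ A} {ip : A → A → ℝ}

namespace Dat

theorem t_le (D : Dat G T g t k ip) : t ≤ g := fun X hX =>
  (D.hg X).2 fun s => D.hT.1 ((D.ht X).1 hX s)

theorem k_le (D : Dat G T g t k ip) : k ≤ g := fun X hX => ((D.hk X).1 hX).1

theorem exp_mem_G (D : Dat G T g t k ip) {X : A} (h : X ∈ g) : expU X ∈ G := by
  simpa using (D.hg X).1 h 1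

theorem exp_mem_T (D : Dat G T g t k ip) {X : A} (h : X ∈ t) : expU X ∈ T := by
  simpa using (D.ht X).1 h 1

theorem Ad_g (D : Dat G T g t k ip) {u : Aˣ} (hu : u ∈ G) {X : A} (hX : X ∈ g) :
    (u : A) * X * ((u⁻¹ : Aˣ) : A) ∈ g := by
  rw [D.hg] at *
  intro s
  have : s • ((u : A) * X * ((u⁻¹ : Aˣ) : A)) = (u : A) * (s • X) * ((u⁻¹ : Aˣ) : A) := by simp
  rw [this, expU_conj]
  exact G.mul_mem (G.mul_mem hu (hX s)) (G.inv_mem hu)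

theorem Ad_g' (D : Dat G T g t k ip) {u : Aˣ} (hu : u ∈ G) {X : A} (hX : X ∈ g) :
    ((u⁻¹ : Aˣ) : A) * X * (u : A) ∈ g := by
  simpa using D.Ad_g (G.inv_mem hu) hX

theorem br_g (D : Dat G T g t k ip) {X Y : A} (hX : X ∈ g) (hY : Y ∈ g) : X * Y - Y * X ∈ g := by
  apply bracket_mem_of_conj
  intro s
  have := D.Ad_g (D.exp_mem_G (g.smul_mem s hX)) hY
  simpa using this

theorem tT_comm (D : Dat G T g t k ip) {b : A} (hb : b ∈ t) {u : Aˣ} (hu : u ∈ T) :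
    b * (u : A) = (u : A) * b := by
  apply comm_of_exp
  intro s
  have := D.hT.2.2.2.1 _ (D.exp_mem_T (t.smul_mem s hb)) _ hu
  simpa using congrArg Units.val this

theorem tt_comm (D : Dat G T g t k ip) {b c : A} (hb : b ∈ t) (hc : c ∈ t) : b * c = c * b := by
  apply comm_of_exp
  intro s
  have := D.tT_comm hc (D.exp_mem_T (t.smul_mem s hb))
  simpa using this.symm

theorem closedG (D : Dat G T g t k ip) : IsClosed (G : Set Aˣ) := D.cG.isClosed
theorem closedT (D : Dat G T g t k ip) : IsClosed (T : Set Aˣ) := D.hT.2.1.isClosed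

/-- `T = exp t`. -/
theorem T_exp (D : Dat G T g t k ip) {u : Aˣ} (hu : u ∈ T) : ∃ b ∈ t, expU b = u := by
  let K : Subgroup Aˣ :=
    { carrier := {u | ∃ b ∈ t, expU b = u}
      mul_mem' := by
        rintro _ _ ⟨b, hb, rfl⟩ ⟨c, hc, rfl⟩
        exact ⟨b + c, t.add_mem hb hc, expU_add (D.tt_comm hb hc)⟩
      one_mem' := ⟨0, t.zero_mem, expU_zero⟩
      inv_mem' := by
        rintro _ ⟨b, hb, rfl⟩
        exact ⟨-b, t.neg_mem hb, by simp⟩ }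
  exact gen T D.closedT D.hT.2.2.1 t D.ht K (fun X hX => ⟨X, hX, rfl⟩) hu

/-- The maximal torus is its own infinitesimal centralizer. -/
theorem cent (D : Dat G T g t k ip) {X : A} (hX : X ∈ g) (hc : ∀ b ∈ t, b * X = X * b) : X ∈ t := by
  have hcT : ∀ u ∈ T, Commute (u : A) X := by
    intro u hu
    obtain ⟨b, hb, rfl⟩ := D.T_exp hu
    exact Commute.exp_left (hc b hb)
  have hcT' : ∀ u ∈ T, ∀ s : ℝ, u * expU (s • X) = expU (s • X) * u := by
    intro u hu s
    ext
    exact (((hcT u hu).smul_right s).exp_right).eq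
  have hXX : ∀ s s' : ℝ, expU (s • X) * expU (s' • X) = expU ((s + s') • X) := by
    intro s s'
    rw [add_smul, expU_add]
    exact ((Commute.refl X).smul_left s).smul_right s'
  let K0 : Subgroup Aˣ :=
    { carrier := {x | ∃ u ∈ T, ∃ s : ℝ, u * expU (s • X) = x}
      mul_mem' := by
        rintro _ _ ⟨u, hu, s, rfl⟩ ⟨v, hv, s', rfl⟩
        refine ⟨u * v, T.mul_mem hu hv, s + s', ?_⟩
        rw [← hXX, mul_assoc, mul_assoc, ← mul_assoc v, hcT' v hv s]
        simp only [mul_assoc]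
      one_mem' := ⟨1, T.one_mem, 0, by simp [expU_zero]⟩
      inv_mem' := by
        rintro _ ⟨u, hu, s, rfl⟩
        refine ⟨u⁻¹, T.inv_mem hu, -s, ?_⟩
        rw [mul_inv_rev, expU_inv_val, hcT' _ (T.inv_mem hu), neg_smul] }
  have hK0comm : ∀ x ∈ K0, ∀ y ∈ K0, x * y = y * x := by
    rintro _ ⟨u, hu, s, rfl⟩ _ ⟨v, hv, s', rfl⟩
    have e : ∀ u ∈ T, ∀ v ∈ T, ∀ s s' : ℝ,
        u * expU (s • X) * (v * expU (s' • X)) = (u * v) * expU ((s + s') • X) := by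
      intro u hu v hv s s'
      rw [← hXX, mul_assoc, mul_assoc, ← mul_assoc (expU (s • X)), ← hcT' v hv s]
      simp only [mul_assoc]
    rw [e u hu v hv, e v hv u hu, D.hT.2.2.2.1 u hu v hv, add_comm]
  have hK0conn : IsConnected (K0 : Set Aˣ) := by
    have : (K0 : Set Aˣ) = (fun p : Aˣ × ℝ => p.1 * expU (p.2 • X)) '' ((T : Set Aˣ) ×ˢ Set.univ) := by
      ext x
      constructor
      · rintro ⟨u, hu, s, rfl⟩
        exact ⟨(u, s), ⟨hu, trivial⟩, rfl⟩
      · rintro ⟨⟨u, s⟩, ⟨hu, -⟩, rfl⟩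
        exact ⟨u, hu, s, rfl⟩
    rw [this]
    refine (D.hT.2.2.1.prod isConnected_univ).image _ (Continuous.continuousOn ?_)
    exact continuous_fst.mul (expU_continuous.comp (continuous_snd.smul continuous_const))
  have hK0G : K0 ≤ G := by
    rintro _ ⟨u, hu, s, rfl⟩
    exact G.mul_mem (D.hT.1 hu) ((D.hg X).1 hX s)
  let K := K0.topologicalClosure
  have hKG : K ≤ G := K0.topologicalClosure_minimal hK0G D.closedG
  have hKc : IsCompact (K : Set Aˣ) :=
    D.cG.of_isClosed_subset K0.isClosed_topologicalClosure hKG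
  have hKconn : IsConnected (K : Set Aˣ) := hK0conn.closure
  have hKcomm : ∀ x ∈ K, ∀ y ∈ K, x * y = y * x := by
    have h1 : ∀ x ∈ K0, ∀ y ∈ K, x * y = y * x := by
      intro x hx y hy
      have hcl : IsClosed {y : Aˣ | x * y = y * x} := isClosed_eq (by fun_prop) (by fun_prop)
      exact closure_minimal (s := (K0 : Set Aˣ)) (fun y hy => hK0comm x hx y hy) hcl hy
    intro x hx y hy
    have hcl : IsClosed {x : Aˣ | x * y = y * x} := isClosed_eq (by fun_prop) (by fun_prop)
    exact closure_minimal (s := (K0 : Set Aˣ)) (fun x hx => h1 x hx y hy) hcl hx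
  have hTK : T ≤ K := by
    intro u hu
    apply K0.le_topologicalClosure
    exact ⟨u, hu, 0, by simp [expU_zero]⟩
  have hEq := D.hT.2.2.2.2 K hKG hKc hKconn hKcomm hTK
  rw [D.ht]
  intro s
  rw [hEq]
  apply K0.le_topologicalClosure
  exact ⟨1, T.one_mem, s, by simp⟩

theorem ip_zero (D : Dat G T g t k ip) {Y : A} (hY : Y ∈ g) : ip 0 Y = 0 := by
  have := D.smul 0 0 g.zero_mem Y hY
  simpa using this

theorem disj (D : Dat G T g t k ip) : Disjoint t k := by
  rw [Submodule.disjoint_def]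
  intro X hXt hXk
  by_contra hne
  have := D.pos X (D.t_le hXt) hne
  rw [((D.hk X).1 hXk).2 X hXt] at this
  exact lt_irrefl _ this

theorem decomp (D : Dat G T g t k ip) {Y : A} (hY : Y ∈ g) : ∃ τ ∈ t, Y - τ ∈ k := by
  have addr : ∀ X ∈ g, ∀ Y ∈ g, ∀ Z ∈ g, ip X (Y + Z) = ip X Y + ip X Z := by
    intro X hX Y hY Z hZ
    rw [D.sym X hX _ (g.add_mem hY hZ), D.add Y hY Z hZ X hX, D.sym Y hY X hX, D.sym Z hZ X hX]
  have smulr : ∀ c : ℝ, ∀ X ∈ g, ∀ Y ∈ g, ip X (c • Y) = c * ip X Y := by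
    intro c X hX Y hY
    rw [D.sym X hX _ (g.smul_mem c hY), D.smul c Y hY X hX, D.sym Y hY X hX]
  let Bf : g →ₗ[ℝ] (t →ₗ[ℝ] ℝ) := LinearMap.mk₂ ℝ (fun X Z => ip (X : A) (Z : A))
    (fun X Y Z => D.add X X.2 Y Y.2 Z (D.t_le Z.2))
    (fun c X Z => D.smul c X X.2 Z (D.t_le Z.2))
    (fun X Y Z => addr X X.2 Y (D.t_le Y.2) Z (D.t_le Z.2))
    (fun c X Z => smulr c X X.2 Z (D.t_le Z.2))
  let Bt : t →ₗ[ℝ] (t →ₗ[ℝ] ℝ) := Bf ∘ₗ Submodule.inclusion D.t_le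
  have hinj : Function.Injective Bt := by
    rw [← LinearMap.ker_eq_bot, LinearMap.ker_eq_bot']
    intro X hX
    by_contra hne
    have h1 := D.pos X (D.t_le X.2) (by simpa using hne)
    have h2 : Bt X X = 0 := by rw [hX]; rfl
    have h3 : Bt X X = ip X X := rfl
    rw [← h3, h2] at h1
    exact lt_irrefl _ h1
  have hsurj : Function.Surjective Bt := by
    refine (LinearMap.injective_iff_surjective_of_finrank_eq_finrank ?_).1 hinj
    exact (Subspace.dual_finrank_eq (K := ℝ) (V := t)).symm
  obtain ⟨τ, hτ⟩ := hsurj (Bf ⟨Y, hY⟩)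
  refine ⟨τ, τ.2, (D.hk _).2 ⟨g.sub_mem hY (D.t_le τ.2), fun Z hZ => ?_⟩⟩
  have h1 : ip (τ : A) Z = ip Y Z := by
    have := congrArg (fun l : t →ₗ[ℝ] ℝ => l ⟨Z, hZ⟩) hτ
    exact this
  have h2 := D.add Y hY ((-1 : ℝ) • (τ : A)) (g.smul_mem _ (D.t_le τ.2)) Z (D.t_le hZ)
  rw [D.smul _ _ (D.t_le τ.2) _ (D.t_le hZ), h1] at h2
  have h3 : Y + (-1 : ℝ) • (τ : A) = Y - τ := by simp [sub_eq_add_neg]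
  rw [h3] at h2
  rw [h2]; ring

theorem Ad_k (D : Dat G T g t k ip) {u : Aˣ} (hu : u ∈ T) {X : A} (hX : X ∈ k) :
    (u : A) * X * ((u⁻¹ : Aˣ) : A) ∈ k := by
  have hXg := D.k_le hX
  rw [D.hk]
  refine ⟨D.Ad_g (D.hT.1 hu) hXg, fun Y hY => ?_⟩
  have h1 : (u : A) * Y * ((u⁻¹ : Aˣ) : A) = Y := by
    rw [← D.tT_comm hY hu, mul_assoc]; simp
  have h2 := D.Ad u (D.hT.1 hu) X hXg Y (D.t_le hY)
  rw [h1] at h2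
  rw [h2]; exact ((D.hk X).1 hX).2 Y hY

theorem Ad_k_exp (D : Dat G T g t k ip) {b : A} (hb : b ∈ t) {X : A} (hX : X ∈ k) :
    NormedSpace.exp b * X * NormedSpace.exp (-b) ∈ k := by
  simpa using D.Ad_k (D.exp_mem_T hb) hX

theorem br_k (D : Dat G T g t k ip) {b : A} (hb : b ∈ t) {X : A} (hX : X ∈ k) :
    b * X - X * b ∈ k := by
  apply bracket_mem_of_conj
  intro s
  exact D.Ad_k_exp (t.smul_mem s hb) hX

/-- Regularity criterion. -/
theorem reg_iff (D : Dat G T g t k ip) {b : A} (hb : b ∈ t) :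
    (∃! S : Subgroup Aˣ, IsMT G S ∧ expU b ∈ S) ↔
      ∀ X ∈ k, NormedSpace.exp b * X * NormedSpace.exp (-b) = X → X = 0 := by
  constructor
  · rintro ⟨S, ⟨hS, hbS⟩, huniq⟩ X hX hfix
    have hTS : T = S := huniq T ⟨D.hT, D.exp_mem_T hb⟩
    have hXcomm : Commute X (NormedSpace.exp b) := by
      have h1 : NormedSpace.exp b * X = X * NormedSpace.exp b := by
        calc NormedSpace.exp b * X = NormedSpace.exp b * X * (NormedSpace.exp (-b) * NormedSpace.exp b) := by
              rw [exp_neg_mul, mul_one]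
          _ = (NormedSpace.exp b * X * NormedSpace.exp (-b)) * NormedSpace.exp b := by noncomm_ring
          _ = _ := by rw [hfix]
      exact h1.symm
    have hXt : X ∈ t := by
      apply D.cent (D.k_le hX)
      intro c hc
      have h1 : X * c - c * X ∈ t := by
        apply bracket_mem_of_conj
        intro s
        have hG := D.exp_mem_G (g.smul_mem s (D.k_le hX))
        have hmt := D.hT.cj hG
        have hcT : cj (expU (s • X)) T = T := by
          rw [hTS]
          refine huniq _ ⟨by rw [← hTS]; exact hmt, ?_⟩
          rw [mem_cj]
          have : (expU (s • X))⁻¹ * expU b * expU (s • X) = expU b := by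
            have h2 : expU b * expU (s • X) = expU (s • X) * expU b := by
              ext; exact ((hXcomm.smul_left s).exp_left).eq.symm
            rw [mul_assoc, h2]; group
          rw [this]; exact hbS
        rw [D.ht]
        intro r
        have e : r • (NormedSpace.exp (s • X) * c * NormedSpace.exp (-(s • X))) =
            (expU (s • X) : A) * (r • c) * (((expU (s • X))⁻¹ : Aˣ) : A) := by simp
        rw [e, expU_conj, ← hcT, mem_cj]
        have e2 : (expU (s • X))⁻¹ * (expU (s • X) * expU (r • c) * (expU (s • X))⁻¹) * expU (s • X)
            = expU (r • c) := by group
        rw [e2]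
        exact (D.ht c).1 hc r
      have h2 : X * c - c * X ∈ k := by
        have := k.neg_mem (D.br_k hc hX)
        simpa using this
      have h3 := (Submodule.disjoint_def.1 D.disj) _ h1 h2
      exact (sub_eq_zero.1 h3).symm
    exact (Submodule.disjoint_def.1 D.disj) _ hXt hX
  · intro h
    refine ⟨T, ⟨D.hT, D.exp_mem_T hb⟩, ?_⟩
    rintro S ⟨hS, hbS⟩
    obtain ⟨s1, s2, s3, s4, s5⟩ := hS
    have scomm : ∀ X Y : A, (∀ r : ℝ, expU (r • X) ∈ S) → (∀ r : ℝ, expU (r • Y) ∈ S) → X * Y = Y * X := by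
      intro X Y hX hY
      apply comm_of_exp
      intro r
      symm
      apply comm_of_exp
      intro r'
      have := s4 _ (hY r') _ (hX r)
      simpa using congrArg Units.val this
    let sl : Submodule ℝ A :=
      { carrier := {X | ∀ r : ℝ, expU (r • X) ∈ S}
        add_mem' := by
          intro X Y hX hY r
          rw [smul_add, expU_add]
          · exact S.mul_mem (hX r) (hY r)
          · exact ((show Commute X Y from scomm X Y hX hY).smul_left r).smul_right r
        zero_mem' := by intro r; simp [expU_zero, S.one_mem]
        smul_mem' := by intro c X hX r; rw [smul_smul]; exact hX _ }
    have hsl : ∀ X, X ∈ sl ↔ ∀ r : ℝ, expU (r • X) ∈ S := fun X => Iff.rfl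
    apply s5 T D.hT.1 D.hT.2.1 D.hT.2.2.1 D.hT.2.2.2.1
    refine gen S s2.isClosed s3 sl hsl T ?_
    intro X hX
    apply D.exp_mem_T
    have hXg : X ∈ g := (D.hg X).2 fun r => s1 (hX r)
    have hXc : X * NormedSpace.exp b = NormedSpace.exp b * X := by
      apply comm_of_exp
      intro r
      have := s4 _ (hX r) _ hbS
      simpa using congrArg Units.val this
    obtain ⟨τ, hτ, hκ⟩ := D.decomp hXg
    have hfix : NormedSpace.exp b * (X - τ) * NormedSpace.exp (-b) = X - τ := by
      have h1 : NormedSpace.exp b * (X - τ) = (X - τ) * NormedSpace.exp b := by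
        have := D.tT_comm hτ (D.exp_mem_T hb)
        simp only [expU_val] at this
        rw [mul_sub, sub_mul, hXc, this]
      rw [h1, mul_assoc, exp_mul_neg, mul_one]
    have := h _ hκ hfix
    rw [sub_eq_zero.1 this]; exact hτ

end Dat
end
end WIF
end Part3

section Part4
open MeasureTheory Filter Topology
set_option linter.style.haveILetI false
set_option linter.unusedSectionVars false

namespace WIF

section Det
variable {V : Type*} [NormedAddCommGroup V] [NormedSpace ℝ V] [FiniteDimensional ℝ V]

theorem mdet_contDiff {ι : Type*} [Fintype ι] [DecidableEq ι] {E : Type*} [NormedAddCommGroup E]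
    [NormedSpace ℝ E] {n : WithTop ℕ∞} (f : E → Matrix ι ι ℝ)
    (hf : ∀ i j, ContDiff ℝ n fun x => f x i j) : ContDiff ℝ n fun x => (f x).det := by
  simp only [Matrix.det_apply]
  refine ContDiff.sum fun σ _ => ?_
  refine ContDiff.const_smul _ ?_
  exact contDiff_prod fun i _ => hf _ _

theorem det_contDiff {n : WithTop ℕ∞} :
    ContDiff ℝ n fun M : V →L[ℝ] V => LinearMap.det (M : V →ₗ[ℝ] V) := by
  classical
  let b := Module.finBasis ℝ V
  have : (fun M : V →L[ℝ] V => LinearMap.det (M : V →ₗ[ℝ] V)) =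
      fun M : V →L[ℝ] V => (LinearMap.toMatrix b b (M : V →ₗ[ℝ] V)).det := by
    ext M; rw [LinearMap.det_toMatrix]
  rw [this]
  apply mdet_contDiff
  intro i j
  let l : (V →L[ℝ] V) →ₗ[ℝ] ℝ :=
    { toFun := fun M => LinearMap.toMatrix b b (M : V →ₗ[ℝ] V) i j
      map_add' := by intro M N; simp
      map_smul' := by intro c M; simp }
  exact (LinearMap.toContinuousLinearMap l).contDiff

theorem det_line (C : V →ₗ[ℝ] V) :
    HasDerivAt (fun s : ℝ => LinearMap.det (1 + s • C)) (LinearMap.trace ℝ V C) 0 := by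
  classical
  let b := Module.finBasis ℝ V
  set M := LinearMap.toMatrix b b C
  have h1 : ∀ s : ℝ, LinearMap.det (1 + s • C) =
      Polynomial.eval s (Matrix.det (1 + (Polynomial.X : Polynomial ℝ) • M.map Polynomial.C)) := by
    intro s
    rw [← LinearMap.det_toMatrix b, ← Polynomial.coe_evalRingHom, RingHom.map_det]
    congr 1
    have h0 : LinearMap.toMatrix b b (1 + s • C) = 1 + s • M := by
      simp [M]
    rw [h0]
    ext i j
    by_cases hij : i = j
    · subst hij; simp; ring
    · simp [hij]; ring
  have h2 := Polynomial.hasDerivAt (Matrix.det (1 + (Polynomial.X : Polynomial ℝ) • M.map Polynomial.C)) 0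
  rw [Matrix.derivative_det_one_add_X_smul, ← LinearMap.trace_eq_matrix_trace] at h2
  exact h2.congr_of_eventuallyEq (Eventually.of_forall h1)

theorem det_hasDerivAt {M : ℝ → V →L[ℝ] V} {M' N : V →L[ℝ] V} {s₀ : ℝ} (hM : HasDerivAt M M' s₀)
    (hN : N ∘L M s₀ = 1) :
    HasDerivAt (fun s => LinearMap.det (M s : V →ₗ[ℝ] V))
      (LinearMap.det (M s₀ : V →ₗ[ℝ] V) * LinearMap.trace ℝ V (N ∘L M' : V →L[ℝ] V)) s₀ := by
  have hN' : M s₀ ∘L N = 1 := by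
    have h : (N : V →ₗ[ℝ] V) * (M s₀ : V →ₗ[ℝ] V) = 1 := by
      ext x; simpa using congrArg (fun L : V →L[ℝ] V => L x) hN
    have h' := mul_eq_one_comm.1 h
    ext x; simpa using congrArg (fun L : V →ₗ[ℝ] V => L x) h'
  have hd : DifferentiableAt ℝ (fun M : V →L[ℝ] V => LinearMap.det (M : V →ₗ[ℝ] V)) 1 :=
    (det_contDiff (n := 1)).differentiable (by norm_num) 1
  obtain ⟨D, hD⟩ : ∃ D, HasFDerivAt (fun M : V →L[ℝ] V => LinearMap.det (M : V →ₗ[ℝ] V)) D 1 :=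
    ⟨_, hd.hasFDerivAt⟩
  have hDt : ∀ C : V →L[ℝ] V, D C = LinearMap.trace ℝ V (C : V →ₗ[ℝ] V) := by
    intro C
    have hl : HasDerivAt (fun s : ℝ => (1 : V →L[ℝ] V) + s • C) C 0 := by
      have := ((hasDerivAt_id (0 : ℝ)).smul_const C).const_add (1 : V →L[ℝ] V)
      simpa using this
    have hD' : HasFDerivAt (fun M : V →L[ℝ] V => LinearMap.det (M : V →ₗ[ℝ] V)) D
      ((1 : V →L[ℝ] V) + (0 : ℝ) • C) := by simpa using hD
    have h3 := hD'.comp_hasDerivAt 0 hl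
    exact h3.unique (det_line (C : V →ₗ[ℝ] V))
  have hc : HasDerivAt (fun s => N ∘L M s) (N ∘L M') s₀ := by
    have := (ContinuousLinearMap.compL ℝ V V V N).hasFDerivAt.comp_hasDerivAt s₀ hM
    exact this
  have hD2 : HasFDerivAt (fun M : V →L[ℝ] V => LinearMap.det (M : V →ₗ[ℝ] V)) D (N ∘L M s₀) := by
    rw [hN]; exact hD
  have h4 := (hD2.comp_hasDerivAt s₀ hc).const_mul (LinearMap.det (M s₀ : V →ₗ[ℝ] V))
  rw [hDt] at h4
  refine h4.congr_of_eventuallyEq (Eventually.of_forall fun s => ?_)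
  simp only [Function.comp]
  rw [← LinearMap.det_comp]
  congr 1
  ext x
  have := congrArg (fun L : V →L[ℝ] V => L (M s x)) hN'
  simpa using this.symm

end Det

section LA
variable {V : Type*} [AddCommGroup V] [Module ℝ V] [FiniteDimensional ℝ V]

theorem det_nonneg_of (R : V →ₗ[ℝ] V) (q : V → ℝ) (q1 : ∀ (c : ℝ) x, q (c • x) = c ^ 2 * q x)
    (q2 : ∀ x, x ≠ 0 → 0 < q x) (q3 : ∀ x, q (R x) = q x) : 0 ≤ LinearMap.det (1 - R) := by
  by_contra hneg
  push Not at hneg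
  let f : ℝ → ℝ := fun s => LinearMap.det (1 - s • R)
  have hf : Continuous f := by
    classical
    let b := Module.finBasis ℝ V
    have : f = fun s => (1 - s • LinearMap.toMatrix b b R).det := by
      ext s; simp only [f]; rw [← LinearMap.det_toMatrix b]; simp
    rw [this]
    exact Continuous.matrix_det (by fun_prop)
  have h0 : f 0 = 1 := by simp [f]
  have h1 : f 1 < 0 := by simpa [f] using hneg
  have := intermediate_value_Icc' (zero_le_one) hf.continuousOn
  obtain ⟨s, hs, hs0⟩ := this (show (0:ℝ) ∈ Set.Icc (f 1) (f 0) from ⟨h1.le, by rw [h0]; norm_num⟩)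
  have hs1 : s ≠ 1 := by rintro rfl; exact absurd hs0 h1.ne
  have hker := LinearMap.bot_lt_ker_of_det_eq_zero (f := 1 - s • R) hs0
  obtain ⟨x, hx, hx0⟩ := Submodule.exists_mem_ne_zero_of_ne_bot hker.ne'
  have hx' : x = s • R x := by
    have : x - s • R x = 0 := by simpa using hx
    exact sub_eq_zero.1 this
  have h2 : q x = s ^ 2 * q x := by
    conv_lhs => rw [hx', q1, q3]
  have h3 := q2 x hx0
  have h4 : s ^ 2 < 1 := by
    have : s < 1 := lt_of_le_of_ne hs.2 hs1
    nlinarith [hs.1]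
  nlinarith

theorem exists_iso (B : V → V → ℝ) (sym : ∀ x y, B x y = B y x)
    (add : ∀ x y z, B (x + y) z = B x z + B y z) (smul : ∀ (c : ℝ) x y, B (c • x) y = c * B x y)
    (pos : ∀ x, x ≠ 0 → 0 < B x x) :
    ∃ (n : ℕ) (φ : EuclideanSpace ℝ (Fin n) ≃ₗ[ℝ] V), ∀ x y, B (φ x) (φ y) = inner ℝ x y := by
  have hz : ∀ y, B 0 y = 0 := fun y => by simpa using smul 0 0 y
  let core : InnerProductSpace.Core ℝ V :=
    { inner := B
      conj_inner_symm := by intro x y; simp [sym x y]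
      re_inner_nonneg := by
        intro x
        by_cases h : x = 0
        · subst h; simp [hz]
        · simpa using (pos x h).le
      add_left := add
      smul_left := by intro x y r; simp [smul]
      definite := by
        intro x hx
        by_contra h
        exact absurd hx (pos x h).ne' }
  letI : NormedAddCommGroup V := core.toNormedAddCommGroup
  letI : InnerProductSpace ℝ V := InnerProductSpace.ofCore core.toCore
  refine ⟨_, (stdOrthonormalBasis ℝ V).repr.symm.toLinearEquiv, fun x y => ?_⟩
  exact (stdOrthonormalBasis ℝ V).repr.symm.inner_map_map x y

end LA

section Anti
variable {W : Type*} [NormedAddCommGroup W] [InnerProductSpace ℝ W] [FiniteDimensional ℝ W]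

theorem anti_eig (M : W →L[ℝ] W) (hM : ∀ x y, inner ℝ (M x) y = - inner ℝ x (M y)) (h0 : M ≠ 0) :
    ∃ x, x ≠ 0 ∧ M (M x) = -(‖M‖ ^ 2) • x := by
  haveI : ProperSpace W := FiniteDimensional.proper ℝ W
  haveI : Nontrivial W := by
    by_contra h
    rw [not_nontrivial_iff_subsingleton] at h
    exact h0 (Subsingleton.elim _ _)
  have hne : (Metric.sphere (0 : W) 1).Nonempty := NormedSpace.sphere_nonempty.2 zero_le_one
  obtain ⟨x, hx, hmax⟩ := (isCompact_sphere (0 : W) 1).exists_isMaxOn hne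
    (f := fun x => ‖M x‖) (by fun_prop)
  have hx1 : ‖x‖ = 1 := by simpa using hx
  have hn : ‖M x‖ = ‖M‖ := by
    apply le_antisymm
    · simpa [hx1] using M.le_opNorm x
    · apply M.opNorm_le_bound (norm_nonneg _)
      intro y
      by_cases hy : y = 0
      · simp [hy]
      · have h1 : ‖M (‖y‖⁻¹ • y)‖ ≤ ‖M x‖ := hmax (by simp [norm_smul, hy])
        rw [map_smul, norm_smul, norm_inv, norm_norm] at h1
        have hyp : 0 < ‖y‖ := norm_pos_iff.2 hy
        rwa [inv_mul_le_iff₀ hyp, mul_comm] at h1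
  refine ⟨x, by rintro rfl; simp at hx1, ?_⟩
  have h2 : ‖M (M x) + (‖M‖ ^ 2) • x‖ ^ 2 ≤ 0 := by
    rw [norm_add_sq_real, inner_smul_right, hM, real_inner_self_eq_norm_sq, norm_smul, hx1, hn]
    have h3 : ‖M (M x)‖ ≤ ‖M‖ * ‖M‖ := by simpa [hn] using M.le_opNorm (M x)
    have h4 : ‖M (M x)‖ ^ 2 ≤ (‖M‖ * ‖M‖) ^ 2 := by gcongr
    have h5 : ‖‖M‖ ^ 2‖ = ‖M‖ ^ 2 := by simp
    rw [h5]
    nlinarith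
  have h3 : ‖M (M x) + (‖M‖ ^ 2) • x‖ = 0 := by
    have := sq_nonneg ‖M (M x) + (‖M‖ ^ 2) • x‖
    exact pow_eq_zero_iff (two_ne_zero) |>.1 (le_antisymm h2 this)
  rw [norm_eq_zero] at h3
  rw [neg_smul]; exact eq_neg_of_add_eq_zero_left h3

end Anti

section Per
variable {A : Type*} [NormedRing A] [NormedAlgebra ℝ A] [CompleteSpace A]

theorem per {b X Y : A} {ρ : ℝ} (hρ : ρ ≠ 0) (h1 : b * X - X * b = Y)
    (h2 : b * Y - Y * b = -(ρ ^ 2) • X) (hc : Real.cos ρ = 1) (hs : Real.sin ρ = 0) :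
    NormedSpace.exp b * X * NormedSpace.exp (-b) = X := by
  let z : ℝ → A := fun s => Real.cos (s * ρ) • X + (Real.sin (s * ρ) / ρ) • Y
  let w : ℝ → A := fun s => NormedSpace.exp (s • (-b)) * z s * NormedSpace.exp (s • b)
  have hz : ∀ s, HasDerivAt z (b * z s - z s * b) s := by
    intro s
    have e0 : HasDerivAt (fun s : ℝ => s * ρ) ρ s := by simpa using (hasDerivAt_id s).mul_const ρ
    have e1 := (e0.cos).smul_const X
    have e2 := ((e0.sin).div_const ρ).smul_const Y
    refine (e1.add e2).congr_deriv ?_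
    symm
    have : b * z s - z s * b = Real.cos (s * ρ) • (b * X - X * b) + (Real.sin (s * ρ) / ρ) • (b * Y - Y * b) := by
      simp only [z, mul_add, add_mul, smul_sub, mul_smul_comm, smul_mul_assoc]; abel
    rw [this, h1, h2, smul_smul, mul_div_assoc, div_self hρ, mul_one, add_comm]
    congr 2
    field_simp
  have hw : ∀ s, HasDerivAt w 0 s := by
    intro s
    have := ((exp_hasDerivAt (-b) s).mul (hz s)).mul (exp_hasDerivAt' b s)
    refine this.congr_deriv ?_
    simp only [Pi.mul_apply]
    noncomm_ring
  have hconst : w 1 = w 0 :=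
    is_const_of_deriv_eq_zero (fun s => (hw s).differentiableAt) (fun s => (hw s).deriv) 1 0
  have h3 : NormedSpace.exp (-b) * X * NormedSpace.exp b = X := by
    simpa [w, z, hc, hs] using hconst
  calc NormedSpace.exp b * X * NormedSpace.exp (-b)
      = NormedSpace.exp b * (NormedSpace.exp (-b) * X * NormedSpace.exp b) * NormedSpace.exp (-b) := by rw [h3]
    _ = (NormedSpace.exp b * NormedSpace.exp (-b)) * X * (NormedSpace.exp b * NormedSpace.exp (-b)) := by noncomm_ring
    _ = X := by rw [exp_mul_neg]; simp

end Per
end WIF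
end Part4

section Part5
open MeasureTheory Filter Topology
set_option linter.style.haveILetI false
set_option linter.unusedSectionVars false

namespace WIF

section Inv
variable {G : Type*} [Group G] [TopologicalSpace G] [IsTopologicalGroup G] [CompactSpace G]
  [T2Space G]
  [SecondCountableTopology G] [MeasurableSpace G] [BorelSpace G] (μ : Measure G) [μ.IsHaarMeasure]
  [IsProbabilityMeasure μ]

theorem rightInv : μ.IsMulRightInvariant := by
  constructor
  intro g
  haveI : IsProbabilityMeasure (Measure.map (· * g) μ) :=
    Measure.isProbabilityMeasure_map (by fun_prop)
  exact Measure.isHaarMeasure_eq_of_isProbabilityMeasure _ _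

theorem cont_integrable {X : Type*} [TopologicalSpace X] [CompactSpace X] [MeasurableSpace X]
    [OpensMeasurableSpace X] (ν : Measure X) [IsFiniteMeasure ν] {f : X → ℂ} (hf : Continuous f) :
    Integrable f ν := by
  exact (BoundedContinuousFunction.mkOfCompact ⟨f, hf⟩ : BoundedContinuousFunction X ℂ).integrable ν

theorem inv_int (Ψ D : G → ℂ) (hΨ : Continuous Ψ) (hD : Continuous D) (γ : ℝ → G)
    (hγ : Continuous γ) (h0 : γ 0 = 1)
    (h : ∀ g s, HasDerivAt (fun s => Ψ (g * γ s)) (D (g * γ s)) s) : ∫ g, D g ∂μ = 0 := by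
  haveI := rightInv μ
  have h1 : ∀ g, ∫ s in (0:ℝ)..1, D (g * γ s) = Ψ (g * γ 1) - Ψ g := by
    intro g
    have := intervalIntegral.integral_eq_sub_of_hasDerivAt (a := 0) (b := 1)
      (fun s _ => h g s) (Continuous.intervalIntegrable (by fun_prop) _ _)
    simpa [h0] using this
  obtain ⟨C, hC⟩ : ∃ C, ∀ g, ‖D g‖ ≤ C := by
    obtain ⟨C, hC⟩ := (isCompact_range hD).isBounded.exists_norm_le
    exact ⟨C, fun g => hC _ ⟨g, rfl⟩⟩
  have h2 : ∫ g, (∫ s in (0:ℝ)..1, D (g * γ s)) ∂μ = ∫ s in (0:ℝ)..1, (∫ g, D (g * γ s) ∂μ) := by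
    simp only [intervalIntegral.integral_of_le (zero_le_one' ℝ)]
    apply integral_integral_swap
    apply Integrable.of_bound (C := C)
    · apply Continuous.aestronglyMeasurable
      simp only [Function.uncurry_def]
      fun_prop
    · exact Eventually.of_forall fun p => hC _
  have h3 : ∀ s, ∫ g, D (g * γ s) ∂μ = ∫ g, D g ∂μ := fun s => integral_mul_right_eq_self D (γ s)
  simp only [h3, h1] at h2
  rw [integral_sub, integral_mul_right_eq_self Ψ, sub_self] at h2
  · simpa using h2.symm
  · exact cont_integrable μ (by fun_prop)
  · exact cont_integrable μ hΨ

end Inv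

section ZE
variable {E : Type*} [NormedAddCommGroup E] [NormedSpace ℝ E] [FiniteDimensional ℝ E]
  [MeasurableSpace E] [BorelSpace E] (m : Measure E) [m.IsAddHaarMeasure]

theorem lineconst (c : ℂ) (x v : E) : HasLineDerivAt ℝ (fun _ : E => c) 0 x v := by
  unfold HasLineDerivAt
  exact hasDerivAt_const _ _

theorem zero_ext {U : Set E} (hU : IsOpen U) (hb : Bornology.IsBounded U) {H H' : E → ℂ} {v : E}
    (hH : Continuous H) (hH' : Continuous H') (hd : ∀ x, HasLineDerivAt ℝ H (H' x) x v)
    (h0 : ∀ x ∈ frontier U, H x = 0) (h1 : ∀ x ∈ frontier U, H' x = 0) :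
    ∫ x in U, H' x ∂m = 0 := by
  haveI : ProperSpace E := FiniteDimensional.proper ℝ E
  have hInt0 : ∀ K : E → ℂ, Continuous K → Integrable (U.indicator K) m := by
    intro K hK
    rw [integrable_indicator_iff hU.measurableSet]
    exact (hK.continuousOn.integrableOn_compact hb.isCompact_closure).mono_set subset_closure
  have hder : ∀ x, HasLineDerivAt ℝ (U.indicator H) (U.indicator H' x) x v := by
    intro x
    have hcl : Continuous fun s : ℝ => x + s • v := by fun_prop
    by_cases hx : x ∈ U
    · rw [Set.indicator_of_mem hx]
      refine (hd x).congr_of_eventuallyEq ?_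
      filter_upwards [hU.mem_nhds hx] with y hy
      exact Set.indicator_of_mem hy _
    · rw [Set.indicator_of_notMem hx]
      by_cases hx' : x ∈ frontier U
      · have := hd x
        rw [h1 x hx'] at this
        unfold HasLineDerivAt at *
        rw [hasDerivAt_iff_isLittleO] at *
        simp only [zero_smul, add_zero, h0 x hx', sub_zero, sub_zero, smul_zero] at *
        rw [Set.indicator_of_notMem hx]
        simp only [sub_zero]
        refine Asymptotics.IsBigO.trans_isLittleO ?_ this
        apply Asymptotics.isBigO_of_le
        intro s
        exact norm_indicator_le_norm_self _ _
      · have : x ∉ closure U := by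
          intro hc; apply hx'; rw [hU.frontier_eq]; exact ⟨hc, hx⟩
        have h2 : HasLineDerivAt ℝ (fun _ : E => (0 : ℂ)) 0 x v := lineconst _ _ _
        refine h2.congr_of_eventuallyEq ?_
        filter_upwards [isClosed_closure.isOpen_compl.mem_nhds this] with y hy
        exact Set.indicator_of_notMem (fun h => hy (subset_closure h)) _
  have key := integral_bilinear_hasLineDerivAt_right_eq_neg_left_of_integrable (μ := m)
    (f := fun _ : E => (1 : ℂ)) (f' := fun _ => 0) (g := U.indicator H) (g' := U.indicator H') (v := v)
    (B := ContinuousLinearMap.mul ℝ ℂ) (by simp) (by simpa using hInt0 H' hH') (by simpa using hInt0 H hH)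
    (fun x _ => lineconst _ _ _) (fun x _ => hder x)
  simpa [integral_indicator hU.measurableSet] using key

end ZE
end WIF
end Part5

section Part6
open MeasureTheory Filter Topology
set_option linter.style.haveILetI false
set_option linter.unusedSectionVars false

namespace WIF

section
variable {E F : Type*} [NormedAddCommGroup E] [NormedSpace ℝ E] [NormedAddCommGroup F] [NormedSpace ℝ F]

theorem line_comp (f : E → F) (hf : ContDiff ℝ 1 f) (b τ : E) :
    HasDerivAt (fun s : ℝ => f (b + s • τ)) (fderiv ℝ f b τ) 0 := by
  have hl : HasDerivAt (fun s : ℝ => b + s • τ) τ 0 := by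
    have := ((hasDerivAt_id (0 : ℝ)).smul_const τ).const_add b
    simpa using this
  have h0 : HasFDerivAt f (fderiv ℝ f b) (b + (0 : ℝ) • τ) := by
    simpa using (hf.differentiable (by norm_num) b).hasFDerivAt
  exact h0.comp_hasDerivAt 0 hl

theorem det_one_sub {V : Type*} [NormedAddCommGroup V] [NormedSpace ℝ V] [FiniteDimensional ℝ V]
    {R : ℝ → V →L[ℝ] V} {R' N : V →L[ℝ] V} {s₀ : ℝ} (hR : HasDerivAt R R' s₀)
    (hN : N ∘L (1 - R s₀) = 1) :
    HasDerivAt (fun s => LinearMap.det ((1 - R s : V →L[ℝ] V) : V →ₗ[ℝ] V))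
      (LinearMap.det ((1 - R s₀ : V →L[ℝ] V) : V →ₗ[ℝ] V) * LinearMap.trace ℝ V (N ∘L (-R') : V →L[ℝ] V)) s₀ :=
  det_hasDerivAt (M := fun s => 1 - R s) (hR.const_sub (1 : V →L[ℝ] V)) hN

theorem line_comp_apply {V W : Type*} [NormedAddCommGroup V] [NormedSpace ℝ V] [NormedAddCommGroup W] [NormedSpace ℝ W]
    (f : E → V →L[ℝ] W) (hf : ContDiff ℝ 1 f) (b τ : E) (X : V) :
    HasDerivAt (fun s : ℝ => f (b + s • τ) X) (fderiv ℝ f b τ X) 0 := by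
  have := (line_comp f hf b τ).clm_apply (hasDerivAt_const (0 : ℝ) X)
  simpa using this
end

section
variable {A : Type*} [NormedRing A] [NormedAlgebra ℝ A] [CompleteSpace A] [FiniteDimensional ℝ A]
variable {G T : Subgroup Aˣ} {g t k : Submodule ℝ A} {ip : A → A → ℝ}

theorem Dat.exists_pk (D : Dat G T g t k ip) :
    ∃ pk : A →L[ℝ] k, (∀ X : k, pk X = X) ∧ ∀ τ ∈ t, pk τ = 0 := by
  obtain ⟨m, hm, hc⟩ := D.disj.exists_isCompl
  refine ⟨LinearMap.toContinuousLinearMap (k.projectionOnto m hc.symm), ?_, ?_⟩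
  · intro X; simp
  · intro τ hτ
    simp only [LinearMap.coe_toContinuousLinearMap']
    exact (Submodule.projectionOnto_apply_eq_zero_iff hc.symm).2 (hm hτ)

/-- `Ad(exp b)` on `k`. -/
noncomputable def Rk (pk : A →L[ℝ] k) (b : A) : k →L[ℝ] k :=
  (pk ∘L (ContinuousLinearMap.mulLeftRight ℝ A (NormedSpace.exp b) (NormedSpace.exp (-b)))) ∘L k.subtypeL

theorem Rk_apply (pk : A →L[ℝ] k) (b : A) (X : k) :
    Rk pk b X = pk (NormedSpace.exp b * X * NormedSpace.exp (-b)) := rfl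

/-- `ad Y` on `k`, projected. -/
noncomputable def adp (pk : A →L[ℝ] k) : A →L[ℝ] (k →L[ℝ] k) :=
  LinearMap.toContinuousLinearMap
    { toFun := fun Y => (pk ∘L (ContinuousLinearMap.mul ℝ A Y - (ContinuousLinearMap.mul ℝ A).flip Y)) ∘L k.subtypeL
      map_add' := by
        intro Y Z; ext X; simp; abel
      map_smul' := by
        intro c Y; ext X; simp [smul_sub] }

theorem adp_apply (pk : A →L[ℝ] k) (Y : A) (X : k) : adp pk Y X = pk (Y * X - X * Y) := by
  simp [adp]

/-- The Weyl density. -/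
noncomputable def dlt (pk : A →L[ℝ] k) (b : A) : ℝ := LinearMap.det ((1 - Rk pk b : k →L[ℝ] k) : k →ₗ[ℝ] k)

theorem Rk_contDiff (pk : A →L[ℝ] k) {n : WithTop ℕ∞} : ContDiff ℝ n (Rk pk) := by
  unfold Rk
  have h1 : ContDiff ℝ n fun b : A => (ContinuousLinearMap.mulLeftRight ℝ A (NormedSpace.exp b) (NormedSpace.exp (-b))) := by
    refine ContDiff.clm_apply ?_ (exp_contDiff.comp contDiff_neg)
    exact (ContinuousLinearMap.contDiff (𝕜 := ℝ) (E := A) (F := A →L[ℝ] A →L[ℝ] A) (ContinuousLinearMap.mulLeftRight ℝ A)).comp exp_contDiff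
  exact (contDiff_const.clm_comp h1).clm_comp contDiff_const

theorem dlt_contDiff (pk : A →L[ℝ] k) {n : WithTop ℕ∞} : ContDiff ℝ n (dlt pk) :=
  det_contDiff.comp (contDiff_const.sub (Rk_contDiff pk))

/-- The projection properties. -/
structure PkOK (t k : Submodule ℝ A) (pk : A →L[ℝ] k) : Prop where
  p1 : ∀ X : k, pk X = X
  p2 : ∀ τ ∈ t, pk τ = 0

variable {pk : A →L[ℝ] k}

theorem Dat.Rk_coe (D : Dat G T g t k ip) (hp : PkOK t k pk) {b : A} (hb : b ∈ t) (X : k) :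
    (Rk pk b X : A) = NormedSpace.exp b * X * NormedSpace.exp (-b) := by
  have := hp.p1 ⟨_, D.Ad_k_exp hb X.2⟩
  rw [Rk_apply]
  exact congrArg Subtype.val this

theorem Dat.sub_pk (D : Dat G T g t k ip) (hp : PkOK t k pk) {Y : A} (hY : Y ∈ g) : Y - pk Y ∈ t := by
  obtain ⟨τ, hτ, hκ⟩ := D.decomp hY
  have h1 : pk Y = ⟨Y - τ, hκ⟩ := by
    have : Y = τ + (⟨Y - τ, hκ⟩ : k) := by simp
    conv_lhs => rw [this, map_add, hp.p2 _ hτ, hp.p1, zero_add]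
  rw [h1]; simpa using hτ

theorem Dat.Rk_neg (D : Dat G T g t k ip) (hp : PkOK t k pk) {b : A} (hb : b ∈ t) :
    Rk pk b ∘L Rk pk (-b) = 1 := by
  ext X
  have h1 := D.Rk_coe hp hb (Rk pk (-b) X)
  rw [D.Rk_coe hp (t.neg_mem hb)] at h1
  simp only [ContinuousLinearMap.comp_apply, one_apply_eq_self]
  rw [h1, neg_neg]
  calc _ = (NormedSpace.exp b * NormedSpace.exp (-b)) * (X : A) * (NormedSpace.exp b * NormedSpace.exp (-b)) := by noncomm_ring
    _ = X := by rw [exp_mul_neg]; simp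

theorem Dat.pk_conj (D : Dat G T g t k ip) (hp : PkOK t k pk) {b : A} (hb : b ∈ t) {Z : A} (hZ : Z ∈ g) :
    pk (NormedSpace.exp b * Z * NormedSpace.exp (-b)) = Rk pk b (pk Z) := by
  have h1 := D.sub_pk hp hZ
  have h2 : Z = (Z - pk Z) + pk Z := by simp
  have h3 : NormedSpace.exp b * (Z - pk Z) * NormedSpace.exp (-b) = Z - pk Z :=
    exp_conj_of_comm (D.tt_comm hb h1)
  conv_lhs => rw [h2, mul_add, add_mul, h3, map_add, hp.p2 _ h1, zero_add]
  rfl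

/-- Vanishing of the trace functional on `k`. -/
theorem Dat.tr_zero (D : Dat G T g t k ip) (hp : PkOK t k pk) {b : A} (hb : b ∈ t)
    {N : k →L[ℝ] k} (hN : N ∘L (1 - Rk pk b) = 1) (hN' : (1 - Rk pk b) ∘L N = 1) (κ : k) :
    LinearMap.trace ℝ k ((N ∘L adp pk κ : k →L[ℝ] k) : k →ₗ[ℝ] k) = 0 := by
  set R := Rk pk b
  set R' := Rk pk (-b)
  have hRR' : R ∘L R' = 1 := D.Rk_neg hp hb
  have hR'R : R' ∘L R = 1 := by simpa using D.Rk_neg hp (t.neg_mem hb)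
  have hNR : N ∘L R = R ∘L N := by
    have h1 : N - N ∘L R = 1 := by
      rw [← hN]; ext x; simp
    have h2 : N - R ∘L N = 1 := by
      rw [← hN']; ext x; simp
    have h3 : N - N ∘L R = N - R ∘L N := by rw [h1, h2]
    exact sub_right_injective h3
  have hinv : ∀ κ : k, LinearMap.trace ℝ k ((N ∘L adp pk (R κ) : k →L[ℝ] k) : k →ₗ[ℝ] k) =
      LinearMap.trace ℝ k ((N ∘L adp pk κ : k →L[ℝ] k) : k →ₗ[ℝ] k) := by
    intro κ
    have h1 : adp pk (R κ) = R ∘L adp pk κ ∘L R' := by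
      ext X
      congr 1
      simp only [ContinuousLinearMap.comp_apply, adp_apply]
      have hbr : (κ : A) * (R' X : k) - (R' X : k) * κ ∈ g := D.br_g (D.k_le κ.2) (D.k_le (R' X).2)
      rw [← D.pk_conj hp hb hbr]
      congr 1
      have hX : (X : A) = NormedSpace.exp b * (R' X : k) * NormedSpace.exp (-b) := by
        rw [← D.Rk_coe hp hb]
        have := congrArg (fun L : k →L[ℝ] k => L X) hRR'
        simpa using (congrArg Subtype.val this).symm
      have hκ : ((R κ : k) : A) = NormedSpace.exp b * κ * NormedSpace.exp (-b) := D.Rk_coe hp hb κ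
      rw [hκ]
      conv_lhs => rw [hX]
      have e := exp_neg_mul b
      calc _ = NormedSpace.exp b * κ * (NormedSpace.exp (-b) * NormedSpace.exp b) * (R' X : k) * NormedSpace.exp (-b)
          - NormedSpace.exp b * (R' X : k) * (NormedSpace.exp (-b) * NormedSpace.exp b) * κ * NormedSpace.exp (-b) := by noncomm_ring
        _ = _ := by rw [e]; noncomm_ring
    have h2 : ((N ∘L adp pk (R κ) : k →L[ℝ] k) : k →ₗ[ℝ] k) =
        (R : k →ₗ[ℝ] k) ∘ₗ (((N ∘L adp pk κ : k →L[ℝ] k) : k →ₗ[ℝ] k) ∘ₗ (R' : k →ₗ[ℝ] k)) := by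
      rw [h1]
      ext X
      have := congrArg (fun L : k →L[ℝ] k => L (adp pk κ (R' X))) hNR
      exact congrArg Subtype.val this
    rw [h2, LinearMap.trace_comp_comm', LinearMap.comp_assoc]
    congr 1
    ext X
    have := congrArg (fun L : k →L[ℝ] k => L X) hR'R
    simp only [ContinuousLinearMap.comp_apply, one_apply_eq_self] at this
    simp [this]
  have hκ : κ = N κ - R (N κ) := by
    have := congrArg (fun L : k →L[ℝ] k => L κ) hN'
    simpa using this.symm
  have h3 : adp pk (κ : A) = adp pk (N κ : k) - adp pk (R (N κ) : k) := by
    conv_lhs => rw [hκ]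
    simp
  rw [h3, ContinuousLinearMap.comp_sub, ContinuousLinearMap.toLinearMap_sub, map_sub, hinv, sub_self]

theorem Dat.Rk_deriv (D : Dat G T g t k ip) (hp : PkOK t k pk) {b τ : A} (hb : b ∈ t) (hτ : τ ∈ t) :
    HasDerivAt (fun s : ℝ => Rk pk (b + s • τ)) (Rk pk b ∘L adp pk τ) 0 := by
    have h1 := line_comp (Rk pk) (Rk_contDiff pk) b τ
    refine h1.congr_deriv ?_
    ext1 X
    have h2 := line_comp_apply (Rk pk) (Rk_contDiff pk) b τ X
    have h3 : (fun s : ℝ => Rk pk (b + s • τ) X) = fun s : ℝ =>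
        pk (NormedSpace.exp b * (NormedSpace.exp (s • τ) * X * NormedSpace.exp (-(s • τ))) * NormedSpace.exp (-b)) := by
      ext1 s
      have hc : Commute b (s • τ) := (show Commute b τ from D.tt_comm hb hτ).smul_right s
      rw [Rk_apply, exp_addc hc, neg_add_rev, exp_addc (hc.neg_left.neg_right.symm)]
      simp only [mul_assoc]
    have h4 : HasDerivAt (fun s : ℝ => Rk pk (b + s • τ) X)
        (pk (NormedSpace.exp b * (τ * X - X * τ) * NormedSpace.exp (-b))) 0 := by
      rw [h3]
      have h5 := ((conj_hasDerivAt τ (X : A) 0).const_mul (NormedSpace.exp b)).mul_const (NormedSpace.exp (-b))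
      have h6 := pk.hasFDerivAt.comp_hasDerivAt (0:ℝ) h5
      exact h6.congr_deriv (by simp)
    rw [h2.unique h4, ContinuousLinearMap.comp_apply, adp_apply,
      D.pk_conj hp hb (D.br_g (D.t_le hτ) (D.k_le X.2))]

/-- Derivative of the density. -/
theorem Dat.fderiv_dlt (D : Dat G T g t k ip) (hp : PkOK t k pk) {b τ : A} (hb : b ∈ t) (hτ : τ ∈ t)
    {N : k →L[ℝ] k} (hN : N ∘L (1 - Rk pk (-b)) = 1) :
    fderiv ℝ (dlt pk) b τ = dlt pk b * LinearMap.trace ℝ k ((N ∘L adp pk τ : k →L[ℝ] k) : k →ₗ[ℝ] k) := by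
  have hRd := D.Rk_deriv hp hb hτ
  have hRb := D.Rk_neg hp hb
  have hRb' : Rk pk (-b) ∘L Rk pk b = 1 := by simpa using D.Rk_neg hp (t.neg_mem hb)
  -- inverse of `1 - Rk b`
  have hinv : (-(N ∘L Rk pk (-b))) ∘L (1 - Rk pk (b + (0:ℝ) • τ)) = 1 := by
    rw [zero_smul, add_zero]
    refine Eq.trans ?_ hN
    ext1 X
    have := congrArg (fun L : k →L[ℝ] k => L X) hRb'
    simp only [ContinuousLinearMap.comp_apply, one_apply_eq_self] at this
    simp only [ContinuousLinearMap.comp_apply, neg_apply, sub_apply, one_apply_eq_self, map_sub, this]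
    abel
  have h7 := det_one_sub hRd hinv
  have h8 := line_comp (dlt pk) (dlt_contDiff pk) b τ
  have h9 : ((-(N ∘L Rk pk (-b))) ∘L (-(Rk pk b ∘L adp pk τ))) = N ∘L adp pk τ := by
    ext1 X
    have := congrArg (fun L : k →L[ℝ] k => L (adp pk τ X)) hRb'
    simp only [ContinuousLinearMap.comp_apply, one_apply_eq_self] at this
    simp [this]
  rw [h9] at h7
  have h10 := h8.unique h7
  simp only [zero_smul, add_zero] at h10
  exact h10

end
end WIF
end Part6

section Part7
open MeasureTheory Filter Topology
set_option linter.style.haveILetI false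
set_option linter.unusedSectionVars false

namespace WIF

section
variable {A : Type*} [NormedRing A] [NormedAlgebra ℝ A] [CompleteSpace A] [FiniteDimensional ℝ A]
variable {G T : Subgroup Aˣ} {g t k : Submodule ℝ A} {ip : A → A → ℝ} {pk : A →L[ℝ] k}

theorem secG (G : Subgroup Aˣ) : SecondCountableTopology G := by
  haveI : ProperSpace A := FiniteDimensional.proper ℝ A
  haveI : SecondCountableTopology Aˣ := (val_emb (A := A)).isEmbedding.secondCountableTopology
  exact (Topology.IsEmbedding.subtypeVal (p := (· ∈ G))).secondCountableTopology

/-- conjugate `u X u⁻¹`. -/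
def cA (u : G) (X : A) : A := ((u : Aˣ) : A) * X * (((u : Aˣ)⁻¹ : Aˣ) : A)

/-- conjugate `u⁻¹ X u`. -/
def cI (u : G) (X : A) : A := (((u : Aˣ)⁻¹ : Aˣ) : A) * X * ((u : Aˣ) : A)

theorem val_cont : Continuous fun u : G => ((u : Aˣ) : A) :=
  Units.continuous_val.comp continuous_subtype_val

theorem valinv_cont : Continuous fun u : G => (((u : Aˣ)⁻¹ : Aˣ) : A) :=
  Units.continuous_val.comp (continuous_inv.comp continuous_subtype_val)

theorem cA_cont : Continuous fun p : G × A => cA p.1 p.2 := by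
  unfold cA
  exact ((val_cont.comp continuous_fst).mul continuous_snd).mul (valinv_cont.comp continuous_fst)

theorem cI_cont : Continuous fun p : G × A => cI p.1 p.2 := by
  unfold cI
  exact ((valinv_cont.comp continuous_fst).mul continuous_snd).mul (val_cont.comp continuous_fst)

theorem cA_cont' {α : Type*} [TopologicalSpace α] {a : α → G} {c : α → A} (ha : Continuous a)
    (hc : Continuous c) : Continuous fun p => cA (a p) (c p) :=
  cA_cont.comp (ha.prodMk hc)

theorem cI_cont' {α : Type*} [TopologicalSpace α] {a : α → G} {c : α → A} (ha : Continuous a)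
    (hc : Continuous c) : Continuous fun p => cI (a p) (c p) :=
  cI_cont.comp (ha.prodMk hc)

theorem cA_deriv (u : G) (E M : A) (γ : ℝ → G) (hγ : ∀ s, (γ s : Aˣ) = expU (s • E)) (s : ℝ) :
    HasDerivAt (fun s => cA (u * γ s) M) (cA (u * γ s) (E * M - M * E)) s := by
  have h := ((conj_hasDerivAt E M s).const_mul ((u : Aˣ) : A)).mul_const (((u : Aˣ)⁻¹ : Aˣ) : A)
  have e : ∀ (s : ℝ) (M : A), cA (u * γ s) M = ((u : Aˣ) : A) *
      (NormedSpace.exp (s • E) * M * NormedSpace.exp (-(s • E))) * (((u : Aˣ)⁻¹ : Aˣ) : A) := by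
    intro s M
    simp [cA, hγ, mul_assoc]
  rw [e]
  exact h.congr_of_eventuallyEq (Eventually.of_forall fun s => e s M)

theorem cI_deriv (u : G) (E Y : A) (γ : ℝ → G) (hγ : ∀ s, (γ s : Aˣ) = expU (s • E)) (s : ℝ) :
    HasDerivAt (fun s => cI (u * γ s) Y) (cI (u * γ s) Y * E - E * cI (u * γ s) Y) s := by
  have h := conj_hasDerivAt (-E) ((((u : Aˣ)⁻¹ : Aˣ) : A) * Y * ((u : Aˣ) : A)) s
  have e : ∀ s, cI (u * γ s) Y = NormedSpace.exp (s • (-E)) * ((((u : Aˣ)⁻¹ : Aˣ) : A) * Y * ((u : Aˣ) : A))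
      * NormedSpace.exp (-(s • (-E))) := by
    intro s
    simp [cI, hγ, mul_assoc]
  have hc1 : NormedSpace.exp (s • (-E)) * E = E * NormedSpace.exp (s • (-E)) := by
    have : Commute (s • (-E)) E := (Commute.refl E).neg_left.smul_left s
    exact this.exp_left.eq
  have hc2 : NormedSpace.exp (-(s • (-E))) * E = E * NormedSpace.exp (-(s • (-E))) := by
    have : Commute (-(s • (-E))) E := ((Commute.refl E).neg_left.smul_left s).neg_left
    exact this.exp_left.eq
  refine (h.congr_deriv ?_).congr_of_eventuallyEq (Eventually.of_forall fun s => e s)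
  rw [e]
  generalize (((u : Aˣ)⁻¹ : Aˣ) : A) * Y * ((u : Aˣ) : A) = Z
  generalize NormedSpace.exp (-(s • (-E))) = q at *
  generalize NormedSpace.exp (s • (-E)) = p at *
  calc p * (-E * Z - Z * -E) * q = p * Z * (E * q) - (p * E) * Z * q := by noncomm_ring
    _ = _ := by rw [hc1, ← hc2]; noncomm_ring

variable [CompactSpace G] [MeasurableSpace G] [BorelSpace G] (μ : Measure G) [μ.IsHaarMeasure]
  [IsProbabilityMeasure μ]

theorem Dat.T2 (D : Dat G T g t k ip) (hp : PkOK t k pk) {F : A → ℂ} {F' : A → A →L[ℝ] ℂ}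
    (hF : ∀ h, HasFDerivAt F (F' h) h) (hF' : Continuous F') {b Y : A} (hb : b ∈ t)
    {N : k →L[ℝ] k} (hN : N ∘L (1 - Rk pk (-b)) = 1) (hN' : (1 - Rk pk (-b)) ∘L N = 1) :
    ∫ u : G, F' (cA u (NormedSpace.exp b)) (cA u (NormedSpace.exp b * pk (cI u Y))) ∂μ =
      ∫ u : G, ((LinearMap.trace ℝ k ((N ∘L adp pk (cI u Y - pk (cI u Y)) : k →L[ℝ] k) : k →ₗ[ℝ] k) : ℝ) : ℂ)
        * F (cA u (NormedSpace.exp b)) ∂μ := by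
  classical
  haveI := secG G
  have hFc : Continuous F := continuous_iff_continuousAt.2 fun h => (hF h).continuousAt
  let B := Module.finBasis ℝ k
  let ε : Fin (Module.finrank ℝ k) → (k →L[ℝ] ℝ) := fun i => LinearMap.toContinuousLinearMap (B.coord i)
  let Ab : k →L[ℝ] k := 1 - Rk pk (-b)
  let x := NormedSpace.exp b
  let Di : Fin (Module.finrank ℝ k) → G → ℂ := fun i u =>
    ((ε i (N (pk (cI u Y * B i - B i * cI u Y))) : ℝ) : ℂ) * F (cA u x) +
    ((ε i (N (pk (cI u Y))) : ℝ) : ℂ) * F' (cA u x) (cA u (B i * x - x * B i))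
  have c1 : Continuous fun u : G => cI u Y := cI_cont' continuous_id continuous_const
  have c2 : ∀ M : A, Continuous fun u : G => cA u M := fun M => cA_cont' continuous_id continuous_const
  have hDc : ∀ i, Continuous (Di i) := by
    intro i
    refine Continuous.add (Continuous.mul ?_ (hFc.comp (c2 _))) (Continuous.mul ?_ ?_)
    · refine Complex.continuous_ofReal.comp ((ε i).continuous.comp (N.continuous.comp (pk.continuous.comp ?_)))
      fun_prop
    · exact Complex.continuous_ofReal.comp ((ε i).continuous.comp (N.continuous.comp (pk.continuous.comp c1)))
    · exact (hF'.comp (c2 _)).clm_apply (c2 _)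
  have hi : ∀ i, ∫ u, Di i u ∂μ = 0 := by
    intro i
    have hmem : ∀ s : ℝ, expU (s • (B i : A)) ∈ G := fun s => (D.hg _).1 (D.k_le (B i).2) s
    let γ : ℝ → G := fun s => ⟨expU (s • (B i : A)), hmem s⟩
    have hγ : Continuous γ := by
      refine Continuous.subtype_mk (expU_continuous.comp ?_) _
      fun_prop
    refine inv_int μ (fun u => ((ε i (N (pk (cI u Y))) : ℝ) : ℂ) * F (cA u x)) (Di i) ?_ (hDc i) γ hγ ?_ ?_
    · refine Continuous.mul ?_ (hFc.comp (c2 _))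
      exact Complex.continuous_ofReal.comp ((ε i).continuous.comp (N.continuous.comp (pk.continuous.comp c1)))
    · ext; simp [γ]
    · intro u s
      have d1 := cI_deriv u (B i : A) Y γ (fun s => rfl) s
      have d2 := cA_deriv u (B i : A) x γ (fun s => rfl) s
      have d3 := ((ε i).comp (N.comp pk)).hasFDerivAt.comp_hasDerivAt s d1
      have d4 := (hF (cA (u * γ s) x)).comp_hasDerivAt s d2
      exact (d3.ofReal_comp.mul d4)
  have hsum : ∀ u : G, ∑ i, Di i u =
      ((LinearMap.trace ℝ k ((N ∘L adp pk (cI u Y - pk (cI u Y)) : k →L[ℝ] k) : k →ₗ[ℝ] k) : ℝ) : ℂ)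
        * F (cA u x) - F' (cA u x) (cA u (x * pk (cI u Y))) := by
    intro u
    rw [Finset.sum_add_distrib]
    have s1 : ∑ i, ((ε i (N (pk (cI u Y * B i - B i * cI u Y))) : ℝ) : ℂ) * F (cA u x) =
        ((LinearMap.trace ℝ k ((N ∘L adp pk (cI u Y - pk (cI u Y)) : k →L[ℝ] k) : k →ₗ[ℝ] k) : ℝ) : ℂ)
        * F (cA u x) := by
      rw [← Finset.sum_mul]
      congr 1
      have h0 : LinearMap.trace ℝ k ((N ∘L adp pk (cI u Y - pk (cI u Y)) : k →L[ℝ] k) : k →ₗ[ℝ] k)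
          = LinearMap.trace ℝ k ((N ∘L adp pk (cI u Y) : k →L[ℝ] k) : k →ₗ[ℝ] k) := by
        rw [map_sub, ContinuousLinearMap.comp_sub, ContinuousLinearMap.toLinearMap_sub, map_sub,
          D.tr_zero hp (t.neg_mem hb) hN hN', sub_zero]
      rw [h0, LinearMap.trace_eq_matrix_trace ℝ B, Matrix.trace, ← Complex.ofReal_sum]
      congr 1
      refine Finset.sum_congr rfl fun i _ => ?_
      simp [LinearMap.toMatrix_apply, ε, adp_apply]
    have s2 : ∑ i, ((ε i (N (pk (cI u Y))) : ℝ) : ℂ) * F' (cA u x) (cA u (B i * x - x * B i)) =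
        - F' (cA u x) (cA u (x * pk (cI u Y))) := by
      let L : k →ₗ[ℝ] ℂ :=
        { toFun := fun Z => F' (cA u x) (cA u ((Z : A) * x - x * Z))
          map_add' := by
            intro Z W
            rw [← map_add]; congr 1
            simp only [cA, Submodule.coe_add]; noncomm_ring
          map_smul' := by
            intro c Z
            simp only [RingHom.id_apply]
            rw [← map_smul]; congr 1
            simp [cA, smul_sub, mul_sub, sub_mul] }
      have h1 : L (N (pk (cI u Y))) = ∑ i, ((ε i (N (pk (cI u Y))) : ℝ) : ℂ) * F' (cA u x) (cA u (B i * x - x * B i)) := by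
        conv_lhs => rw [← B.sum_repr (N (pk (cI u Y))), map_sum]
        refine Finset.sum_congr rfl fun i _ => ?_
        rw [map_smul]
        simp [L, ε]
      rw [← h1]
      set Z := N (pk (cI u Y)) with hZ
      have h2 : Ab Z = pk (cI u Y) := by
        have := congrArg (fun L : k →L[ℝ] k => L (pk (cI u Y))) hN'
        exact this
      rw [← h2, ← map_neg]
      change F' (cA u x) (cA u ((Z : A) * x - x * Z)) = _
      congr 1
      have h3 : ((Ab Z : k) : A) = Z - NormedSpace.exp (-b) * Z * x := by
        have := D.Rk_coe hp (t.neg_mem hb) Z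
        rw [neg_neg] at this
        simp [Ab, this, x]
      rw [h3]
      have h4 : x * NormedSpace.exp (-b) = 1 := exp_mul_neg b
      have h5 : x * (Z - NormedSpace.exp (-b) * Z * x) = x * Z - Z * x := by
        calc _ = x * Z - (x * NormedSpace.exp (-b)) * Z * x := by noncomm_ring
          _ = _ := by rw [h4, one_mul]
      rw [h5]; simp only [cA]; noncomm_ring
    rw [s1, s2]; ring
  have hfin : ∫ u, ∑ i, Di i u ∂μ = 0 := by
    rw [integral_finsetSum _ fun i _ => cont_integrable μ (hDc i)]
    simp [hi]
  simp only [hsum] at hfin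
  rw [integral_sub] at hfin
  · exact (sub_eq_zero.1 hfin).symm
  · refine cont_integrable μ (Continuous.mul ?_ (hFc.comp (c2 _)))
    let l : A →ₗ[ℝ] ℝ :=
      { toFun := fun Z => LinearMap.trace ℝ k ((N ∘L adp pk Z : k →L[ℝ] k) : k →ₗ[ℝ] k)
        map_add' := by intro Z W; rw [map_add, ContinuousLinearMap.comp_add]; simp
        map_smul' := by intro c Z; rw [map_smul, ContinuousLinearMap.comp_smul]; simp }
    have hl : Continuous l := LinearMap.continuous_of_finiteDimensional l
    refine Complex.continuous_ofReal.comp (hl.comp ?_)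
    exact c1.sub (continuous_subtype_val.comp (pk.continuous.comp c1))
  · refine cont_integrable μ ((hF'.comp (c2 _)).clm_apply ?_)
    refine cA_cont' continuous_id ?_
    exact continuous_const.mul (continuous_subtype_val.comp (pk.continuous.comp c1))

end
end WIF
end Part7

section Part8
open MeasureTheory Filter Topology
set_option linter.style.haveILetI false
set_option linter.unusedSectionVars false

namespace WIF

section
variable {A : Type*} [NormedRing A] [NormedAlgebra ℝ A] [CompleteSpace A] [FiniteDimensional ℝ A]
variable {G T : Subgroup Aˣ} {g t k : Submodule ℝ A} {ip : A → A → ℝ} {pk : A →L[ℝ] k}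

theorem Dat.dlt_ne_iff (D : Dat G T g t k ip) (hp : PkOK t k pk) {b : A} (hb : b ∈ t) :
    dlt pk b ≠ 0 ↔ ∀ X ∈ k, NormedSpace.exp b * X * NormedSpace.exp (-b) = X → X = 0 := by
  constructor
  · intro h X hX hfix
    have hu : IsUnit (LinearMap.det ((1 - Rk pk b : k →L[ℝ] k) : k →ₗ[ℝ] k)) := isUnit_iff_ne_zero.2 h
    have hu2 := (LinearMap.isUnit_iff_isUnit_det _).2 hu
    have hker := (LinearMap.isUnit_iff_ker_eq_bot _).1 hu2
    have : (⟨X, hX⟩ : k) ∈ LinearMap.ker ((1 - Rk pk b : k →L[ℝ] k) : k →ₗ[ℝ] k) := by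
      rw [LinearMap.mem_ker]
      have h1 := D.Rk_coe hp hb ⟨X, hX⟩
      ext
      simp [h1, hfix]
    rw [hker, Submodule.mem_bot] at this
    exact congrArg Subtype.val this
  · intro h h0
    have hker := LinearMap.bot_lt_ker_of_det_eq_zero (f := ((1 - Rk pk b : k →L[ℝ] k) : k →ₗ[ℝ] k)) h0
    obtain ⟨x, hx, hx0⟩ := Submodule.exists_mem_ne_zero_of_ne_bot hker.ne'
    apply hx0
    have h1 : x - Rk pk b x = 0 := by simpa using hx
    have h2 := D.Rk_coe hp hb x
    rw [← sub_eq_zero.1 h1] at h2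
    exact Subtype.ext (h x x.2 h2.symm)

theorem Dat.dlt_nonneg (D : Dat G T g t k ip) (hp : PkOK t k pk) {b : A} (hb : b ∈ t) :
    0 ≤ dlt pk b := by
  have : dlt pk b = LinearMap.det (1 - (Rk pk b : k →ₗ[ℝ] k)) := rfl
  rw [this]
  refine det_nonneg_of _ (fun X : k => ip X X) ?_ ?_ ?_
  · intro c X
    have hX := D.k_le X.2
    simp only [Submodule.coe_smul]
    rw [D.smul _ _ hX _ (g.smul_mem _ hX), D.sym _ hX _ (g.smul_mem _ hX), D.smul _ _ hX _ hX]
    ring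
  · intro X hX
    exact D.pos X (D.k_le X.2) (by simpa using hX)
  · intro X
    have := D.Rk_coe hp hb X
    simp only [ContinuousLinearMap.coe_coe]
    rw [this]
    have h2 := D.Ad _ (D.exp_mem_G (D.t_le hb)) X (D.k_le X.2) X (D.k_le X.2)
    simpa using h2

theorem Dat.exists_N (D : Dat G T g t k ip) (hp : PkOK t k pk) {b : A} (hb : b ∈ t) (h : dlt pk b ≠ 0) :
    ∃ N : k →L[ℝ] k, N ∘L (1 - Rk pk (-b)) = 1 ∧ (1 - Rk pk (-b)) ∘L N = 1 := by
  have hinj : Function.Injective ((1 - Rk pk (-b) : k →L[ℝ] k) : k →ₗ[ℝ] k) := by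
    rw [← LinearMap.ker_eq_bot, LinearMap.ker_eq_bot']
    intro x hx
    have h1 : x - Rk pk (-b) x = 0 := by simpa using hx
    have h2 := D.Rk_coe hp (t.neg_mem hb) x
    rw [← sub_eq_zero.1 h1, neg_neg] at h2
    apply Subtype.ext
    apply (D.dlt_ne_iff hp hb).1 h x x.2
    calc NormedSpace.exp b * (x : A) * NormedSpace.exp (-b)
        = NormedSpace.exp b * (NormedSpace.exp (-b) * (x : A) * NormedSpace.exp b) * NormedSpace.exp (-b) := by rw [← h2]
      _ = (NormedSpace.exp b * NormedSpace.exp (-b)) * (x : A) * (NormedSpace.exp b * NormedSpace.exp (-b)) := by noncomm_ring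
      _ = x := by rw [exp_mul_neg]; simp
  let L := LinearEquiv.ofInjectiveEndo _ hinj
  refine ⟨LinearMap.toContinuousLinearMap (L.symm : k →ₗ[ℝ] k), ?_, ?_⟩
  · ext1 x
    exact L.symm_apply_apply x
  · ext1 x
    exact L.apply_symm_apply x

/-- coordinates on `t`. -/
noncomputable def Jc {d : ℕ} (e : Module.Basis (Fin d) ℝ t) : (Fin d → ℝ) →L[ℝ] A :=
  LinearMap.toContinuousLinearMap (t.subtype ∘ₗ e.equivFun.symm.toLinearMap)

theorem Jc_apply {d : ℕ} (e : Module.Basis (Fin d) ℝ t) (x : Fin d → ℝ) :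
    Jc e x = ((∑ i, x i • e i : t) : A) := by
  simp [Jc, Module.Basis.equivFun_symm_apply]

theorem Jc_mem {d : ℕ} (e : Module.Basis (Fin d) ℝ t) (x : Fin d → ℝ) : Jc e x ∈ t := by
  rw [Jc_apply]; exact Subtype.property _

/-- Properties of the coordinate alcove used in the integration by parts. -/
structure AlcOK (pk : A →L[ℝ] k) {d : ℕ} (e : Module.Basis (Fin d) ℝ t) (U : Set (Fin d → ℝ)) : Prop where
  op : IsOpen U
  bd : Bornology.IsBounded U
  ne : ∀ x ∈ U, dlt pk (Jc e x) ≠ 0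
  fr : ∀ x ∈ frontier U, dlt pk (Jc e x) = 0

theorem Dat.fderiv_zero (D : Dat G T g t k ip) (hp : PkOK t k pk) {b τ : A} (hb : b ∈ t) (hτ : τ ∈ t)
    (h0 : dlt pk b = 0) : fderiv ℝ (dlt pk) b τ = 0 := by
  have h1 := line_comp (dlt pk) (dlt_contDiff pk) b τ
  refine IsLocalMin.hasDerivAt_eq_zero (Eventually.of_forall fun s => ?_) h1
  simp only [zero_smul, add_zero, h0]
  exact D.dlt_nonneg hp (t.add_mem hb (t.smul_mem s hτ))

theorem dltf_cont (pk : A →L[ℝ] k) : Continuous (fderiv ℝ (dlt pk)) :=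
  (dlt_contDiff pk (n := 1)).continuous_fderiv (by norm_num)

theorem Dat.T1 (D : Dat G T g t k ip) (hp : PkOK t k pk) {F : A → ℂ} {F' : A → A →L[ℝ] ℂ}
    (hF : ∀ h, HasFDerivAt F (F' h) h) (hF' : Continuous F') {d : ℕ} (e : Module.Basis (Fin d) ℝ t)
    {U : Set (Fin d → ℝ)} (hU : AlcOK pk e U) (u : G) {τ : A} (hτ : τ ∈ t) :
    ∫ x in U, (F' (cA u (NormedSpace.exp (Jc e x))) (cA u (NormedSpace.exp (Jc e x) * τ)) * (dlt pk (Jc e x) : ℂ)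
      + F (cA u (NormedSpace.exp (Jc e x))) * (fderiv ℝ (dlt pk) (Jc e x) τ : ℂ)) = 0 := by
  have hFc : Continuous F := continuous_iff_continuousAt.2 fun h => (hF h).continuousAt
  obtain ⟨v, rfl⟩ : ∃ v, Jc e v = τ := ⟨e.equivFun ⟨τ, hτ⟩, by
    simp [Jc]⟩
  have ce : Continuous fun x : Fin d → ℝ => NormedSpace.exp (Jc e x) := exp_cont.comp (Jc e).continuous
  have c2 : Continuous fun x : Fin d → ℝ => cA u (NormedSpace.exp (Jc e x)) := cA_cont' continuous_const ce
  have cd : Continuous fun x : Fin d → ℝ => (dlt pk (Jc e x) : ℂ) :=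
    Complex.continuous_ofReal.comp ((dlt_contDiff pk (n := 0)).continuous.comp (Jc e).continuous)
  refine zero_ext volume hU.op hU.bd (v := v)
    (H := fun x => F (cA u (NormedSpace.exp (Jc e x))) * (dlt pk (Jc e x) : ℂ)) ?_ ?_ ?_ ?_ ?_
  · exact (hFc.comp c2).mul cd
  · refine Continuous.add (Continuous.mul ?_ cd) (Continuous.mul (hFc.comp c2) ?_)
    · exact (hF'.comp c2).clm_apply (cA_cont' continuous_const (ce.mul continuous_const))
    · refine Complex.continuous_ofReal.comp ?_
      exact ((dltf_cont pk).comp (Jc e).continuous).clm_apply continuous_const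
  · intro x
    unfold HasLineDerivAt
    simp only [map_add, map_smul]
    have hb := Jc_mem e x
    have hτ := Jc_mem e v
    have d1 := (line_comp (dlt pk) (dlt_contDiff pk) (Jc e x) (Jc e v)).ofReal_comp
    have d2 : HasDerivAt (fun s : ℝ => cA u (NormedSpace.exp (Jc e x + s • Jc e v)))
        (cA u (NormedSpace.exp (Jc e x) * Jc e v)) 0 := by
      have h3 := (((exp_hasDerivAt (Jc e v) 0).const_mul (NormedSpace.exp (Jc e x))).const_mul
        ((u : Aˣ) : A)).mul_const (((u : Aˣ)⁻¹ : Aˣ) : A)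
      refine (h3.congr_deriv ?_).congr_of_eventuallyEq (Eventually.of_forall fun s => ?_)
      · simp [cA]
      · simp only [cA]
        rw [exp_addc]
        exact (show Commute (Jc e x) (Jc e v) from D.tt_comm hb hτ).smul_right s
    have hF0 : HasFDerivAt F (F' (cA u (NormedSpace.exp (Jc e x))))
      (cA u (NormedSpace.exp (Jc e x + (0 : ℝ) • Jc e v))) := by simpa using hF _
    have d3 := hF0.comp_hasDerivAt (0 : ℝ) d2
    refine (d3.mul d1).congr_deriv ?_
    simp
  · intro x hx
    simp [hU.fr x hx]
  · intro x hx
    simp [hU.fr x hx, D.fderiv_zero hp (Jc_mem e x) (Jc_mem e v) (hU.fr x hx)]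

theorem prod_integrable {X : Type*} [TopologicalSpace X] [CompactSpace X] [SecondCountableTopology X]
    [T2Space X]
    [MeasurableSpace X] [BorelSpace X] (μ : Measure X) [IsFiniteMeasure μ] {d : ℕ}
    {U : Set (Fin d → ℝ)} (hb : Bornology.IsBounded U) {K : X × (Fin d → ℝ) → ℂ}
    (hK : Continuous K) : Integrable K (μ.prod (volume.restrict U)) := by
  have h1 : μ.prod (volume.restrict U) = (μ.prod volume).restrict (Set.univ ×ˢ U) := by
    rw [← Measure.prod_restrict, Measure.restrict_univ]
  rw [h1]
  have h2 : IsCompact ((Set.univ : Set X) ×ˢ closure U) := isCompact_univ.prod hb.isCompact_closure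
  exact (hK.continuousOn.integrableOn_compact h2).mono_set (Set.prod_mono_right subset_closure)

variable [CompactSpace G] [MeasurableSpace G] [BorelSpace G] (μ : Measure G) [μ.IsHaarMeasure]
  [IsProbabilityMeasure μ]

theorem Dat.main (D : Dat G T g t k ip) (hp : PkOK t k pk) {F : A → ℂ} {F' : A → A →L[ℝ] ℂ}
    (hF : ∀ h, HasFDerivAt F (F' h) h) (hF' : Continuous F') {d : ℕ} (e : Module.Basis (Fin d) ℝ t)
    {U : Set (Fin d → ℝ)} (hU : AlcOK pk e U) {Y : A} (hY : Y ∈ g) :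
    ∫ x in U, (∫ u : G, F' (cA u (NormedSpace.exp (Jc e x))) (cA u (NormedSpace.exp (Jc e x)) * Y) ∂μ)
      * (dlt pk (Jc e x) : ℂ) = 0 := by
  haveI := secG G
  have hFc : Continuous F := continuous_iff_continuousAt.2 fun h => (hF h).continuousAt
  have hcI : ∀ u : G, cI u Y ∈ g := fun u => D.Ad_g' u.2 hY
  have hτ : ∀ u : G, cI u Y - pk (cI u Y) ∈ t := fun u => D.sub_pk hp (hcI u)
  let K1 : G → (Fin d → ℝ) → ℂ := fun u x =>
    F' (cA u (NormedSpace.exp (Jc e x))) (cA u (NormedSpace.exp (Jc e x) * (cI u Y - pk (cI u Y)))) * (dlt pk (Jc e x) : ℂ)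
  let K2 : G → (Fin d → ℝ) → ℂ := fun u x =>
    F (cA u (NormedSpace.exp (Jc e x))) * (fderiv ℝ (dlt pk) (Jc e x) (cI u Y - pk (cI u Y)) : ℂ)
  have c1 : Continuous fun u : G => cI u Y := cI_cont' continuous_id continuous_const
  have cτ : Continuous fun u : G => cI u Y - pk (cI u Y) :=
    c1.sub (continuous_subtype_val.comp (pk.continuous.comp c1))
  have ce : Continuous fun x : Fin d → ℝ => NormedSpace.exp (Jc e x) := exp_cont.comp (Jc e).continuous
  have cc : Continuous fun p : G × (Fin d → ℝ) => cA p.1 (NormedSpace.exp (Jc e p.2)) :=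
    cA_cont' continuous_fst (ce.comp continuous_snd)
  have cd : Continuous fun x : Fin d → ℝ => (dlt pk (Jc e x) : ℂ) :=
    Complex.continuous_ofReal.comp ((dlt_contDiff pk (n := 0)).continuous.comp (Jc e).continuous)
  have hK1 : Continuous (Function.uncurry K1) := by
    refine Continuous.mul ((hF'.comp cc).clm_apply ?_) (cd.comp continuous_snd)
    exact cA_cont' continuous_fst ((ce.comp continuous_snd).mul (cτ.comp continuous_fst))
  have hK2 : Continuous (Function.uncurry K2) := by
    refine Continuous.mul (hFc.comp cc) (Complex.continuous_ofReal.comp ?_)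
    exact ((dltf_cont pk).comp ((Jc e).continuous.comp continuous_snd)).clm_apply (cτ.comp continuous_fst)
  have h0 : ∫ u : G, (∫ x in U, (K1 u x + K2 u x)) ∂μ = 0 := by
    simp only [K1, K2]
    simp only [fun u => D.T1 hp hF hF' e hU u (hτ u), integral_zero]
  have hsw : ∫ u : G, (∫ x in U, (K1 u x + K2 u x)) ∂μ = ∫ x in U, (∫ u : G, (K1 u x + K2 u x) ∂μ) :=
    integral_integral_swap (prod_integrable μ hU.bd (K := fun p => K1 p.1 p.2 + K2 p.1 p.2) (hK1.add hK2))
  rw [hsw] at h0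
  rw [← h0]
  refine setIntegral_congr_fun hU.op.measurableSet fun x hx => ?_
  have hb := Jc_mem e x
  obtain ⟨N, hN, hN'⟩ := D.exists_N hp hb (hU.ne x hx)
  have i1 : Integrable (fun u => K1 u x) μ := cont_integrable μ (hK1.comp (Continuous.prodMk_left x))
  have i2 : Integrable (fun u => K2 u x) μ := cont_integrable μ (hK2.comp (Continuous.prodMk_left x))
  rw [integral_add i1 i2]
  have e2 : ∫ u : G, K2 u x ∂μ = (∫ u : G, F' (cA u (NormedSpace.exp (Jc e x)))
      (cA u (NormedSpace.exp (Jc e x) * pk (cI u Y))) ∂μ) * (dlt pk (Jc e x) : ℂ) := by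
    rw [D.T2 μ hp hF hF' hb hN hN', ← integral_mul_const]
    refine integral_congr_ae (Eventually.of_forall fun u => ?_)
    simp only [K2]
    rw [D.fderiv_dlt hp hb (hτ u) hN]
    push_cast; ring
  have e1 : ∫ u : G, K1 u x ∂μ = (∫ u : G, F' (cA u (NormedSpace.exp (Jc e x)))
      (cA u (NormedSpace.exp (Jc e x) * (cI u Y - pk (cI u Y)))) ∂μ) * (dlt pk (Jc e x) : ℂ) := by
    rw [← integral_mul_const]
  have cb : Continuous fun u : G => cA u (NormedSpace.exp (Jc e x)) := cA_cont' continuous_id continuous_const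
  rw [e1, e2, ← add_mul, ← integral_add]
  · congr 1
    refine integral_congr_ae (Eventually.of_forall fun u => ?_)
    simp only
    rw [← map_add]
    congr 1
    have : (((u : Aˣ)⁻¹ : Aˣ) : A) * ((u : Aˣ) : A) = 1 := by simp
    have h2 : ((u : Aˣ) : A) * (((u : Aˣ)⁻¹ : Aˣ) : A) = 1 := by simp
    simp only [cA, cI]
    generalize ((pk _ : k) : A) = q
    calc _ = ((u : Aˣ) : A) * NormedSpace.exp (Jc e x) * (((u : Aˣ)⁻¹ : Aˣ) : A) * Y * (((u : Aˣ) : A) * (((u : Aˣ)⁻¹ : Aˣ) : A)) := by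
            rw [h2, mul_one]
      _ = _ := by noncomm_ring
  · exact cont_integrable μ ((hF'.comp cb).clm_apply (cA_cont' continuous_id (continuous_const.mul cτ)))
  · refine cont_integrable μ ((hF'.comp cb).clm_apply (cA_cont' continuous_id (continuous_const.mul ?_)))
    exact continuous_subtype_val.comp (pk.continuous.comp c1)

end
end WIF
end Part8

section Part9
open MeasureTheory Filter Topology
set_option linter.style.haveILetI false
set_option linter.unusedSectionVars false

namespace WIF

section
variable {A : Type*} [NormedRing A] [NormedAlgebra ℝ A] [CompleteSpace A] [FiniteDimensional ℝ A]
variable {G T : Subgroup Aˣ} {g t k : Submodule ℝ A} {ip : A → A → ℝ} {pk : A →L[ℝ] k}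

theorem Dat.exists_M (D : Dat G T g t k ip) (hp : PkOK t k pk) :
    ∃ (n : ℕ) (ι : EuclideanSpace ℝ (Fin n) →ₗ[ℝ] A)
      (M : A →L[ℝ] (EuclideanSpace ℝ (Fin n) →L[ℝ] EuclideanSpace ℝ (Fin n))),
      (∀ x, ι x ∈ k) ∧ (∀ x, ι x = 0 → x = 0) ∧ (∀ X ∈ k, ∃ x, ι x = X) ∧
      (∀ b ∈ t, ∀ x, ι (M b x) = b * ι x - ι x * b) ∧
      (∀ b ∈ t, ∀ x y, inner ℝ (M b x) y = - inner ℝ x (M b y)) := by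
  obtain ⟨n, φ, hφ⟩ := exists_iso (V := k) (fun X Y => ip X Y)
    (fun X Y => D.sym X (D.k_le X.2) Y (D.k_le Y.2))
    (fun X Y Z => D.add X (D.k_le X.2) Y (D.k_le Y.2) Z (D.k_le Z.2))
    (fun c X Y => D.smul c X (D.k_le X.2) Y (D.k_le Y.2))
    (fun X hX => D.pos X (D.k_le X.2) (fun h => hX (Subtype.ext h)))
  let ι : EuclideanSpace ℝ (Fin n) →L[ℝ] A := LinearMap.toContinuousLinearMap (k.subtype ∘ₗ φ.toLinearMap)
  let ψ : A →L[ℝ] EuclideanSpace ℝ (Fin n) :=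
    LinearMap.toContinuousLinearMap (φ.symm.toLinearMap ∘ₗ (pk : A →ₗ[ℝ] k))
  have hι : ∀ x, ι x = (φ x : A) := fun x => rfl
  have hιk : ∀ x, ι x ∈ k := fun x => (φ x).2
  have hψ : ∀ X, ψ X = φ.symm (pk X) := fun X => rfl
  have hιψ : ∀ X ∈ k, ι (ψ X) = X := by
    intro X hX
    rw [hι, hψ, LinearEquiv.apply_symm_apply]
    exact congrArg Subtype.val (hp.p1 ⟨X, hX⟩)
  have hψι : ∀ x, ψ (ι x) = x := by
    intro x
    rw [hψ, hι, hp.p1, LinearEquiv.symm_apply_apply]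
  have hin : ∀ X ∈ k, ∀ Y ∈ k, inner ℝ (ψ X) (ψ Y) = ip X Y := by
    intro X hX Y hY
    rw [← hφ]
    rw [← hι, ← hι, hιψ X hX, hιψ Y hY]
  let M : A →L[ℝ] (EuclideanSpace ℝ (Fin n) →L[ℝ] EuclideanSpace ℝ (Fin n)) :=
    (ContinuousLinearMap.compL ℝ _ _ _ ψ) ∘L ((ContinuousLinearMap.compL ℝ _ _ _).flip ι) ∘L
      (ContinuousLinearMap.mul ℝ A - (ContinuousLinearMap.mul ℝ A).flip)
  have hM : ∀ b x, M b x = ψ (b * ι x - ι x * b) := by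
    intro b x
    simp [M]
  refine ⟨n, ι.toLinearMap, M, fun x => (φ x).2, ?_, ?_, ?_, ?_⟩
  · intro x hx
    have : ψ (ι x) = 0 := by
      have : ι x = 0 := hx
      rw [this, map_zero]
    rwa [hψι] at this
  · intro X hX
    exact ⟨ψ X, hιψ X hX⟩
  · intro b hb x
    show ι (M b x) = _
    rw [hM, hιψ _ (D.br_k hb (hιk x))]
    rfl
  · intro b hb x y
    have hd : ∀ x, HasDerivAt (fun s : ℝ => ψ (NormedSpace.exp (s • b) * ι x * NormedSpace.exp (-(s • b))))
        (M b x) 0 := by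
      intro x
      have h1 := conj_hasDerivAt b (ι x) 0
      have h2 := (ψ.hasFDerivAt (x := NormedSpace.exp ((0:ℝ) • b) * ι x * NormedSpace.exp (-((0:ℝ) • b)))).comp_hasDerivAt 0 h1
      refine h2.congr_deriv ?_
      rw [hM]
      simp
    have h3 := (hd x).inner ℝ (hd y)
    have hc : (fun s : ℝ => inner ℝ (ψ (NormedSpace.exp (s • b) * ι x * NormedSpace.exp (-(s • b))))
        (ψ (NormedSpace.exp (s • b) * ι y * NormedSpace.exp (-(s • b))))) = fun _ => ip (ι x) (ι y) := by
      funext s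
      have hsb := t.smul_mem s hb
      rw [hin _ (D.Ad_k_exp hsb (hιk x)) _ (D.Ad_k_exp hsb (hιk y))]
      have := D.Ad _ (D.hT.1 (D.exp_mem_T hsb)) _ (D.k_le (hιk x)) _ (D.k_le (hιk y))
      simpa using this
    rw [hc] at h3
    have h4 := h3.unique (hasDerivAt_const _ _)
    simp only [zero_smul, neg_zero, NormedSpace.exp_zero, one_mul, mul_one, hψι] at h4
    linarith

/-- `t` acts faithfully on `k` (trivial centre). -/
def Faith (t k : Submodule ℝ A) : Prop := ∀ b ∈ t, (∀ X ∈ k, b * X = X * b) → b = 0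

theorem Dat.bdd (D : Dat G T g t k ip) (hp : PkOK t k pk) (hf : Faith t k) {P : Set t}
    (hP : IsPreconnected P) (hP0 : ∀ b ∈ P, dlt pk (b : A) ≠ 0) : ∃ C : ℝ, ∀ b ∈ P, ‖(b : A)‖ ≤ C := by
  obtain ⟨n, ι, M, h1, h2, h3, h4, h5⟩ := D.exists_M hp
  obtain rfl | ⟨b0, hb0⟩ := P.eq_empty_or_nonempty
  · exact ⟨0, by simp⟩
  have hbad : ∀ b ∈ t, ∀ m : ℕ, 0 < m → ‖M b‖ = m * (2 * Real.pi) → dlt pk b = 0 := by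
    intro b hb m hm he
    by_contra hne
    have hpos : 0 < ‖M b‖ := by rw [he]; have := Real.pi_pos; positivity
    obtain ⟨x, hx0, hx⟩ := anti_eig (M b) (h5 b hb) (norm_pos_iff.1 hpos)
    have := (D.dlt_ne_iff hp hb).1 hne (ι x) (h1 x)
      (per (ρ := ‖M b‖) (Y := ι (M b x)) hpos.ne' (h4 b hb x).symm (by rw [← h4 b hb, hx, map_smul])
        (by rw [he]; exact Real.cos_nat_mul_two_pi m)
        (by rw [he]; have := Real.sin_nat_mul_pi (2 * m); push_cast at this; rw [← this]; ring_nf))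
    exact hx0 (h2 x this)
  let Mt : t →ₗ[ℝ] (EuclideanSpace ℝ (Fin n) →L[ℝ] EuclideanSpace ℝ (Fin n)) := M.toLinearMap ∘ₗ t.subtype
  have hker : LinearMap.ker Mt = ⊥ := by
    rw [LinearMap.ker_eq_bot']
    intro b hb
    apply Subtype.ext
    refine hf b b.2 fun X hX => ?_
    obtain ⟨x, rfl⟩ := h3 X hX
    have h6 := h4 b b.2 x
    have : M (b : A) = 0 := hb
    rw [this] at h6
    simp only [zero_apply, map_zero] at h6
    exact (sub_eq_zero.1 h6.symm)
  obtain ⟨K, hK, hK'⟩ := LinearMap.exists_antilipschitzWith Mt hker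
  obtain ⟨m, hm⟩ := exists_nat_gt (‖M (b0 : A)‖ / (2 * Real.pi))
  have hpi : 0 < 2 * Real.pi := by positivity
  have hm' : ‖M (b0 : A)‖ < m * (2 * Real.pi) := by rwa [div_lt_iff₀ hpi] at hm
  have hm0 : 0 < m := by
    have : (0 : ℝ) < m := lt_of_le_of_lt (by positivity) hm
    exact_mod_cast this
  refine ⟨K * (m * (2 * Real.pi)), fun b hb => ?_⟩
  have hlt : ‖M (b : A)‖ < m * (2 * Real.pi) := by
    by_contra hge
    rw [not_lt] at hge
    have hcont : ContinuousOn (fun b : t => ‖M (b : A)‖) P := by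
      apply Continuous.continuousOn
      exact (M.continuous.comp continuous_subtype_val).norm
    obtain ⟨c, hc, hce⟩ := hP.intermediate_value hb0 hb hcont ⟨hm'.le, hge⟩
    exact hP0 c hc (hbad c c.2 m hm0 hce)
  have := hK'.le_mul_dist b 0
  simp only [map_zero, dist_zero_right] at this
  exact le_trans (this : ‖(b : A)‖ ≤ K * ‖M (b : A)‖) (mul_le_mul_of_nonneg_left hlt.le K.2)

/-- an alcove -/
def IsAlc (pk : A →L[ℝ] k) (P : Set t) : Prop :=
  ∃ b₀ : t, dlt pk (b₀ : A) ≠ 0 ∧ P = connectedComponentIn {b : t | dlt pk (b : A) ≠ 0} b₀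

theorem dlt_tcont (pk : A →L[ℝ] k) : Continuous fun b : t => dlt pk (b : A) :=
  ((dlt_contDiff pk (n := 0)).continuous).comp continuous_subtype_val

theorem IsAlc.ne {P : Set t} (h : IsAlc pk P) : ∀ b ∈ P, dlt pk (b : A) ≠ 0 := by
  obtain ⟨b0, h0, rfl⟩ := h
  exact fun b hb => connectedComponentIn_subset _ _ hb

theorem IsAlc.isOpen {P : Set t} (h : IsAlc pk P) : IsOpen P := by
  obtain ⟨b0, h0, rfl⟩ := h
  haveI : LocallyConnectedSpace t := by infer_instance
  exact IsOpen.connectedComponentIn (isOpen_ne_fun (dlt_tcont pk) continuous_const)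

theorem IsAlc.nonempty {P : Set t} (h : IsAlc pk P) : P.Nonempty := by
  obtain ⟨b0, h0, rfl⟩ := h
  exact ⟨b0, mem_connectedComponentIn h0⟩

theorem IsAlc.conn {P : Set t} (h : IsAlc pk P) : IsPreconnected P := by
  obtain ⟨b0, h0, rfl⟩ := h
  exact isPreconnected_connectedComponentIn

theorem IsAlc.mem_of_closure {P : Set t} (h : IsAlc pk P) {b : t} (hb : b ∈ closure P)
    (hne : dlt pk (b : A) ≠ 0) : b ∈ P := by
  obtain ⟨b0, h0, rfl⟩ := h
  set S := {b : t | dlt pk (b : A) ≠ 0}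
  have hs : IsPreconnected (insert b (connectedComponentIn S b0)) :=
    isPreconnected_connectedComponentIn.subset_closure (Set.subset_insert _ _)
      (Set.insert_subset hb subset_closure)
  have := hs.subset_connectedComponentIn (Set.mem_insert_of_mem _ (mem_connectedComponentIn h0))
    (F := S) (Set.insert_subset hne (connectedComponentIn_subset _ _))
  exact this (Set.mem_insert _ _)

/-- coordinate set of an alcove -/
def Ucoord {d : ℕ} (e : Module.Basis (Fin d) ℝ t) (P : Set t) : Set (Fin d → ℝ) :=
  {x : Fin d → ℝ | (∑ i, x i • e i) ∈ P}

/-- coordinate homeomorphism -/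
noncomputable def Jt {d : ℕ} (e : Module.Basis (Fin d) ℝ t) : (Fin d → ℝ) ≃L[ℝ] t :=
  e.equivFun.symm.toContinuousLinearEquiv

theorem Jt_apply {d : ℕ} (e : Module.Basis (Fin d) ℝ t) (x : Fin d → ℝ) : Jt e x = ∑ i, x i • e i := by
  simp [Jt, Module.Basis.equivFun_symm_apply]

theorem Jc_Jt {d : ℕ} (e : Module.Basis (Fin d) ℝ t) (x : Fin d → ℝ) : Jc e x = (Jt e x : A) := by
  rw [Jc_apply, Jt_apply]

theorem Ucoord_eq {d : ℕ} (e : Module.Basis (Fin d) ℝ t) (P : Set t) : Ucoord e P = Jt e ⁻¹' P := by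
  ext x; simp [Ucoord, Jt_apply]

theorem Dat.alcOK (D : Dat G T g t k ip) (hp : PkOK t k pk) (hf : Faith t k) {P : Set t}
    (h : IsAlc pk P) {d : ℕ} (e : Module.Basis (Fin d) ℝ t) : AlcOK pk e (Ucoord e P) where
  op := by rw [Ucoord_eq]; exact h.isOpen.preimage (Jt e).continuous
  bd := by
    obtain ⟨C, hC⟩ := D.bdd hp hf h.conn h.ne
    rw [Ucoord_eq]
    have : Bornology.IsBounded P := (isBounded_iff_forall_norm_le).2 ⟨C, fun b hb => hC b hb⟩
    have h2 := ((Jt e).symm : t →L[ℝ] (Fin d → ℝ)).lipschitz.isBounded_image this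
    refine h2.subset fun x hx => ⟨Jt e x, hx, by simp⟩
  ne := by
    intro x hx
    rw [Ucoord_eq] at hx
    rw [Jc_Jt]; exact h.ne _ hx
  fr := by
    intro x hx
    rw [Ucoord_eq] at hx
    by_contra hne
    rw [Jc_Jt] at hne
    have hop : IsOpen (Jt e ⁻¹' P) := h.isOpen.preimage (Jt e).continuous
    rw [hop.frontier_eq] at hx
    apply hx.2
    refine h.mem_of_closure ?_ hne
    exact (Jt e).continuous.closure_preimage_subset _ hx.1

end
end WIF
end Part9

section Part10
open MeasureTheory Filter Topology
set_option linter.style.haveILetI false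
set_option linter.unusedSectionVars false

namespace WIF

section
variable {G : Type*} [Group G] [TopologicalSpace G] [IsTopologicalGroup G] [CompactSpace G]
  [SimplyConnectedSpace G] [LocallyPathConnectedSpace G]

theorem char_trivial (χ : G → ℂ) (hc : Continuous χ) (h1 : χ 1 = 1) (hm : ∀ u v, χ (u * v) = χ u * χ v)
    (u : G) : χ u = 1 := by
  have hne : ∀ u, χ u ≠ 0 := by
    intro u h
    have := hm u u⁻¹
    rw [mul_inv_cancel, h1, h, zero_mul] at this
    exact one_ne_zero this
  obtain ⟨F, ⟨hF1, hF⟩, -⟩ := Complex.isCoveringMapOn_exp.existsUnique_continuousMap_lifts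
    (⟨χ, hc⟩ : C(G, ℂ)) (a₀ := 1) (e₀ := 0) (by simp [h1]) (fun a => hne a)
  have hF' : ∀ u, Complex.exp (F u) = χ u := fun u => congrFun hF u
  have hadd : ∀ u v, F (u * v) = F u + F v := by
    intro u v
    obtain ⟨E, -, hE⟩ := Complex.isCoveringMapOn_exp.existsUnique_continuousMap_lifts
      (⟨χ, hc⟩ : C(G, ℂ)) (a₀ := 1) (e₀ := 0) (by simp [h1]) (fun a => hne a)
    have e1 := hE F ⟨hF1, hF⟩
    have e2 := hE ⟨fun v => F (u * v) - F u, by fun_prop⟩ ⟨by simp, by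
      funext v
      simp only [Function.comp_apply, ContinuousMap.coe_mk]
      rw [Complex.exp_sub, hF', hF', hm]
      field_simp [hne u]⟩
    have := DFunLike.congr_fun (e1.trans e2.symm) v
    simp only [ContinuousMap.coe_mk] at this
    rw [this]; ring
  have hpow : ∀ n : ℕ, F (u ^ n) = n * F u := by
    intro n
    induction n with
    | zero => simp [hF1]
    | succ n ih => rw [pow_succ, hadd, ih]; push_cast; ring
  obtain ⟨C, hC⟩ := isCompact_univ.exists_bound_of_continuousOn (f := F) F.continuous.continuousOn
  have hz : F u = 0 := by
    by_contra h
    have hpos : 0 < ‖F u‖ := norm_pos_iff.2 h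
    obtain ⟨n, hn⟩ := exists_nat_gt (C / ‖F u‖)
    have := hC (u ^ n) trivial
    rw [hpow, norm_mul, Complex.norm_natCast] at this
    rw [div_lt_iff₀ hpos] at hn
    linarith
  rw [← hF', hz, Complex.exp_zero]
end

section
variable {N : ℕ}

/-- complexified matrix -/
noncomputable def cx (X : Matrix (Fin N) (Fin N) ℝ) : Matrix (Fin N) (Fin N) ℂ := X.map (algebraMap ℝ ℂ)

theorem cx_mul (X Y : Matrix (Fin N) (Fin N) ℝ) : cx (X * Y) = cx X * cx Y := Matrix.map_mul
theorem cx_one : cx (1 : Matrix (Fin N) (Fin N) ℝ) = 1 := by simp [cx]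

theorem nilp_of (Z : Matrix (Fin N) (Fin N) ℝ)
    (h : ∀ l : ℂ, Module.End.HasEigenvalue (Matrix.toLin' (cx Z)) l → l = 0) : IsNilpotent Z := by
  have hn : IsNilpotent (Matrix.toLin' (cx Z)) := by
    rw [LinearMap.isNilpotent_iff_charpoly]
    set p := LinearMap.charpoly (Matrix.toLin' (cx Z)) with hp
    have hmon : p.Monic := LinearMap.charpoly_monic _
    have hs := IsAlgClosed.splits p
    have hr : p.roots = Multiset.replicate (Multiset.card p.roots) 0 := by
      rw [Multiset.eq_replicate]
      refine ⟨rfl, fun l hl => h l ?_⟩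
      rw [Module.End.hasEigenvalue_iff_isRoot_charpoly]
      exact Polynomial.isRoot_of_mem_roots hl
    have h2 := hs.eq_prod_roots_of_monic hmon
    rw [hr] at h2
    simp only [Multiset.map_replicate, map_zero, sub_zero, Multiset.prod_replicate] at h2
    rw [h2]
    congr 1
    have := congrArg Polynomial.natDegree h2
    rw [Polynomial.natDegree_X_pow] at this
    rw [← this, LinearMap.charpoly_natDegree]
  obtain ⟨m, hm⟩ := hn
  refine ⟨m, ?_⟩
  rw [← Matrix.toLin'_pow] at hm
  have h3 : cx Z ^ m = 0 := by
    exact (Matrix.toLin' (R := ℂ)).map_eq_zero_iff.1 hm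
  have h4 : cx (Z ^ m) = 0 := by
    rw [← h3]
    exact (map_pow (RingHom.mapMatrix (algebraMap ℝ ℂ)) Z m)
  ext i j
  have := congrFun (congrFun h4 i) j
  simpa [cx] using this

theorem zero_of_nilp {A : Type*} [NormedRing A] [NormedAlgebra ℝ A] [CompleteSpace A] {Z : A}
    (hn : IsNilpotent Z) {C : ℝ} (hb : ∀ s : ℝ, ‖NormedSpace.exp (s • Z)‖ ≤ C) : Z = 0 := by
  by_contra hZ
  obtain ⟨m, hm0, hm1⟩ : ∃ m, Z ^ (m + 1) ≠ 0 ∧ Z ^ (m + 2) = 0 := by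
    classical
    have hex : ∃ n, Z ^ n = 0 := hn
    have h0 := Nat.find_spec hex
    have hmin := fun m => Nat.find_min hex (m := m)
    set n := Nat.find hex
    match hn' : n with
    | 0 => 
      exact absurd (by rw [← mul_one Z, ← pow_zero Z, h0, mul_zero]) hZ
    | 1 => 
      exact absurd (by simpa using h0) hZ
    | m + 2 => 
      exact ⟨m, hmin _ (by omega), h0⟩
  have hd : ∀ s : ℝ, HasDerivAt (fun s : ℝ => NormedSpace.exp (s • (-Z)) * (Z ^ m + s • Z ^ (m + 1))) 0 s := by
    intro s
    have h1 := exp_hasDerivAt (-Z) s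
    have h2 : HasDerivAt (fun s : ℝ => Z ^ m + s • Z ^ (m + 1)) (Z ^ (m + 1)) s := by
      simpa using ((hasDerivAt_id s).smul_const (Z ^ (m + 1))).const_add (Z ^ m)
    refine (h1.mul h2).congr_deriv ?_
    have e1 : Z * Z ^ m = Z ^ (m + 1) := (pow_succ' Z m).symm
    have e2 : Z * Z ^ (m + 1) = 0 := by rw [← pow_succ', hm1]
    rw [mul_assoc, neg_mul, mul_add, mul_smul_comm, e1, e2]
    simp
  have hconst : ∀ s : ℝ, NormedSpace.exp (s • (-Z)) * (Z ^ m + s • Z ^ (m + 1)) = Z ^ m := by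
    intro s
    have := is_const_of_deriv_eq_zero (fun s => (hd s).differentiableAt) (fun s => (hd s).deriv) s 0
    simpa using this
  have hs : ∀ s : ℝ, Z ^ m + s • Z ^ (m + 1) = NormedSpace.exp (s • Z) * Z ^ m := by
    intro s
    have h := hconst s
    rw [smul_neg] at h
    calc _ = (NormedSpace.exp (s • Z) * NormedSpace.exp (-(s • Z))) * (Z ^ m + s • Z ^ (m + 1)) := by
          rw [exp_mul_neg, one_mul]
      _ = _ := by rw [mul_assoc, h]
  have hpos : 0 < ‖Z ^ (m + 1)‖ := norm_pos_iff.2 hm0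
  obtain ⟨n, hn⟩ := exists_nat_gt ((C * ‖Z ^ m‖ + ‖Z ^ m‖) / ‖Z ^ (m + 1)‖)
  rw [div_lt_iff₀ hpos] at hn
  have h3 : ‖(n : ℝ) • Z ^ (m + 1)‖ ≤ C * ‖Z ^ m‖ + ‖Z ^ m‖ := by
    have e : (n : ℝ) • Z ^ (m + 1) = NormedSpace.exp ((n : ℝ) • Z) * Z ^ m - Z ^ m := by rw [← hs]; abel
    rw [e]
    refine (norm_sub_le _ _).trans ?_
    gcongr
    exact (norm_mul_le _ _).trans (mul_le_mul_of_nonneg_right (hb _) (norm_nonneg _))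
  rw [norm_smul, Real.norm_natCast] at h3
  linarith

end

section
variable {N : ℕ} {A : Type*} [NormedRing A] [NormedAlgebra ℝ A] [CompleteSpace A] [FiniteDimensional ℝ A]
  (c : A →ₐ[ℝ] Matrix (Fin N) (Fin N) ℝ)

theorem cx_exp_eig (Z : A) {l : ℂ} {v : Fin N → ℂ} (hv : (cx (c Z)).mulVec v = l • v) (s : ℝ) :
    (cx (c (NormedSpace.exp (s • Z)))).mulVec v = Complex.exp (s * l) • v := by
  let L0 : A →ₗ[ℝ] (Fin N → ℂ) :=
    { toFun := fun X => (cx (c X)).mulVec v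
      map_add' := by
        intro X Y
        have : cx (c (X + Y)) = cx (c X) + cx (c Y) := by ext; simp [cx]
        rw [this, Matrix.add_mulVec]
      map_smul' := by
        intro r X
        have : cx (c (r • X)) = r • cx (c X) := by ext; simp [cx]
        rw [this, Matrix.smul_mulVec]; rfl }
  let L := LinearMap.toContinuousLinearMap L0
  have hL : ∀ X, L X = (cx (c X)).mulVec v := fun X => rfl
  have hw : ∀ s : ℝ, HasDerivAt (fun s : ℝ => L (NormedSpace.exp (s • Z))) (l • L (NormedSpace.exp (s • Z))) s := by
    intro s
    have h1 := exp_hasDerivAt Z s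
    have h2 := (L.hasFDerivAt (x := NormedSpace.exp (s • Z))).comp_hasDerivAt s h1
    refine h2.congr_deriv ?_
    rw [hL, hL, map_mul, cx_mul, ← Matrix.mulVec_mulVec, hv, Matrix.mulVec_smul]
  have he : ∀ s : ℝ, HasDerivAt (fun s : ℝ => Complex.exp (-(s * l))) (Complex.exp (-(s * l)) * (-l)) s := by
    intro s
    have h0 : HasDerivAt (fun s : ℝ => -((s : ℂ) * l)) (-l) s := by
      have h1 : HasDerivAt (fun s : ℝ => ((s : ℂ) * l)) l s := by
        simpa using ((Complex.ofRealCLM.hasDerivAt (x := s)).mul_const l)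
      exact h1.neg
    exact h0.cexp
  have hq : ∀ s : ℝ, HasDerivAt (fun s : ℝ => Complex.exp (-(s * l)) • L (NormedSpace.exp (s • Z))) 0 s := by
    intro s
    refine ((he s).smul (hw s)).congr_deriv ?_
    rw [smul_smul, ← add_smul]
    simp
  have := is_const_of_deriv_eq_zero (fun s => (hq s).differentiableAt) (fun s => (hq s).deriv) s 0
  simp only [Complex.ofReal_zero, zero_mul, neg_zero, Complex.exp_zero, zero_smul, NormedSpace.exp_zero, one_smul,
    hL, map_one, cx_one, Matrix.one_mulVec] at this
  nth_rewrite 2 [← this]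
  rw [smul_smul, ← Complex.exp_add]
  simp

theorem centre_trivial (G : Subgroup Aˣ) [CompactSpace G] [SimplyConnectedSpace G]
    [LocallyPathConnectedSpace G] (hci : Function.Injective c) (Z : A) (hZ : ∀ s : ℝ, expU (s • Z) ∈ G)
    (hc : ∀ u ∈ G, (u : A) * Z = Z * u) : Z = 0 := by
  have hcont : Continuous fun u : G => ((u : Aˣ) : A) :=
    Units.continuous_val.comp continuous_subtype_val
  obtain ⟨C, hC⟩ := isCompact_univ.exists_bound_of_continuousOn hcont.continuousOn
  refine zero_of_nilp (C := C) ((IsNilpotent.map_iff hci).1 (nilp_of (c Z) fun l hl => ?_)) fun s => by simpa using hC ⟨_, hZ s⟩ trivial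
  set V := Module.End.eigenspace (Matrix.toLin' (cx (c Z))) l with hV
  have hmem : ∀ v, v ∈ V ↔ (cx (c Z)).mulVec v = l • v := by
    intro v
    rw [hV, Module.End.mem_eigenspace_iff, Matrix.toLin'_apply]
  have hinv : ∀ u : G, ∀ v ∈ V, Matrix.toLin' (cx (c ((u : Aˣ) : A))) v ∈ V := by
    intro u v hv
    rw [hmem] at *
    rw [Matrix.toLin'_apply, Matrix.mulVec_mulVec, ← cx_mul, ← map_mul, ← hc _ u.2, map_mul, cx_mul, ← Matrix.mulVec_mulVec, hv,
      Matrix.mulVec_smul]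
  let R : G → Module.End ℂ V := fun u => (Matrix.toLin' (cx (c ((u : Aˣ) : A)))).restrict (hinv u)
  have hR : ∀ u v, (R u v : Fin N → ℂ) = (cx (c ((u : Aˣ) : A))).mulVec v := by
    intro u v; rfl
  let χ : G → ℂ := fun u => LinearMap.det (R u)
  have hχ1 : χ 1 = 1 := by
    have : R 1 = 1 := by
      ext v : 2
      rw [hR]
      simp [cx_one]
    simp only [χ, this, map_one]
  have hχm : ∀ u v, χ (u * v) = χ u * χ v := by
    intro u v
    have : R (u * v) = R u * R v := by
      ext w : 2
      rw [hR, Module.End.mul_apply, hR, hR, Matrix.mulVec_mulVec, ← cx_mul, ← map_mul]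
      rfl
    simp only [χ, this, map_mul]
  have hχc : Continuous χ := by
    let bs := Module.finBasis ℂ V
    have : χ = fun u => (LinearMap.toMatrix bs bs (R u)).det := by
      funext u
      rw [LinearMap.det_toMatrix]
    rw [this]
    refine Continuous.matrix_det (continuous_pi fun i => continuous_pi fun j => ?_)
    simp only [LinearMap.toMatrix_apply]
    have h1 : Continuous fun v : V => bs.repr v i := by
      exact LinearMap.continuous_of_finiteDimensional (bs.coord i)
    refine h1.comp (Continuous.subtype_mk ?_ _)
    show Continuous fun u : G => (cx (c ((u : Aˣ) : A))).mulVec (bs j : Fin N → ℂ)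
    refine Continuous.matrix_mulVec ?_ continuous_const
    have hcc : Continuous c := LinearMap.continuous_of_finiteDimensional c.toLinearMap
    exact (hcc.comp hcont).matrix_map Complex.continuous_ofReal
  have hχ := char_trivial χ hχc hχ1 hχm
  have hexp : ∀ s : ℝ, Complex.exp (s * l) ^ (Module.finrank ℂ V) = 1 := by
    intro s
    have h2 : R ⟨_, hZ s⟩ = Complex.exp (s * l) • (1 : Module.End ℂ V) := by
      ext v : 2
      rw [hR]
      exact cx_exp_eig c Z ((hmem v).1 v.2) s
    have h3 := hχ ⟨_, hZ s⟩
    simp only [χ, h2, LinearMap.det_smul, map_one, mul_one] at h3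
    exact h3
  have hd : 0 < Module.finrank ℂ V := by
    rw [Module.finrank_pos_iff]
    exact Submodule.nontrivial_iff_ne_bot.2 hl
  set d := Module.finrank ℂ V
  have h5 : HasDerivAt (fun s : ℝ => Complex.exp (s * (d * l))) (d * l) 0 := by
    have h0 : HasDerivAt (fun s : ℝ => ((s : ℂ) * (d * l))) (d * l) (0 : ℝ) := by
      simpa using ((Complex.ofRealCLM.hasDerivAt (x := (0:ℝ))).mul_const ((d:ℂ) * l))
    simpa using h0.cexp
  have h6 : (fun s : ℝ => Complex.exp (s * (d * l))) = fun _ => 1 := by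
    funext s
    rw [← hexp s, ← Complex.exp_nat_mul]
    ring_nf
  rw [h6] at h5
  have h7 := h5.unique (hasDerivAt_const _ _)
  rcases mul_eq_zero.1 h7 with h | h
  · exact absurd (by exact_mod_cast h) hd.ne'
  · exact h

theorem Dat.faith (hci : Function.Injective c) {G T : Subgroup Aˣ} {g t k : Submodule ℝ A} {ip : A → A → ℝ} (D : Dat G T g t k ip)
    [SimplyConnectedSpace G] : Faith t k := by
  intro b hb hbk
  haveI : CompactSpace G := isCompact_iff_compactSpace.1 D.cG
  haveI := locPath G D.closedG g D.hg
  refine centre_trivial c G hci b (fun s => (D.hg b).1 (D.t_le hb) s) ?_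
  have hbg : ∀ X ∈ g, b * X = X * b := by
    intro X hX
    obtain ⟨τ, hτ, hk⟩ := D.decomp hX
    have h1 := hbk _ hk
    have h2 := D.tt_comm hb hτ
    rw [mul_sub, sub_mul, h2] at h1
    exact sub_left_injective h1
  let K : Subgroup Aˣ :=
    { carrier := {u | (u : A) * b = b * u}
      mul_mem' := by
        intro u v hu hv
        simp only [Set.mem_ofPred_eq, Units.val_mul] at *
        rw [mul_assoc, hv, ← mul_assoc, hu, mul_assoc]
      one_mem' := by simp
      inv_mem' := by
        intro u hu
        simp only [Set.mem_ofPred_eq] at *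
        have : Commute (u : A) b := hu
        exact this.units_inv_left.eq }
  have := gen G D.closedG D.conG g D.hg K (fun X hX => by
    have : Commute X b := (hbg X hX).symm
    exact this.exp_left.eq)
  exact fun u hu => this hu

end
end WIF
end Part10

section Part11
open MeasureTheory Filter Topology
set_option linter.style.haveILetI false
set_option linter.unusedSectionVars false

namespace WIF

section
variable {A : Type*} [NormedRing A] [NormedAlgebra ℝ A] [CompleteSpace A] [FiniteDimensional ℝ A]
variable {G T : Subgroup Aˣ} {g t k : Submodule ℝ A} {ip : A → A → ℝ} {pk : A →L[ℝ] k}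

/-- exponential chart of the torus with values in `G` -/
noncomputable def expG (D : Dat G T g t k ip) {d : ℕ} (e : Module.Basis (Fin d) ℝ t) (x : Fin d → ℝ) : G :=
  ⟨expU (Jc e x), D.exp_mem_G (D.t_le (Jc_mem e x))⟩

theorem expG_cont (D : Dat G T g t k ip) {d : ℕ} (e : Module.Basis (Fin d) ℝ t) : Continuous (expG D e) :=
  Continuous.subtype_mk (expU_continuous.comp (Jc e).continuous) _

theorem expG_val (D : Dat G T g t k ip) {d : ℕ} (e : Module.Basis (Fin d) ℝ t) (x : Fin d → ℝ) :
    ((expG D e x : Aˣ) : A) = NormedSpace.exp (Jc e x) := rfl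

theorem conj_val (u h : G) : (((u * h * u⁻¹ : G) : Aˣ) : A) = cA u ((h : Aˣ) : A) := rfl

theorem bdG [CompactSpace G] : ∃ C : ℝ, ∀ u : G, ‖((u : Aˣ) : A)‖ ≤ C := by
  obtain ⟨C, hC⟩ := isCompact_univ.exists_bound_of_continuousOn (val_cont (G := G)).continuousOn
  exact ⟨C, fun u => hC u trivial⟩

variable [CompactSpace G] [MeasurableSpace G] [BorelSpace G] (μ : Measure G) [μ.IsHaarMeasure]
  [IsProbabilityMeasure μ]

/-- density measure on coordinates -/
noncomputable def dm (pk : A →L[ℝ] k) {d : ℕ} (e : Module.Basis (Fin d) ℝ t) (U : Set (Fin d → ℝ)) :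
    Measure (Fin d → ℝ) :=
  (volume.restrict U).withDensity fun x => ENNReal.ofReal (dlt pk (Jc e x))

/-- the pushed forward measure -/
noncomputable def nuM (D : Dat G T g t k ip) (pk : A →L[ℝ] k) {d : ℕ} (e : Module.Basis (Fin d) ℝ t)
    (U : Set (Fin d → ℝ)) : Measure G :=
  Measure.map (fun p : G × (Fin d → ℝ) => p.1 * expG D e p.2 * p.1⁻¹) (μ.prod (dm pk e U))

theorem dltJ_cont (pk : A →L[ℝ] k) {d : ℕ} (e : Module.Basis (Fin d) ℝ t) :
    Continuous fun x => dlt pk (Jc e x) :=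
  ((dlt_contDiff pk (n := 0)).continuous).comp (Jc e).continuous

theorem cont_intOn {d : ℕ} {U : Set (Fin d → ℝ)} (hb : Bornology.IsBounded U) {E : Type*} [NormedAddCommGroup E]
    {K : (Fin d → ℝ) → E} (hK : Continuous K) : IntegrableOn K U :=
  (hK.continuousOn.integrableOn_compact hb.isCompact_closure).mono_set subset_closure

theorem dm_fin {d : ℕ} {e : Module.Basis (Fin d) ℝ t} {U : Set (Fin d → ℝ)} (hU : AlcOK pk e U) :
    IsFiniteMeasure (dm pk e U) :=
  isFiniteMeasure_withDensity_ofReal (cont_intOn hU.bd (dltJ_cont pk e)).2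

theorem dm_int (D : Dat G T g t k ip) (hp : PkOK t k pk) {d : ℕ} {e : Module.Basis (Fin d) ℝ t}
    {U : Set (Fin d → ℝ)} (h : (Fin d → ℝ) → ℂ) :
    ∫ x, h x ∂(dm pk e U) = ∫ x in U, h x * (dlt pk (Jc e x) : ℂ) := by
  rw [dm, integral_withDensity_eq_integral_toReal_smul]
  · refine integral_congr_ae (Eventually.of_forall fun x => ?_)
    simp only
    rw [ENNReal.toReal_ofReal (D.dlt_nonneg hp (Jc_mem e x)), mul_comm]
    simp
  · exact (dltJ_cont pk e).measurable.ennreal_ofReal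
  · exact Eventually.of_forall fun x => ENNReal.ofReal_lt_top

theorem nu_cont (D : Dat G T g t k ip) {d : ℕ} (e : Module.Basis (Fin d) ℝ t) :
    Continuous (fun p : G × (Fin d → ℝ) => p.1 * expG D e p.2 * p.1⁻¹) :=
  (continuous_fst.mul ((expG_cont D e).comp continuous_snd)).mul continuous_fst.inv

theorem nu_fin (D : Dat G T g t k ip) {d : ℕ} {e : Module.Basis (Fin d) ℝ t} {U : Set (Fin d → ℝ)}
    (hU : AlcOK pk e U) : IsFiniteMeasure (nuM μ D pk e U) := by
  haveI := dm_fin hU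
  unfold nuM
  infer_instance

theorem nu_int (D : Dat G T g t k ip) (hp : PkOK t k pk) {d : ℕ} {e : Module.Basis (Fin d) ℝ t}
    {U : Set (Fin d → ℝ)} (hU : AlcOK pk e U) {f : G → ℂ} (hf : Continuous f) :
    ∫ h, f h ∂(nuM μ D pk e U) =
      ∫ x in U, (∫ u : G, f (u * expG D e x * u⁻¹) ∂μ) * (dlt pk (Jc e x) : ℂ) := by
  haveI := secG G
  haveI := dm_fin hU
  have hc := hf.comp (nu_cont D e)
  rw [nuM, integral_map (nu_cont D e).measurable.aemeasurable hf.aestronglyMeasurable, ← dm_int D hp,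
    integral_prod_symm]
  obtain ⟨C, hC⟩ := isCompact_univ.exists_bound_of_continuousOn hf.continuousOn
  exact Integrable.of_bound hc.aestronglyMeasurable C (Eventually.of_forall fun p => hC _ trivial)

theorem nu_exp (D : Dat G T g t k ip) (hp : PkOK t k pk) {d : ℕ} {e : Module.Basis (Fin d) ℝ t}
    {U : Set (Fin d → ℝ)} (hU : AlcOK pk e U) {Y : A} (hY : Y ∈ g) (L : A →L[ℝ] ℝ) :
    ∫ h : G, Complex.exp ((L (((h : Aˣ) : A) * NormedSpace.exp Y) : ℂ) * Complex.I) ∂(nuM μ D pk e U) =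
    ∫ h : G, Complex.exp ((L ((h : Aˣ) : A) : ℂ) * Complex.I) ∂(nuM μ D pk e U) := by
  haveI := nu_fin μ D hU
  set ν := nuM μ D pk e U
  obtain ⟨C, hC⟩ := bdG (G := G)
  let Φ : ℝ → G → ℂ := fun s h => Complex.exp ((L (((h : Aˣ) : A) * NormedSpace.exp (s • Y)) : ℂ) * Complex.I)
  let Φ' : ℝ → G → ℂ := fun s h => Φ s h * ((L (((h : Aˣ) : A) * NormedSpace.exp (s • Y) * Y) : ℂ) * Complex.I)
  have cΦ : ∀ s, Continuous (Φ s) := by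
    intro s
    have := val_cont (G := G)
    refine Complex.continuous_exp.comp ((Complex.continuous_ofReal.comp (L.continuous.comp ?_)).mul continuous_const)
    exact this.mul continuous_const
  have cΦ' : ∀ s, Continuous (Φ' s) := by
    intro s
    have := val_cont (G := G)
    refine (cΦ s).mul ((Complex.continuous_ofReal.comp (L.continuous.comp ?_)).mul continuous_const)
    exact (this.mul continuous_const).mul continuous_const
  have hD : ∀ s, HasDerivAt (fun s => ∫ h, Φ s h ∂ν) (∫ h, Φ' s h ∂ν) s := by
    intro s
    refine (hasDerivAt_integral_of_dominated_loc_of_deriv_le (s := Set.univ) (bound := fun _ => ‖L‖ * (C * ‖Y‖))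
      univ_mem (Eventually.of_forall fun s => (cΦ s).aestronglyMeasurable) (cont_integrable ν (cΦ s))
      (cΦ' s).aestronglyMeasurable ?_ (integrable_const _) ?_).2
    · refine Eventually.of_forall fun h s _ => ?_
      have h1 : ‖Φ s h‖ = 1 := Complex.norm_exp_ofReal_mul_I _
      simp only [Φ']
      rw [norm_mul, h1, one_mul, norm_mul, Complex.norm_I, mul_one, Complex.norm_real]
      refine (L.le_opNorm _).trans ?_
      gcongr
      refine (norm_mul_le _ _).trans ?_
      gcongr
      exact hC (h * ⟨_, (D.hg Y).1 hY s⟩)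
    · refine Eventually.of_forall fun h s _ => ?_
      have h1 := (exp_hasDerivAt Y s).const_mul ((h : Aˣ) : A)
      have h2 := (L.hasFDerivAt (x := ((h : Aˣ) : A) * NormedSpace.exp (s • Y))).comp_hasDerivAt s h1
      have h3 := (h2.ofReal_comp).mul_const Complex.I
      refine h3.cexp.congr_deriv ?_
      simp only [Φ', Φ, mul_assoc, Function.comp_apply]
  have h0 : ∀ s, ∫ h, Φ' s h ∂ν = 0 := by
    intro s
    rw [nu_int μ D hp hU (cΦ' s)]
    let R : A →L[ℝ] A := (ContinuousLinearMap.mul ℝ A).flip (NormedSpace.exp (s • Y))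
    have hR : ∀ h, R h = h * NormedSpace.exp (s • Y) := fun h => rfl
    let LC : A →L[ℝ] ℂ := Complex.ofRealCLM ∘L L ∘L R
    have hLC : ∀ h, LC h = (L (h * NormedSpace.exp (s • Y)) : ℂ) := fun h => rfl
    have hF : ∀ h : A, HasFDerivAt (fun h => Complex.exp (LC h * Complex.I))
      (Complex.exp (LC h * Complex.I) • (Complex.I • LC)) h := by
      intro h
      exact (LC.hasFDerivAt.mul_const Complex.I).cexp
    have hF' : Continuous fun h : A => (Complex.exp (LC h * Complex.I) • (Complex.I • LC) : A →L[ℝ] ℂ) := by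
      fun_prop
    have key := D.main μ hp hF hF' e hU hY
    rw [← key]
    refine setIntegral_congr_fun hU.op.measurableSet fun x hx => ?_
    congr 1
    refine integral_congr_ae (Eventually.of_forall fun u => ?_)
    simp only [Φ', Φ, conj_val, expG_val]
    simp only [smul_apply, smul_eq_mul, hLC]
    have : Commute (NormedSpace.exp (s • Y)) Y := ((Commute.refl Y).smul_left s).exp_left
    rw [mul_assoc _ (NormedSpace.exp (s • Y)) Y, this.eq, ← mul_assoc _ Y (NormedSpace.exp (s • Y))]
    ring
  have hconst := is_const_of_deriv_eq_zero (fun s => (hD s).differentiableAt)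
    (fun s => by rw [(hD s).deriv, h0]) 1 0
  simpa [Φ] using hconst

theorem nu_inv_exp (D : Dat G T g t k ip) (hp : PkOK t k pk) {d : ℕ} {e : Module.Basis (Fin d) ℝ t}
    {U : Set (Fin d → ℝ)} (hU : AlcOK pk e U) {Y : A} (hY : Y ∈ g) :
    Measure.map (fun h : G => h * ⟨expU Y, D.exp_mem_G hY⟩) (nuM μ D pk e U) = nuM μ D pk e U := by
  haveI := nu_fin μ D hU
  set ν := nuM μ D pk e U with hν
  letI : MeasurableSpace A := borel A
  haveI : BorelSpace A := ⟨rfl⟩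
  haveI : SecondCountableTopology A := by
    haveI : ProperSpace A := FiniteDimensional.proper ℝ A
    infer_instance
  have hv : Continuous fun u : G => ((u : Aˣ) : A) := val_cont
  have hemb : MeasurableEmbedding fun u : G => ((u : Aˣ) : A) :=
    (hv.isClosedEmbedding (fun u v h => Subtype.ext (Units.ext h))).measurableEmbedding
  have hmc : Continuous fun h : G => h * ⟨expU Y, D.exp_mem_G hY⟩ := continuous_mul_const _
  have h1 : Measure.map (fun u : G => ((u : Aˣ) : A)) (Measure.map (fun h : G => h * ⟨expU Y, D.exp_mem_G hY⟩) ν) =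
      Measure.map (fun u : G => ((u : Aˣ) : A)) ν := by
    apply Measure.ext_of_charFunDual
    funext L
    have cF : Continuous fun v : A => Complex.exp ((L v : ℂ) * Complex.I) := by fun_prop
    rw [charFunDual_apply, charFunDual_apply, integral_map hv.measurable.aemeasurable cF.aestronglyMeasurable,
      integral_map hv.measurable.aemeasurable cF.aestronglyMeasurable]
    refine (integral_map hmc.measurable.aemeasurable (cF.comp hv).aestronglyMeasurable).trans ?_
    exact nu_exp μ D hp hU hY L
  have h2 := congrArg (Measure.comap (fun u : G => ((u : Aˣ) : A))) h1
  rwa [hemb.comap_map, hemb.comap_map] at h2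

theorem nu_inv (D : Dat G T g t k ip) (hp : PkOK t k pk) {d : ℕ} {e : Module.Basis (Fin d) ℝ t}
    {U : Set (Fin d → ℝ)} (hU : AlcOK pk e U) (v : G) :
    Measure.map (fun h : G => h * v) (nuM μ D pk e U) = nuM μ D pk e U := by
  set ν := nuM μ D pk e U with hν
  have hmm : ∀ v w : G, Measure.map (fun h : G => h * (v * w)) ν =
      Measure.map (fun h : G => h * w) (Measure.map (fun h : G => h * v) ν) := by
    intro v w
    rw [Measure.map_map (continuous_mul_const w).measurable (continuous_mul_const v).measurable]
    congr 1
    funext h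
    simp [mul_assoc]
  let K : Subgroup Aˣ :=
    { carrier := {u | ∃ hu : u ∈ G, Measure.map (fun h : G => h * ⟨u, hu⟩) ν = ν}
      mul_mem' := by
        rintro a b ⟨ha, ha'⟩ ⟨hb, hb'⟩
        refine ⟨G.mul_mem ha hb, ?_⟩
        have := hmm ⟨a, ha⟩ ⟨b, hb⟩
        rw [ha', hb'] at this
        exact this
      one_mem' := by
        refine ⟨G.one_mem, ?_⟩
        have : (fun h : G => h * ⟨1, G.one_mem⟩) = id := by
          funext h; exact mul_one h
        rw [this, Measure.map_id]
      inv_mem' := by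
        rintro a ⟨ha, ha'⟩
        refine ⟨G.inv_mem ha, ?_⟩
        have := hmm ⟨a, ha⟩ ⟨a⁻¹, G.inv_mem ha⟩
        rw [ha'] at this
        rw [← this]
        have : (fun h : G => h * (⟨a, ha⟩ * ⟨a⁻¹, G.inv_mem ha⟩)) = id := by
          funext h
          have : (⟨a, ha⟩ * ⟨a⁻¹, G.inv_mem ha⟩ : G) = 1 := Subtype.ext (mul_inv_cancel a)
          rw [this]; exact mul_one h
        rw [this, Measure.map_id] }
  obtain ⟨hu, h⟩ := gen G D.closedG D.conG g D.hg K
    (fun X hX => ⟨D.exp_mem_G hX, nu_inv_exp μ D hp hU hX⟩) v.2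
  exact h

theorem nu_eq (D : Dat G T g t k ip) (hp : PkOK t k pk) {d : ℕ} {e : Module.Basis (Fin d) ℝ t}
    {U : Set (Fin d → ℝ)} (hU : AlcOK pk e U) {f : G → ℂ} (hf : Continuous f) :
    ∫ h, f h ∂(nuM μ D pk e U) = (∫ _h, (1 : ℂ) ∂(nuM μ D pk e U)) * ∫ u, f u ∂μ := by
  haveI := nu_fin μ D hU
  haveI := secG G
  set ν := nuM μ D pk e U with hν
  have hc : Continuous fun p : G × G => f (p.2 * p.1) := hf.comp (continuous_snd.mul continuous_fst)
  calc ∫ h, f h ∂ν = ∫ _v : G, (∫ h, f h ∂ν) ∂μ := by simp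
    _ = ∫ v : G, (∫ h, f (h * v) ∂ν) ∂μ := by
        refine integral_congr_ae (Eventually.of_forall fun v => ?_)
        have hi := nu_inv μ D hp hU v
        rw [← hν] at hi
        change ∫ h, f h ∂ν = ∫ h, f (h * v) ∂ν
        conv_lhs => rw [← hi]
        rw [integral_map (continuous_mul_const v).measurable.aemeasurable hf.aestronglyMeasurable]
    _ = ∫ h : G, (∫ v, f (h * v) ∂μ) ∂ν := by
        refine integral_integral_swap (f := fun v h => f (h * v)) ?_
        exact cont_integrable _ hc
    _ = ∫ h : G, (∫ v, f v ∂μ) ∂ν := by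
        refine integral_congr_ae (Eventually.of_forall fun h => ?_)
        exact integral_mul_left_eq_self f h
    _ = _ := by
        rw [← integral_mul_const]; simp

/-- mass of an alcove -/
noncomputable def mass (pk : A →L[ℝ] k) {d : ℕ} (e : Module.Basis (Fin d) ℝ t) (U : Set (Fin d → ℝ)) : ℝ :=
  ∫ x in U, dlt pk (Jc e x)

theorem weyl_gen (D : Dat G T g t k ip) (hp : PkOK t k pk) {d : ℕ} {e : Module.Basis (Fin d) ℝ t}
    {U : Set (Fin d → ℝ)} (hU : AlcOK pk e U) {f : G → ℂ} (hf : Continuous f) :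
    ∫ x in U, (∫ u : G, f (u * expG D e x * u⁻¹) ∂μ) * (dlt pk (Jc e x) : ℂ) =
      (mass pk e U : ℂ) * ∫ u, f u ∂μ := by
  rw [← nu_int μ D hp hU hf, nu_eq μ D hp hU hf]
  congr 1
  rw [nu_int μ D hp hU continuous_const, mass, ← integral_complex_ofReal]
  simp

theorem weyl_class (D : Dat G T g t k ip) (hp : PkOK t k pk) {d : ℕ} {e : Module.Basis (Fin d) ℝ t}
    {U : Set (Fin d → ℝ)} (hU : AlcOK pk e U) {f : G → ℂ} (hf : Continuous f)
    (hcl : ∀ g h : G, f (h * g * h⁻¹) = f g) :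
    ∫ x in U, f (expG D e x) * (dlt pk (Jc e x) : ℂ) = (mass pk e U : ℂ) * ∫ u, f u ∂μ := by
  rw [← weyl_gen μ D hp hU hf]
  simp [hcl]

theorem mass_pos (D : Dat G T g t k ip) (hp : PkOK t k pk) {d : ℕ} {e : Module.Basis (Fin d) ℝ t}
    {U : Set (Fin d → ℝ)} (hU : AlcOK pk e U) (hne : U.Nonempty) : 0 < mass pk e U := by
  rw [mass, setIntegral_pos_iff_support_of_nonneg_ae]
  · have : (Function.support fun x => dlt pk (Jc e x)) ∩ U = U := by
      ext x; exact ⟨fun h => h.2, fun h => ⟨hU.ne x h, h⟩⟩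
    rw [this]
    exact hU.op.measure_pos _ hne
  · exact Eventually.of_forall fun x => D.dlt_nonneg hp (Jc_mem e x)
  · exact cont_intOn hU.bd (dltJ_cont pk e)

end
end WIF
end Part11

section Part12
open MeasureTheory Filter Topology
set_option linter.style.haveILetI false
set_option linter.unusedSectionVars false

namespace WIF

section
variable {A : Type*} [NormedRing A] [NormedAlgebra ℝ A] [CompleteSpace A] [FiniteDimensional ℝ A]
variable {G T : Subgroup Aˣ} {g t k : Submodule ℝ A} {ip : A → A → ℝ} {pk : A →L[ℝ] k}

/-- every element is conjugate into the closed alcove -/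
theorem conj_alc [CompactSpace G] [MeasurableSpace G] [BorelSpace G] (μ : Measure G) [μ.IsHaarMeasure]
    [IsProbabilityMeasure μ] (D : Dat G T g t k ip) (hp : PkOK t k pk) (hf : Faith t k) {P : Set t}
    (hP : IsAlc pk P) {d : ℕ} (e : Module.Basis (Fin d) ℝ t) (h : G) :
    ∃ u ∈ G, ∃ b ∈ closure P, (h : Aˣ) = u * expU (b : A) * u⁻¹ := by
  have hU := D.alcOK hp hf hP e
  have hne : (Ucoord e P).Nonempty := by
    obtain ⟨b, hb⟩ := hP.nonempty
    refine ⟨(Jt e).symm b, ?_⟩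
    rw [Ucoord_eq]; simpa using hb
  have hm := mass_pos D hp hU hne
  by_contra hcon
  let m : G × (Fin d → ℝ) → G := fun p => p.1 * expG D e p.2 * p.1⁻¹
  have hmc : Continuous m :=
    (continuous_fst.mul ((expG_cont D e).comp continuous_snd)).mul continuous_fst.inv
  have hK : IsCompact (m '' (Set.univ ×ˢ closure (Ucoord e P))) :=
    (isCompact_univ.prod hU.bd.isCompact_closure).image hmc
  have hh : h ∉ m '' (Set.univ ×ˢ closure (Ucoord e P)) := by
    rintro ⟨⟨u, x⟩, ⟨-, hx⟩, rfl⟩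
    apply hcon
    refine ⟨u, u.2, Jt e x, ?_, ?_⟩
    · simp only [Ucoord_eq] at hx
      exact (Jt e).continuous.closure_preimage_subset _ hx
    · simp [m, expG, Jc_Jt]
  obtain ⟨f, f0, f1, f01⟩ := exists_continuous_zero_one_of_isClosed hK.isClosed (isClosed_singleton (x := h))
    (Set.disjoint_singleton_right.2 hh)
  have hpos : 0 < ∫ u, f u ∂μ := by
    refine Continuous.integral_pos_of_hasCompactSupport_nonneg_nonzero f.continuous
      (HasCompactSupport.of_compactSpace _) (fun x => (f01 x).1) (x := h) ?_
    rw [f1 (Set.mem_singleton h)]; simp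
  have hc : Continuous fun u : G => ((f u : ℝ) : ℂ) := Complex.continuous_ofReal.comp f.continuous
  have key := weyl_gen μ D hp hU hc
  have hz : ∫ x in Ucoord e P, (∫ u : G, ((f (u * expG D e x * u⁻¹) : ℝ) : ℂ) ∂μ) * (dlt pk (Jc e x) : ℂ) = 0 := by
    rw [setIntegral_congr_fun (g := fun _ => (0 : ℂ)) hU.op.measurableSet]
    · simp
    · intro x hx
      have : ∀ u : G, f (u * expG D e x * u⁻¹) = 0 := fun u =>
        f0 ⟨(u, x), ⟨trivial, subset_closure hx⟩, rfl⟩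
      simp [this]
  rw [hz, integral_complex_ofReal] at key
  have : mass pk e (Ucoord e P) * ∫ u, f u ∂μ = 0 := by exact_mod_cast key.symm
  exact (mul_pos hm hpos).ne' this

theorem Dat.reg_conj (D : Dat G T g t k ip) {u h : Aˣ} (hu : u ∈ G)
    (hr : ∃! S : Subgroup Aˣ, IsMT G S ∧ u * h * u⁻¹ ∈ S) : ∃! S : Subgroup Aˣ, IsMT G S ∧ h ∈ S := by
  obtain ⟨S, ⟨hS, hm⟩, huq⟩ := hr
  refine ⟨cj u⁻¹ S, ⟨hS.cj (G.inv_mem hu), by rw [mem_cj]; simpa using hm⟩, ?_⟩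
  rintro S' ⟨hS', hm'⟩
  have := huq (cj u S') ⟨hS'.cj hu, by rw [mem_cj]; simpa [mul_assoc] using hm'⟩
  rw [← this, cj_cj, inv_mul_cancel, cj_one]

theorem Dat.Ad_t (D : Dat G T g t k ip) {u : Aˣ} (hc : cj u T = T) {X : A} (hX : X ∈ t) :
    (u : A) * X * ((u⁻¹ : Aˣ) : A) ∈ t := by
  rw [D.ht] at *
  intro s
  have : s • ((u : A) * X * ((u⁻¹ : Aˣ) : A)) = (u : A) * (s • X) * ((u⁻¹ : Aˣ) : A) := by simp
  rw [this, expU_conj, ← hc, mem_cj]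
  simpa [mul_assoc] using hX s

theorem cj_inv_eq {u : Aˣ} (hc : cj u T = T) : cj u⁻¹ T = T := by
  conv_lhs => rw [← hc]
  rw [cj_cj, inv_mul_cancel, cj_one]

theorem Dat.Ad_kn (D : Dat G T g t k ip) {u : Aˣ} (hu : u ∈ G) (hc : cj u T = T) {X : A} (hX : X ∈ k) :
    (u : A) * X * ((u⁻¹ : Aˣ) : A) ∈ k := by
  rw [D.hk] at *
  refine ⟨D.Ad_g hu hX.1, fun Y hY => ?_⟩
  have h1 := D.Ad_t (cj_inv_eq hc) hY
  have h2 := D.Ad u hu X hX.1 _ (D.t_le h1)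
  rw [hX.2 _ h1] at h2
  rw [← h2]
  congr 1
  simp [mul_assoc]

/-- `Ad u` on an invariant submodule -/
def AdE (u : Aˣ) (s : Submodule ℝ A) (h1 : ∀ X ∈ s, (u : A) * X * ((u⁻¹ : Aˣ) : A) ∈ s)
    (h2 : ∀ X ∈ s, ((u⁻¹ : Aˣ) : A) * X * (u : A) ∈ s) : s ≃ₗ[ℝ] s where
  toFun X := ⟨_, h1 X X.2⟩
  invFun X := ⟨_, h2 X X.2⟩
  map_add' X Y := by ext; simp [mul_add, add_mul]
  map_smul' c X := by ext; simp
  left_inv X := by ext; simp [mul_assoc]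
  right_inv X := by ext; simp [mul_assoc]

theorem AdE_coe (u : Aˣ) (s : Submodule ℝ A) (h1 : ∀ X ∈ s, (u : A) * X * ((u⁻¹ : Aˣ) : A) ∈ s)
    (h2 : ∀ X ∈ s, ((u⁻¹ : Aˣ) : A) * X * (u : A) ∈ s) (X : s) :
    (AdE u s h1 h2 X : A) = (u : A) * X * ((u⁻¹ : Aˣ) : A) := rfl

theorem Dat.dlt_conj (D : Dat G T g t k ip) (hp : PkOK t k pk) {u : Aˣ} (hu : u ∈ G) (hc : cj u T = T)
    {b c : A} (hb : b ∈ t) (hct : c ∈ t) (h : expU c = u * expU b * u⁻¹) : dlt pk c = dlt pk b := by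
  have h2 : ∀ X ∈ k, ((u⁻¹ : Aˣ) : A) * X * (u : A) ∈ k := fun X hX => by
    simpa using D.Ad_kn (G.inv_mem hu) (cj_inv_eq hc) hX
  let E := AdE u k (fun X hX => D.Ad_kn hu hc hX) h2
  have e1 : NormedSpace.exp c = (u : A) * NormedSpace.exp b * ((u⁻¹ : Aˣ) : A) := by
    have := congrArg Units.val h
    simpa using this
  have e2 : NormedSpace.exp (-c) = (u : A) * NormedSpace.exp (-b) * ((u⁻¹ : Aˣ) : A) := by
    have := congrArg (fun v : Aˣ => ((v⁻¹ : Aˣ) : A)) h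
    simpa [mul_assoc] using this
  have hR : ((1 - Rk pk c : k →L[ℝ] k) : k →ₗ[ℝ] k) =
      (E : k →ₗ[ℝ] k) ∘ₗ ((1 - Rk pk b : k →L[ℝ] k) : k →ₗ[ℝ] k) ∘ₗ (E.symm : k →ₗ[ℝ] k) := by
    ext X
    have hX : (E (E.symm X) : A) = X := by simp
    obtain ⟨Y, rfl⟩ := E.surjective X
    simp only [LinearMap.comp_apply, LinearEquiv.coe_coe, LinearEquiv.symm_apply_apply,
      ContinuousLinearMap.coe_coe, sub_apply, map_sub, one_apply_eq_self,
      Submodule.coe_sub]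
    congr 1
    rw [D.Rk_coe hp hct, AdE_coe, AdE_coe, D.Rk_coe hp hb, e1, e2]
    have : ((u⁻¹ : Aˣ) : A) * (u : A) = 1 := u.inv_mul
    calc _ = (u : A) * NormedSpace.exp b * (((u⁻¹ : Aˣ) : A) * (u : A)) * Y * (((u⁻¹ : Aˣ) : A) * (u : A)) *
          NormedSpace.exp (-b) * ((u⁻¹ : Aˣ) : A) := by noncomm_ring
      _ = _ := by rw [this]; noncomm_ring
  rw [dlt, hR, LinearMap.det_conj]
  rfl

theorem Dat.ipJ (D : Dat G T g t k ip) {d : ℕ} {e : Module.Basis (Fin d) ℝ t}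
    (ho : ∀ i j, ip (e i : A) (e j : A) = if i = j then 1 else 0) (x y : Fin d → ℝ) :
    ip (Jt e x : A) (Jt e y : A) = ∑ i, x i * y i := by
  have addr : ∀ X ∈ g, ∀ Y ∈ g, ∀ Z ∈ g, ip X (Y + Z) = ip X Y + ip X Z := by
    intro X hX Y hY Z hZ
    rw [D.sym X hX _ (g.add_mem hY hZ), D.add Y hY Z hZ X hX, D.sym Y hY X hX, D.sym Z hZ X hX]
  have smulr : ∀ c : ℝ, ∀ X ∈ g, ∀ Y ∈ g, ip X (c • Y) = c * ip X Y := by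
    intro c X hX Y hY
    rw [D.sym X hX _ (g.smul_mem c hY), D.smul c Y hY X hX, D.sym Y hY X hX]
  let Bf : t →ₗ[ℝ] (t →ₗ[ℝ] ℝ) := LinearMap.mk₂ ℝ (fun X Z => ip (X : A) (Z : A))
    (fun X Y Z => D.add X (D.t_le X.2) Y (D.t_le Y.2) Z (D.t_le Z.2))
    (fun c X Z => D.smul c X (D.t_le X.2) Z (D.t_le Z.2))
    (fun X Y Z => addr X (D.t_le X.2) Y (D.t_le Y.2) Z (D.t_le Z.2))
    (fun c X Z => smulr c X (D.t_le X.2) Z (D.t_le Z.2))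
  have hB : ∀ X Z : t, ip (X : A) (Z : A) = Bf X Z := fun _ _ => rfl
  simp only [hB] at ho
  rw [hB, Jt_apply, Jt_apply]
  simp [LinearMap.sum_apply, ho, mul_comm]

theorem Dat.mass_eq (D : Dat G T g t k ip) (hp : PkOK t k pk) {d d' : ℕ} {e : Module.Basis (Fin d) ℝ t}
    {e' : Module.Basis (Fin d') ℝ t}
    (ho : ∀ i j, ip (e i : A) (e j : A) = if i = j then 1 else 0)
    (ho' : ∀ i j, ip (e' i : A) (e' j : A) = if i = j then 1 else 0)
    {P P' : Set t} (hP : IsAlc pk P) (hP' : IsAlc pk P')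
    {u : Aˣ} (hu : u ∈ G) (hc : cj u T = T) {b b' : t} (hb : b ∈ P) (hb' : b' ∈ P')
    (h : expU (b' : A) = u * expU (b : A) * u⁻¹) :
    mass pk e' (Ucoord e' P') = mass pk e (Ucoord e P) := by
  obtain rfl : d = d' := by
    have h1 := Module.finrank_eq_card_basis e
    have h2 := Module.finrank_eq_card_basis e'
    simp at h1 h2; omega
  have h1 : ∀ X ∈ t, (u : A) * X * ((u⁻¹ : Aˣ) : A) ∈ t := fun X hX => D.Ad_t hc hX
  have h2 : ∀ X ∈ t, ((u⁻¹ : Aˣ) : A) * X * (u : A) ∈ t := fun X hX => by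
    simpa using D.Ad_t (cj_inv_eq hc) hX
  let E := AdE u t h1 h2
  have hE : ∀ X : t, expU (E X : A) = u * expU (X : A) * u⁻¹ := fun X => by
    rw [AdE_coe, expU_conj]
  let θ : t ≃ₜ t := E.toContinuousLinearEquiv.toHomeomorph.trans (Homeomorph.addRight (b' - E b))
  have hθ : ∀ x, θ x = E x + (b' - E b) := fun x => rfl
  have hexpadd : ∀ X Y : t, expU ((X : A) + (Y : A)) = expU (X : A) * expU (Y : A) := by
    intro X Y
    ext
    simp only [Units.val_mul]
    exact exp_addc (D.tt_comm X.2 Y.2)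
  have hτ : expU ((b' - E b : t) : A) = 1 := by
    have h3 := hexpadd (b' - E b) (E b)
    rw [← Submodule.coe_add, sub_add_cancel, hE, h] at h3
    exact (mul_eq_right.1 h3.symm)
  have hdθ : ∀ x : t, dlt pk (θ x : A) = dlt pk (x : A) := by
    intro x
    apply D.dlt_conj hp hu hc x.2 (θ x).2
    rw [hθ, Submodule.coe_add, hexpadd, hτ, mul_one, hE]
  set S := {b : t | dlt pk (b : A) ≠ 0} with hS
  have hθS : θ '' S = S := by
    ext y
    constructor
    · rintro ⟨x, hx, rfl⟩
      change dlt pk (θ x : A) ≠ 0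
      rw [hdθ]; exact hx
    · intro hy
      refine ⟨θ.symm y, ?_, by simp⟩
      change dlt pk (θ.symm y : A) ≠ 0
      rw [← hdθ, θ.apply_symm_apply]; exact hy
  have hθP : θ '' P = P' := by
    obtain ⟨b0, h0, rfl⟩ := hP
    obtain ⟨b0', h0', rfl⟩ := hP'
    have hbS : b ∈ S := connectedComponentIn_subset _ _ hb
    rw [connectedComponentIn_eq hb, connectedComponentIn_eq hb', θ.image_connectedComponentIn hbS, hθS]
    congr 1
    rw [hθ]; abel
  let M : (Fin d → ℝ) →L[ℝ] (Fin d → ℝ) :=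
    ((Jt e').symm : t →L[ℝ] (Fin d → ℝ)) ∘L (E.toContinuousLinearEquiv : t →L[ℝ] t) ∘L (Jt e : (Fin d → ℝ) →L[ℝ] t)
  have hM : ∀ x, M x = (Jt e').symm (E (Jt e x)) := fun x => rfl
  have hMdet : |M.det| = 1 := by
    have hdot : ∀ x y, ∑ i, M x i * M y i = ∑ i, x i * y i := by
      intro x y
      rw [← D.ipJ ho' (M x) (M y), ← D.ipJ ho x y, hM, hM]
      simp only [ContinuousLinearEquiv.apply_symm_apply]
      exact D.Ad u hu _ (D.t_le (Jt e x).2) _ (D.t_le (Jt e y).2)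
    let m := LinearMap.toMatrix' (M : (Fin d → ℝ) →ₗ[ℝ] (Fin d → ℝ))
    have hm : m.transpose * m = 1 := by
      ext i j
      rw [Matrix.mul_apply]
      have := hdot (Pi.single i 1) (Pi.single j 1)
      simp only [m, Matrix.transpose_apply, LinearMap.toMatrix'_apply, ContinuousLinearMap.coe_coe]
      rw [Matrix.one_apply]
      convert this using 1
      simp [Pi.single_apply, eq_comm]
    have h3 : m.det * m.det = 1 := by
      have := congrArg Matrix.det hm
      simpa using this
    have h4 : M.det = m.det := by
      simp [m, ContinuousLinearMap.det]
    rw [h4]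
    have : |m.det| * |m.det| = 1 := by rw [← abs_mul, h3, abs_one]
    nlinarith [abs_nonneg m.det]
  let c0 : Fin d → ℝ := (Jt e').symm (b' - E b)
  have hφ : ∀ x, Jt e' (M x + c0) = θ (Jt e x) := by
    intro x
    rw [map_add, hM, hθ]; simp [c0]
  have himg : (fun x => M x + c0) '' (Ucoord e P) = Ucoord e' P' := by
    rw [Ucoord_eq, Ucoord_eq, ← hθP]
    ext y
    constructor
    · rintro ⟨x, hx, rfl⟩
      rw [Set.mem_preimage, hφ]; exact ⟨_, hx, rfl⟩
    · rintro ⟨z, hz, hzy⟩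
      refine ⟨(Jt e).symm z, by simpa using hz, ?_⟩
      apply (Jt e').injective
      simp only [hφ]
      simpa using hzy
  have hinj : Function.Injective (fun x => M x + c0) := by
    intro x y hxy
    have := congrArg (Jt e') hxy
    simp only [hφ] at this
    exact (Jt e).injective (θ.injective this)
  have hUm : MeasurableSet (Ucoord e P) := by
    rw [Ucoord_eq]; exact (hP.isOpen.preimage (Jt e).continuous).measurableSet
  rw [mass, mass, ← himg, integral_image_eq_integral_abs_det_fderiv_smul volume hUm (f' := fun _ => M)
    (fun x _ => (M.hasFDerivAt.add_const c0).hasFDerivWithinAt) hinj.injOn]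
  refine setIntegral_congr_fun hUm fun x _ => ?_
  simp only [hMdet, one_smul]
  rw [Jc_Jt, Jc_Jt, hφ, hdθ]

theorem mass_const [CompactSpace G] [MeasurableSpace G] [BorelSpace G] (μ : Measure G) [μ.IsHaarMeasure]
    [IsProbabilityMeasure μ] (D : Dat G T g t k ip) (hp : PkOK t k pk) (hf : Faith t k)
    {d d' : ℕ} {e : Module.Basis (Fin d) ℝ t} {e' : Module.Basis (Fin d') ℝ t}
    (ho : ∀ i j, ip (e i : A) (e j : A) = if i = j then 1 else 0)
    (ho' : ∀ i j, ip (e' i : A) (e' j : A) = if i = j then 1 else 0)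
    {P P' : Set t} (hP : IsAlc pk P) (hP' : IsAlc pk P') :
    mass pk e' (Ucoord e' P') = mass pk e (Ucoord e P) := by
  obtain ⟨b', hb'⟩ := hP'.nonempty
  obtain ⟨u, hu, b, hb, h⟩ := conj_alc μ D hp hf hP e ⟨expU (b' : A), D.exp_mem_G (D.t_le b'.2)⟩
  have hr' := (D.reg_iff b'.2).2 ((D.dlt_ne_iff hp b'.2).1 (hP'.ne b' hb'))
  change expU (b' : A) = _ at h
  have hcj : cj u T = T := by
    obtain ⟨S, -, hq⟩ := hr'
    rw [hq T ⟨D.hT, D.exp_mem_T b'.2⟩]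
    rw [← hq T ⟨D.hT, D.exp_mem_T b'.2⟩]
    rw [hq (cj u T) ⟨D.hT.cj hu, by rw [h, mem_cj]; simpa [mul_assoc] using D.exp_mem_T b.2⟩]
    rw [← hq T ⟨D.hT, D.exp_mem_T b'.2⟩]
  rw [h] at hr'
  have hr := D.reg_conj hu hr'
  have hbn := (D.dlt_ne_iff hp b.2).2 ((D.reg_iff b.2).1 hr)
  exact D.mass_eq hp ho ho' hP hP' hu hcj (hP.mem_of_closure hb hbn) hb' h

theorem final [CompactSpace G] [MeasurableSpace G] [BorelSpace G] (μ : Measure G) [μ.IsHaarMeasure]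
    [IsProbabilityMeasure μ] (D : Dat G T g t k ip) (hp : PkOK t k pk) (hf : Faith t k) :
    ∃ c : ℝ, 0 < c ∧ ∀ P : Set t, IsAlc pk P → ∀ f : G → ℂ, Continuous f →
      (∀ g h : G, f (h * g * h⁻¹) = f g) → ∀ (d : ℕ) (e : Module.Basis (Fin d) ℝ t),
      (∀ i j, ip (e i : A) (e j : A) = if i = j then 1 else 0) →
      ∫ g, f g ∂μ = (c : ℂ) * ∫ x in Ucoord e P, f (expG D e x) * (dlt pk (Jc e x) : ℂ) := by
  by_cases hex : ∃ (P : Set t) (d : ℕ) (e : Module.Basis (Fin d) ℝ t), IsAlc pk P ∧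
      (∀ i j, ip (e i : A) (e j : A) = if i = j then 1 else 0)
  · obtain ⟨P0, d0, e0, hP0, ho0⟩ := hex
    have hpos : 0 < mass pk e0 (Ucoord e0 P0) := by
      refine mass_pos D hp (D.alcOK hp hf hP0 e0) ?_
      obtain ⟨b, hb⟩ := hP0.nonempty
      refine ⟨(Jt e0).symm b, ?_⟩
      rw [Ucoord_eq]; simpa using hb
    refine ⟨(mass pk e0 (Ucoord e0 P0))⁻¹, inv_pos.2 hpos, ?_⟩
    intro P hP f hfc hcl d e ho
    rw [weyl_class μ D hp (D.alcOK hp hf hP e) hfc hcl, mass_const μ D hp hf ho0 ho hP0 hP, ← mul_assoc]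
    have : (mass pk e0 (Ucoord e0 P0) : ℂ) ≠ 0 := by exact_mod_cast hpos.ne'
    rw [Complex.ofReal_inv, inv_mul_cancel₀ this, one_mul]
  · refine ⟨1, one_pos, ?_⟩
    intro P hP f _ _ d e ho
    exact absurd ⟨P, d, e, hP, ho⟩ hex

end
end WIF
end Part12

section Part13
open MeasureTheory Filter Topology
set_option linter.style.haveILetI false
set_option linter.unusedSectionVars false

namespace WIF

section
variable {A : Type*} [NormedRing A] [NormedAlgebra ℝ A] [CompleteSpace A] [FiniteDimensional ℝ A]
variable {G T : Subgroup Aˣ} {g t k : Submodule ℝ A} {ip : A → A → ℝ} {pk : A →L[ℝ] k}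

theorem exp_hs {B : Type*} [NormedRing B] [NormedAlgebra ℝ B] [CompleteSpace B] (x : B) :
    HasSum (fun n : ℕ => ((n.factorial : ℝ)⁻¹) • x ^ n) (NormedSpace.exp x) := by
  letI := NormedAlgebra.restrictScalars ℚ ℝ B
  exact NormedSpace.exp_series_hasSum_exp' (𝕂 := ℝ) x

theorem exp_E (E : A →L[ℝ] (A →L[ℝ] A)) (b : A) (h : ∀ n : ℕ, (E b) ^ n = E (b ^ n)) :
    NormedSpace.exp (E b) = E (NormedSpace.exp b) := by
  have h1 := exp_hs (E b)
  have h2 := E.hasSum (exp_hs b)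
  have h3 : (fun n : ℕ => ((n.factorial : ℝ)⁻¹) • (E b) ^ n) =
      fun n : ℕ => E (((n.factorial : ℝ)⁻¹) • b ^ n) := by
    funext n
    rw [map_smul, h]
  rw [h3] at h1
  exact h1.unique h2

theorem exp_ad (b X : A) :
    NormedSpace.exp (ContinuousLinearMap.mul ℝ A b - (ContinuousLinearMap.mul ℝ A).flip b) X =
      NormedSpace.exp b * X * NormedSpace.exp (-b) := by
  have hl : ∀ n : ℕ, (ContinuousLinearMap.mul ℝ A b) ^ n = ContinuousLinearMap.mul ℝ A (b ^ n) := by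
    intro n
    induction n with
    | zero => ext x; simp
    | succ n ih => ext x; rw [pow_succ, ih]; simp [pow_succ, mul_assoc]
  have hr : ∀ n : ℕ, ((ContinuousLinearMap.mul ℝ A).flip (-b)) ^ n = (ContinuousLinearMap.mul ℝ A).flip ((-b) ^ n) := by
    intro n
    induction n with
    | zero => ext x; simp
    | succ n ih => ext x; rw [pow_succ, ih]; simp [pow_succ', mul_assoc]
  have hc : Commute (ContinuousLinearMap.mul ℝ A b) ((ContinuousLinearMap.mul ℝ A).flip (-b)) := by
    ext x
    simp [mul_assoc]
  have he : ContinuousLinearMap.mul ℝ A b - (ContinuousLinearMap.mul ℝ A).flip b =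
      ContinuousLinearMap.mul ℝ A b + (ContinuousLinearMap.mul ℝ A).flip (-b) := by
    rw [map_neg, sub_eq_add_neg]
  rw [he, exp_addc hc, exp_E _ _ hl, exp_E _ _ hr]
  simp [mul_assoc]

theorem expk_eq {k : Submodule ℝ A} {b : A} {ad : Module.End ℝ k}
    (hd : ∀ X : k, (ad X : A) = b * (X : A) - (X : A) * b) (X : k) {Y : A}
    (hs : HasSum (fun n : ℕ => (n.factorial : ℝ)⁻¹ • (((ad ^ n) X : k) : A)) Y) :
    Y = NormedSpace.exp b * X * NormedSpace.exp (-b) := by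
  rw [← exp_ad]
  have h1 := exp_hs (ContinuousLinearMap.mul ℝ A b - (ContinuousLinearMap.mul ℝ A).flip b)
  have h2 := (ContinuousLinearMap.apply ℝ A (X : A)).hasSum h1
  refine hs.unique ?_
  have h3 : ∀ n : ℕ, (((ad ^ n) X : k) : A) =
      ((ContinuousLinearMap.mul ℝ A b - (ContinuousLinearMap.mul ℝ A).flip b) ^ n) (X : A) := by
    intro n
    induction n with
    | zero => simp
    | succ n ih =>
      rw [pow_succ', pow_succ', Module.End.mul_apply, hd, ih]
      simp
  simp only [h3]
  exact h2

theorem assembled {N : ℕ} (c : A →ₐ[ℝ] Matrix (Fin N) (Fin N) ℝ) (hci : Function.Injective c)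
    (G : Subgroup Aˣ)
    [CompactSpace G] [ConnectedSpace G] [SimplyConnectedSpace G]
    [MeasurableSpace G] [BorelSpace G]
    (μ : Measure G) [μ.IsHaarMeasure] [IsProbabilityMeasure μ]
    (IsMaxTorus : Subgroup Aˣ → Prop)
    (hIsMaxTorus : ∀ S : Subgroup Aˣ, IsMaxTorus S ↔ IsMT G S)
    (T : Subgroup Aˣ) (hT : IsMaxTorus T)
    (g' t' k' : Submodule ℝ A)
    (hg' : (g' : Set A) = {X | ∀ s : ℝ, ∃ u ∈ G, (u : A) = NormedSpace.exp (s • X)})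
    (ht' : (t' : Set A) = {X | X ∈ g' ∧ ∀ s : ℝ, ∃ u ∈ T, (u : A) = NormedSpace.exp (s • X)})
    (ip : A → A → ℝ)
    (hsym : ∀ X ∈ g', ∀ Y ∈ g', ip X Y = ip Y X)
    (hadd : ∀ X ∈ g', ∀ Y ∈ g', ∀ Z ∈ g', ip (X + Y) Z = ip X Z + ip Y Z)
    (hsmul : ∀ c : ℝ, ∀ X ∈ g', ∀ Y ∈ g', ip (c • X) Y = c * ip X Y)
    (hpos : ∀ X ∈ g', X ≠ 0 → 0 < ip X X)
    (hAd : ∀ u ∈ G, ∀ X ∈ g', ∀ Y ∈ g',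
      ip ((u : A) * X * ((u⁻¹ : Aˣ) : A)) ((u : A) * Y * ((u⁻¹ : Aˣ) : A)) = ip X Y)
    (hk' : (k' : Set A) = {X | X ∈ g' ∧ ∀ Y ∈ t', ip X Y = 0})
    (adk expk : A → Module.End ℝ k')
    (hadk : ∀ b ∈ t', ∀ X : k', (adk b X : A) = b * (X : A) - (X : A) * b)
    (hexpk : ∀ b ∈ t', ∀ X : k',
      HasSum (fun n : ℕ => (n.factorial : ℝ)⁻¹ • ((((adk b) ^ n) X : k') : A)) (expk b X : A))
    (treg : Set t')
    (htreg : treg = {b : t' | ∃ u : Aˣ, u ∈ G ∧ (u : A) = NormedSpace.exp (b : A) ∧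
      ∃! S : Subgroup Aˣ, IsMaxTorus S ∧ u ∈ S}) :
    ∃ c : ℝ, 0 < c ∧
      ∀ P : Set t', (∃ b₀ ∈ treg, P = connectedComponentIn treg b₀) →
      ∀ f : G → ℂ, Continuous f → (∀ g h : G, f (h * g * h⁻¹) = f g) →
      ∀ fm : A → ℂ, (∀ (u : Aˣ) (hu : u ∈ G), fm (u : A) = f ⟨u, hu⟩) →
      ∀ (d : ℕ) (e : Module.Basis (Fin d) ℝ t'),
        (∀ i j, ip (e i : A) (e j : A) = if i = j then 1 else 0) →
        ∫ g, f g ∂μ =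
          (c : ℂ) * ∫ x in {x : Fin d → ℝ | (∑ i, x i • e i) ∈ P},
            fm (NormedSpace.exp ((∑ i, x i • e i : t') : A)) *
              ((LinearMap.det ((1 : Module.End ℝ k') - expk ((∑ i, x i • e i : t') : A)) : ℝ) : ℂ) := by
  have hex : ∀ (H : Subgroup Aˣ) (X : A), (∃ u ∈ H, (u : A) = NormedSpace.exp X) ↔ expU X ∈ H := by
    intro H X
    constructor
    · rintro ⟨u, hu, h⟩
      have : u = expU X := Units.ext h
      rwa [← this]
    · intro h; exact ⟨_, h, rfl⟩
  have hTm := (hIsMaxTorus T).1 hT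
  have hg2 : ∀ X, X ∈ g' ↔ ∀ s : ℝ, expU (s • X) ∈ G := by
    intro X
    rw [← SetLike.mem_coe, hg']
    simp only [Set.mem_ofPred_eq, hex]
  have D : Dat G T g' t' k' ip :=
    { cG := isCompact_iff_compactSpace.2 inferInstance
      conG := isConnected_iff_connectedSpace.2 inferInstance
      hT := hTm
      hg := hg2
      ht := by
        intro X
        rw [← SetLike.mem_coe, ht']
        simp only [Set.mem_ofPred_eq, hex, hg2]
        exact ⟨fun h => h.2, fun h => ⟨fun s => hTm.1 (h s), h⟩⟩
      sym := hsym
      add := hadd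
      smul := hsmul
      pos := hpos
      Ad := hAd
      hk := by
        intro X
        rw [← SetLike.mem_coe, hk']
        rfl }
  obtain ⟨pk, p1, p2⟩ := D.exists_pk
  have hp : PkOK t' k' pk := ⟨p1, p2⟩
  have hf : Faith t' k' := D.faith c hci
  have htr : treg = {b : t' | dlt pk (b : A) ≠ 0} := by
    rw [htreg]
    ext b
    simp only [Set.mem_ofPred_eq]
    rw [D.dlt_ne_iff hp b.2, ← D.reg_iff b.2]
    simp only [hIsMaxTorus]
    constructor
    · rintro ⟨u, hu, he, h⟩
      have : u = expU (b : A) := Units.ext he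
      rwa [← this]
    · intro h
      exact ⟨expU (b : A), D.exp_mem_G (D.t_le b.2), rfl, h⟩
  obtain ⟨c0, hc0, hmain⟩ := final μ D hp hf
  refine ⟨c0, hc0, ?_⟩
  rintro P ⟨b0, hb0, hPb⟩ f hfc hcl fm hfm d e ho
  have hP : IsAlc pk P := by
    rw [htr] at hb0 hPb
    exact ⟨b0, hb0, hPb⟩
  rw [hmain P hP f hfc hcl d e ho]
  congr 1
  refine integral_congr_ae (Eventually.of_forall fun x => ?_)
  have hdet : ∀ b ∈ t', LinearMap.det ((1 : Module.End ℝ k') - expk b) = dlt pk b := by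
    intro b hb
    have : (1 : Module.End ℝ k') - expk b = ((1 - Rk pk b : k' →L[ℝ] k') : k' →ₗ[ℝ] k') := by
      ext X
      have h1 := expk_eq (hadk b hb) X (hexpk b hb X)
      have h2 := D.Rk_coe hp hb X
      simp [h1, h2]
    rw [this]; rfl
  simp only
  rw [hdet _ (Subtype.property _), ← Jc_apply]
  congr 1
  exact (hfm (expU (Jc e x)) (D.exp_mem_G (D.t_le (Jc_mem e x)))).symm

end
end WIF
end Part13


open MeasureTheory

/-- The Weyl integration formula on a Weyl alcove, for a compact,
connected, simply connected subgroup `G` of `GL(N,ℝ)`: there is a constant `c > 0`,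
independent of the Weyl alcove `P` and of the function `f`, such that for every Weyl
alcove `P` (connected component of `𝔱_reg`) and every continuous conjugation-invariant
`f : G → ℂ` one has `∫_G f dμ_G = c·∫_P f(exp b)·det(1_𝔨 − exp(ad b)|_𝔨) db`, where the
integral over `P` is computed in the orthonormal coordinates on `𝔱` determined by the
fixed `Ad`-invariant inner product `ip` on the Lie algebra `𝔤`. -/
theorem stmt_0
    (N : ℕ) (hN : 0 < N)
    (G : Subgroup (Matrix (Fin N) (Fin N) ℝ)ˣ)
    [CompactSpace G] [ConnectedSpace G] [SimplyConnectedSpace G]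
    [MeasurableSpace G] [BorelSpace G]
    (μ : Measure G) [μ.IsHaarMeasure] [IsProbabilityMeasure μ]
    -- `IsMaxTorus S`: `S` is a maximal torus of `G`, i.e. a compact, connected, abelian
    -- subgroup of `G`, maximal with respect to inclusion among such subgroups.
    (IsMaxTorus : Subgroup (Matrix (Fin N) (Fin N) ℝ)ˣ → Prop)
    (hIsMaxTorus : ∀ S : Subgroup (Matrix (Fin N) (Fin N) ℝ)ˣ,
      IsMaxTorus S ↔
        S ≤ G ∧ IsCompact (S : Set (Matrix (Fin N) (Fin N) ℝ)ˣ) ∧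
          IsConnected (S : Set (Matrix (Fin N) (Fin N) ℝ)ˣ) ∧
          (∀ x ∈ S, ∀ y ∈ S, x * y = y * x) ∧
          ∀ S' : Subgroup (Matrix (Fin N) (Fin N) ℝ)ˣ,
            S' ≤ G → IsCompact (S' : Set (Matrix (Fin N) (Fin N) ℝ)ˣ) →
            IsConnected (S' : Set (Matrix (Fin N) (Fin N) ℝ)ˣ) →
            (∀ x ∈ S', ∀ y ∈ S', x * y = y * x) → S ≤ S' → S = S')
    (T : Subgroup (Matrix (Fin N) (Fin N) ℝ)ˣ) (hT : IsMaxTorus T)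
    -- the Lie algebras `𝔤` of `G` and `𝔱` of `T`, and the orthogonal complement `𝔨`
    -- of `𝔱` in `𝔤`
    (g' t' k' : Submodule ℝ (Matrix (Fin N) (Fin N) ℝ))
    (hg' : (g' : Set (Matrix (Fin N) (Fin N) ℝ)) =
      {X | ∀ s : ℝ, ∃ u ∈ G, (u : Matrix (Fin N) (Fin N) ℝ) = NormedSpace.exp (s • X)})
    (ht' : (t' : Set (Matrix (Fin N) (Fin N) ℝ)) =
      {X | X ∈ g' ∧ ∀ s : ℝ, ∃ u ∈ T, (u : Matrix (Fin N) (Fin N) ℝ) = NormedSpace.exp (s • X)})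
    -- an `Ad`-invariant inner product on `𝔤`
    (ip : Matrix (Fin N) (Fin N) ℝ → Matrix (Fin N) (Fin N) ℝ → ℝ)
    (hsym : ∀ X ∈ g', ∀ Y ∈ g', ip X Y = ip Y X)
    (hadd : ∀ X ∈ g', ∀ Y ∈ g', ∀ Z ∈ g', ip (X + Y) Z = ip X Z + ip Y Z)
    (hsmul : ∀ c : ℝ, ∀ X ∈ g', ∀ Y ∈ g', ip (c • X) Y = c * ip X Y)
    (hpos : ∀ X ∈ g', X ≠ 0 → 0 < ip X X)
    (hAd : ∀ u ∈ G, ∀ X ∈ g', ∀ Y ∈ g',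
      ip ((u : Matrix (Fin N) (Fin N) ℝ) * X * ((u⁻¹ : (Matrix (Fin N) (Fin N) ℝ)ˣ) : Matrix (Fin N) (Fin N) ℝ))
        ((u : Matrix (Fin N) (Fin N) ℝ) * Y * ((u⁻¹ : (Matrix (Fin N) (Fin N) ℝ)ˣ) : Matrix (Fin N) (Fin N) ℝ))
        = ip X Y)
    (hk' : (k' : Set (Matrix (Fin N) (Fin N) ℝ)) = {X | X ∈ g' ∧ ∀ Y ∈ t', ip X Y = 0})
    -- for `b ∈ 𝔱`, `adk b` is the restriction of `ad(b) = [b,·]` to `𝔨`, and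
    -- `expk b` is the exponential `exp(ad(b)|_𝔨)` of this restriction
    (adk expk : Matrix (Fin N) (Fin N) ℝ → Module.End ℝ k')
    (hadk : ∀ b ∈ t', ∀ X : k', (adk b X : Matrix (Fin N) (Fin N) ℝ) =
      b * (X : Matrix (Fin N) (Fin N) ℝ) - (X : Matrix (Fin N) (Fin N) ℝ) * b)
    (hexpk : ∀ b ∈ t', ∀ X : k', ∀ i j : Fin N,
      HasSum
        (fun n : ℕ => (((n.factorial : ℝ)⁻¹ •
          ((((adk b) ^ n) X : Matrix (Fin N) (Fin N) ℝ))) : Matrix (Fin N) (Fin N) ℝ) i j)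
        ((expk b X : Matrix (Fin N) (Fin N) ℝ) i j))
    -- `𝔱_reg = {b ∈ 𝔱 : exp b ∈ G_reg}`, where `G_reg` is the set of regular elements
    -- of `G`, i.e. of those elements contained in exactly one maximal torus of `G`
    (treg : Set t')
    (htreg : treg = {b : t' | ∃ u : (Matrix (Fin N) (Fin N) ℝ)ˣ, u ∈ G ∧
      (u : Matrix (Fin N) (Fin N) ℝ) = NormedSpace.exp (b : Matrix (Fin N) (Fin N) ℝ) ∧
      ∃! S : Subgroup (Matrix (Fin N) (Fin N) ℝ)ˣ, IsMaxTorus S ∧ u ∈ S}) :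
    ∃ c : ℝ, 0 < c ∧
      -- for every Weyl alcove `P`, i.e. every connected component of `𝔱_reg`, ...
      ∀ P : Set t', (∃ b₀ ∈ treg, P = connectedComponentIn treg b₀) →
      -- ... and every continuous conjugation-invariant function `f : G → ℂ`
      -- (transported to the matrix level as `fm`) ...
      ∀ f : G → ℂ, Continuous f → (∀ g h : G, f (h * g * h⁻¹) = f g) →
      ∀ fm : Matrix (Fin N) (Fin N) ℝ → ℂ,
        (∀ (u : (Matrix (Fin N) (Fin N) ℝ)ˣ) (hu : u ∈ G),
          fm (u : Matrix (Fin N) (Fin N) ℝ) = f ⟨u, hu⟩) →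
      -- ... in any `ip`-orthonormal coordinates on `𝔱` ...
      ∀ (d : ℕ) (e : Module.Basis (Fin d) ℝ t'),
        (∀ i j, ip (e i : Matrix (Fin N) (Fin N) ℝ) (e j : Matrix (Fin N) (Fin N) ℝ) =
          if i = j then 1 else 0) →
        -- ... one has `∫_G f dμ_G = c ∫_P f(exp b) det(1_𝔨 − exp(ad b)|_𝔨) db`
        ∫ g, f g ∂μ =
          (c : ℂ) * ∫ x in {x : Fin d → ℝ | (∑ i, x i • e i) ∈ P},
            fm (NormedSpace.exp ((∑ i, x i • e i : t') : Matrix (Fin N) (Fin N) ℝ)) *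
              ((LinearMap.det ((1 : Module.End ℝ k') -
                expk ((∑ i, x i • e i : t') : Matrix (Fin N) (Fin N) ℝ)) : ℝ) : ℂ) := by
  have i1 : CompactSpace G := inferInstance
  have i2 : ConnectedSpace G := inferInstance
  have i3 : SimplyConnectedSpace G := inferInstance
  have i4 : BorelSpace G := inferInstance
  have i5 : μ.IsHaarMeasure := inferInstance
  have i6 : IsProbabilityMeasure μ := inferInstance
  have hs : ∀ b ∈ t', ∀ X : k',
      HasSum (fun n : ℕ => (n.factorial : ℝ)⁻¹ • ((((adk b) ^ n) X : k') : Matrix (Fin N) (Fin N) ℝ))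
        (expk b X : Matrix (Fin N) (Fin N) ℝ) :=
    fun b hb X => Pi.hasSum.2 fun i => Pi.hasSum.2 fun j => hexpk b hb X i j
  have hc0 : CompleteSpace (Matrix (Fin N) (Fin N) ℝ) := inferInstance
  have hc : @CompleteSpace (Matrix (Fin N) (Fin N) ℝ) Matrix.linftyOpNormedRing.toUniformSpace := hc0
  exact @WIF.assembled (Matrix (Fin N) (Fin N) ℝ) Matrix.linftyOpNormedRing Matrix.linftyOpNormedAlgebra
    hc inferInstance N (AlgHom.id ℝ (Matrix (Fin N) (Fin N) ℝ)) Function.injective_id G i1 i2 i3 _ i4 μ i5 i6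
    IsMaxTorus hIsMaxTorus T hT g' t' k'
    hg' ht' ip hsym hadd hsmul hpos hAd hk' adk expk hadk hs treg htreg
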